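/- arXiv:math/0505058 — 6 statements merged into one kernel-verified Lean document; each statement's English description precedes it below -/
import Mathlib

section
/- For every positive integer r and every complex number x that is not a positive integer, ∑_{k₁ > k₂ > ⋯ > k_r > 0} (1/k₁) · ∏_{j=1}^r 1/(k_j − x) = ∑_{n=1}^∞ 1/(n^r (n − x)), where the left-hand sum ranges over all strictly decreasing r-tuples of positive integers. -/
open scoped BigOperators

namespace Aux4
open Filter Topology

/-- The set of strictly decreasing tuples of positive integers. -/
abbrev S (r : ℕ) := {f : Fin r → ℕ // (∀ i, 0 < f i) ∧ StrictAnti f}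

/-- Shifted factorial `(1-x)_n`. -/
noncomputable def P (x : ℂ) (n : ℕ) : ℂ := ∏ i ∈ Finset.range n, ((i : ℂ) + 1 - x)

/-- Connector. -/
noncomputable def D (x : ℂ) (n k : ℕ) : ℂ := P x k / P x (n + 1 + k)

lemma P_succ (x : ℂ) (n : ℕ) : P x (n + 1) = P x n * ((n : ℂ) + 1 - x) := by
  simp [P, Finset.prod_range_succ]

lemma fac_ne {x : ℂ} (hx : ∀ k : ℕ, x ≠ k + 1) (k : ℕ) : (k : ℂ) + 1 - x ≠ 0 :=
  sub_ne_zero.mpr (hx k).symm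

lemma P_ne {x : ℂ} (hx : ∀ k : ℕ, x ≠ k + 1) (n : ℕ) : P x n ≠ 0 :=
  Finset.prod_ne_zero_iff.mpr fun i _ => fac_ne hx i

lemma exists_bound {x : ℂ} (hx : ∀ k : ℕ, x ≠ k + 1) :
    ∃ B : ℝ, 0 < B ∧ ∀ k : ℕ, ‖(k : ℂ) + 1 - x‖⁻¹ ≤ B / (k + 1) := by
  have h0 : Tendsto (fun k : ℕ => 1 - x * ((1 : ℂ) / ((k : ℂ) + 1))) atTop (𝓝 (1 - x * 0)) :=
    (tendsto_one_div_add_atTop_nhds_zero_nat (𝕜 := ℂ)).const_mul x |>.const_sub 1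
  have h1 := (h0.inv₀ (by simp)).norm.bddAbove_range
  obtain ⟨B, hB⟩ := h1
  refine ⟨max B 1, by positivity, fun k => ?_⟩
  have h2 : ‖(1 - x * ((1 : ℂ) / ((k : ℂ) + 1)))⁻¹‖ ≤ B := hB ⟨k, rfl⟩
  have hk : ((k : ℂ) + 1) ≠ 0 := by exact_mod_cast Nat.succ_ne_zero k
  have hn : ‖(k : ℂ) + 1‖ = (k : ℝ) + 1 := by
    have := Complex.norm_natCast (k + 1)
    push_cast at this
    exact this
  have h3 : 1 - x * ((1 : ℂ) / ((k : ℂ) + 1)) = ((k : ℂ) + 1 - x) / ((k : ℂ) + 1) := by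
    field_simp
  rw [h3, inv_div, norm_div, hn] at h2
  have hp : (0 : ℝ) < (k : ℝ) + 1 := by positivity
  rw [le_div_iff₀ hp, mul_comm, ← div_eq_mul_inv]
  exact h2.trans (le_max_left _ _)

lemma D_tel {x : ℂ} (hx : ∀ k : ℕ, x ≠ k + 1) (n a : ℕ) :
    D x n (a + 1) * (1 / (((a + 1 : ℕ) : ℂ) - x)) = (D x n a - D x n (a + 1)) / (n + 1) := by
  have h1 := P_ne hx a
  have h2 := P_ne hx (n + 1 + a)
  have h3 := fac_ne hx a
  have h4 := fac_ne hx (n + 1 + a)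
  have h5 : (n : ℂ) + 1 ≠ 0 := by exact_mod_cast Nat.succ_ne_zero n
  unfold D
  rw [← add_assoc, P_succ, P_succ]
  push_cast at *
  field_simp
  ring

lemma D_bound {x : ℂ} (hx : ∀ k : ℕ, x ≠ k + 1) (n : ℕ) :
    ∃ K : ℝ, 0 ≤ K ∧ ∀ k : ℕ, ‖D x n k‖ ≤ K / (k + 1) := by
  obtain ⟨B, hB, hb⟩ := exists_bound hx
  refine ⟨B ^ (n + 1), by positivity, fun k => ?_⟩
  have key : ∀ n : ℕ, ‖P x k / P x (n + 1 + k)‖ ≤ B ^ (n + 1) / (k + 1) := by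
    intro n
    induction n with
    | zero =>
      have : P x k / P x (0 + 1 + k) = ((k : ℂ) + 1 - x)⁻¹ := by
        rw [show 0 + 1 + k = k + 1 by ring, P_succ]
        have := P_ne hx k
        have := fac_ne hx k
        field_simp
      rw [this, norm_inv]
      simpa using hb k
    | succ n ih =>
      have : P x k / P x (n + 1 + 1 + k) =
          P x k / P x (n + 1 + k) * (((n + 1 + k : ℕ) : ℂ) + 1 - x)⁻¹ := by
        rw [show n + 1 + 1 + k = n + 1 + k + 1 by ring, P_succ]
        rw [div_mul_eq_div_mul_one_div, one_div]
      rw [this, norm_mul, norm_inv, pow_succ B (n + 1), mul_div_right_comm]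
      gcongr
      refine (hb _).trans (div_le_self hB.le ?_)
      push_cast
      have : (0 : ℝ) ≤ n + 1 + k := by positivity
      linarith
  exact key n

lemma D_tendsto {x : ℂ} (hx : ∀ k : ℕ, x ≠ k + 1) (n : ℕ) :
    Tendsto (D x n) atTop (𝓝 0) := by
  obtain ⟨K, hK, hk⟩ := D_bound hx n
  refine squeeze_zero_norm hk ?_
  have := (tendsto_one_div_add_atTop_nhds_zero_nat (𝕜 := ℝ)).const_mul K
  simpa [div_eq_mul_inv] using this

lemma inner_sum {x : ℂ} (hx : ∀ k : ℕ, x ≠ k + 1) (n m : ℕ) :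
    HasSum (fun i : ℕ => D x n (m + i + 1) * (1 / (((m + i + 1 : ℕ) : ℂ) - x)))
      (D x n m / (n + 1)) := by
  obtain ⟨K, hK, hk⟩ := D_bound hx n
  obtain ⟨B, hB, hb⟩ := exists_bound hx
  have hs : Summable (fun i : ℕ => K * B * (1 / ((i : ℝ) + 1) ^ 2)) := by
    refine Summable.mul_left _ ?_
    have := (summable_nat_add_iff 1).mpr (Real.summable_one_div_nat_pow.mpr (one_lt_two))
    simpa using this
  rw [hasSum_iff_tendsto_nat_of_summable_norm]
  · have h1 : ∀ N : ℕ, ∑ i ∈ Finset.range N,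
        D x n (m + i + 1) * (1 / (((m + i + 1 : ℕ) : ℂ) - x)) =
        (D x n m - D x n (m + N)) / (n + 1) := by
      intro N
      simp_rw [D_tel hx]
      rw [← Finset.sum_div]
      congr 1
      exact Finset.sum_range_sub' (fun i => D x n (m + i)) N
    simp_rw [h1]
    have h2 : Tendsto (fun N => D x n (m + N)) atTop (𝓝 0) := by
      have := (tendsto_add_atTop_iff_nat m).mpr (D_tendsto hx n)
      simpa [add_comm] using this
    have := (h2.const_sub (D x n m)).div_const ((n : ℂ) + 1)
    simpa using this
  · refine Summable.of_nonneg_of_le (fun _ => norm_nonneg _) (fun i => ?_) hs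
    rw [norm_mul, one_div, norm_inv]
    have a1 := hk (m + i + 1)
    have a2 := hb (m + i)
    have e1 : K / (((m + i + 1 : ℕ) : ℝ) + 1) ≤ K / (i + 1) := by
      gcongr
      omega
    have e2 : B / (((m + i : ℕ) : ℝ) + 1) ≤ B / (i + 1) := by
      gcongr
      omega
    push_cast at *
    calc _ ≤ (K / (i + 1)) * (B / (i + 1)) :=
          mul_le_mul (a1.trans e1) (a2.trans e2) (by positivity) (by positivity)
      _ = _ := by field_simp

/-- Peel off the largest entry. -/
def consE (r : ℕ) : S (r + 1) × ℕ ≃ S (r + 2) where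
  toFun p := ⟨Matrix.vecCons (p.1.1 0 + p.2 + 1) p.1.1, by
    refine ⟨fun i => ?_, p.1.2.2.vecCons (by omega)⟩
    refine Fin.cases ?_ (fun j => ?_) i
    · simp
    · simpa using p.1.2.1 j⟩
  invFun f := (⟨fun i => f.1 i.succ, fun i => f.2.1 _, fun i j h => f.2.2 (by simpa using h)⟩,
    f.1 0 - f.1 1 - 1)
  left_inv p := by
    ext i
    · simp
    · simp [Matrix.vecCons]
      omega
  right_inv f := by
    ext i
    have : f.1 1 < f.1 0 := f.2.2 (by simp)
    refine Fin.cases ?_ (fun j => ?_) i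
    · simp
      omega
    · simp

/-- One-tuples. -/
def oneE : ℕ ≃ S 1 where
  toFun i := ⟨fun _ => i + 1, fun _ => Nat.succ_pos i, fun i j h => by
    exact absurd h (by simp [Subsingleton.elim i j])⟩
  invFun f := f.1 0 - 1
  left_inv i := by simp
  right_inv f := by
    ext i
    have := f.2.1 0
    rw [Subsingleton.elim i 0]
    simp
    omega

lemma summable_pi (g : ℕ → ℝ) (hg : Summable g) (h0 : ∀ i, 0 ≤ g i) (r : ℕ) :
    Summable (fun f : Fin r → ℕ => ∏ j, g (f j)) := by
  induction r with
  | zero => exact (hasSum_fintype _).summable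
  | succ r ih =>
    rw [← (Fin.consEquiv (fun _ : Fin (r + 1) => ℕ)).summable_iff]
    have := hg.mul_of_nonneg ih h0 (fun f => Finset.prod_nonneg fun i _ => h0 _)
    refine this.congr fun p => ?_
    simp [Fin.prod_univ_succ, Fin.consEquiv]

lemma summable_main {x : ℂ} (hx : ∀ k : ℕ, x ≠ k + 1) (r : ℕ) :
    Summable (fun f : S (r + 1) => 1 / (f.1 0 : ℝ) * ∏ j, ‖1 / ((f.1 j : ℂ) - x)‖) := by
  obtain ⟨B, hB, hb⟩ := exists_bound hx
  set s : ℝ := 1 / ((r : ℝ) + 1) with hs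
  have hs0 : 0 < s := by positivity
  have hg : Summable (fun n : ℕ => 1 / (n : ℝ) ^ (1 + s)) :=
    Real.summable_one_div_nat_rpow.mpr (by linarith)
  have h1 := (summable_pi _ hg (fun i => by positivity) (r + 1)).subtype
    {f : Fin (r + 1) → ℕ | (∀ i, 0 < f i) ∧ StrictAnti f}
  refine Summable.of_nonneg_of_le (fun _ => by positivity) (fun f => ?_) (h1.mul_left (B ^ (r + 1)))
  have hpos : ∀ j, (0 : ℝ) < f.1 j := fun j => by exact_mod_cast f.2.1 j
  have e1 : ∀ j, ‖1 / ((f.1 j : ℂ) - x)‖ ≤ B * (1 / (f.1 j : ℝ)) := by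
    intro j
    have := hb (f.1 j - 1)
    have h2 : ((f.1 j - 1 : ℕ) : ℝ) + 1 = f.1 j := by
      exact_mod_cast Nat.sub_add_cancel (f.2.1 j)
    have h3 : ((f.1 j - 1 : ℕ) : ℂ) + 1 = f.1 j := by
      exact_mod_cast Nat.sub_add_cancel (f.2.1 j)
    rw [h2, h3] at this
    rw [one_div, norm_inv]
    simpa [div_eq_mul_inv] using this
  have e2 : 1 / (f.1 0 : ℝ) ≤ ∏ j : Fin (r + 1), 1 / (f.1 j : ℝ) ^ s := by
    have : 1 / (f.1 0 : ℝ) = ∏ j : Fin (r + 1), 1 / (f.1 0 : ℝ) ^ s := by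
      rw [Finset.prod_const, Finset.card_univ, Fintype.card_fin, div_pow, one_pow,
        ← Real.rpow_natCast, ← Real.rpow_mul (hpos 0).le]
      congr 1
      have : s * ((r + 1 : ℕ) : ℝ) = 1 := by
        rw [hs]; push_cast; field_simp
      rw [this, Real.rpow_one]
    rw [this]
    refine Finset.prod_le_prod (fun j _ => by positivity) fun j _ => ?_
    have h3 : (f.1 j : ℝ) ≤ f.1 0 := by exact_mod_cast f.2.2.antitone (Fin.zero_le j)
    have := Real.rpow_pos_of_pos (hpos j) s
    have h4 := Real.rpow_le_rpow (hpos j).le h3 hs0.le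
    exact one_div_le_one_div_of_le this h4
  calc _ ≤ (∏ j : Fin (r + 1), 1 / (f.1 j : ℝ) ^ s) * ∏ j, (B * (1 / (f.1 j : ℝ))) := by
        refine mul_le_mul e2 (Finset.prod_le_prod (fun _ _ => norm_nonneg _) fun j _ => e1 j)
          (by positivity) (by positivity)
    _ = _ := by
        rw [Finset.prod_mul_distrib, mul_left_comm, ← Finset.prod_mul_distrib]
        simp only [Finset.prod_const, Finset.card_univ, Fintype.card_fin, Function.comp]
        congr 1
        refine Finset.prod_congr rfl fun j _ => ?_
        rw [Real.rpow_add (hpos j), Real.rpow_one]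
        field_simp

lemma summable_D {x : ℂ} (hx : ∀ k : ℕ, x ≠ k + 1) (n r : ℕ) :
    Summable (fun f : S (r + 1) => D x n (f.1 0) * ∏ j, 1 / ((f.1 j : ℂ) - x)) := by
  obtain ⟨K, hK, hk⟩ := D_bound hx n
  refine Summable.of_norm_bounded ((summable_main hx r).mul_left K) fun f => ?_
  have hpos : (0 : ℝ) < f.1 0 := by exact_mod_cast f.2.1 0
  rw [norm_mul, norm_prod, ← mul_assoc]
  gcongr
  refine (hk _).trans ?_
  rw [mul_one_div]
  gcongr
  linarith

lemma sum_D {x : ℂ} (hx : ∀ k : ℕ, x ≠ k + 1) (n r : ℕ) :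
    ∑' f : S (r + 1), D x n (f.1 0) * ∏ j, 1 / ((f.1 j : ℂ) - x) =
      D x n 0 / ((n : ℂ) + 1) ^ (r + 1) := by
  induction r with
  | zero =>
    rw [← oneE.tsum_eq]
    have := (inner_sum hx n 0).tsum_eq
    simpa [oneE] using this
  | succ r ih =>
    rw [← (consE r).tsum_eq]
    have hs := (consE r).summable_iff.mpr (summable_D hx n (r + 1))
    have := hs.tsum_prod
    simp only [Function.comp_def] at this
    rw [this, pow_succ, ← div_div, ← ih, ← tsum_div_const]
    refine tsum_congr fun f => ?_
    rw [div_eq_mul_inv, mul_right_comm, ← div_eq_mul_inv, ← (inner_sum hx n (f.1 0)).tsum_eq,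
      ← tsum_mul_right]
    refine tsum_congr fun i => ?_
    rw [Fin.prod_univ_succ, mul_assoc]
    simp [consE]

/-- The remainder factor. -/
noncomputable def T (x : ℂ) (N k : ℕ) : ℂ := P x N * P x k / P x (N + k)

lemma T_zero {x : ℂ} (hx : ∀ k : ℕ, x ≠ k + 1) (k : ℕ) : T x 0 k = 1 := by
  have := P_ne hx k
  simp [T, P] at *
  exact this

lemma T_succ {x : ℂ} (hx : ∀ k : ℕ, x ≠ k + 1) (N k : ℕ) :
    T x (N + 1) k = T x N k * (((N : ℂ) + 1 - x) / (((N + k : ℕ) : ℂ) + 1 - x)) := by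
  have h2 := P_ne hx (N + k)
  have h4 := fac_ne hx (N + k)
  unfold T
  rw [show N + 1 + k = N + k + 1 by ring, P_succ, P_succ]
  field_simp

lemma partial_sum {x : ℂ} (hx : ∀ k : ℕ, x ≠ k + 1) (N k : ℕ) (hk : 0 < k) :
    ∑ n ∈ Finset.range N, P x n * D x n k = (1 - T x N k) * (1 / (k : ℂ)) := by
  have hk' : (k : ℂ) ≠ 0 := by exact_mod_cast hk.ne'
  induction N with
  | zero => simp [T_zero hx]
  | succ N ih =>
    rw [Finset.sum_range_succ, ih, T_succ hx]
    unfold T D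
    rw [show N + 1 + k = N + k + 1 by ring, P_succ]
    have h2 := P_ne hx (N + k)
    have h4 := fac_ne hx (N + k)
    push_cast at *
    field_simp
    ring

lemma T_bound {x : ℂ} (hx : ∀ k : ℕ, x ≠ k + 1) : ∃ K : ℝ, ∀ N k, ‖T x N k‖ ≤ K := by
  obtain ⟨B, hB, hb⟩ := exists_bound hx
  obtain ⟨M, hM⟩ := exists_nat_ge x.re
  have hb' : ∀ k : ℕ, ‖(k : ℂ) + 1 - x‖⁻¹ ≤ B := fun k =>
    (hb k).trans (div_le_self hB.le (by linarith [Nat.cast_nonneg (α := ℝ) k]))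
  set b : ℕ → ℝ := fun i => 1 + ‖(i : ℂ) + 1 - x‖ * B with hbdef
  have b1 : ∀ i, 1 ≤ b i := fun i => by
    simp only [hbdef, le_add_iff_nonneg_right]; positivity
  have b0 : ∀ i, 0 ≤ b i := fun i => zero_le_one.trans (b1 i)
  refine ⟨∏ i ∈ Finset.range M, b i, fun N k => ?_⟩
  have key : ‖T x N k‖ ≤ ∏ i ∈ Finset.range (min N M), b i := by
    induction N with
    | zero => simp [T_zero hx]
    | succ N ih =>
      rw [T_succ hx, norm_mul]
      rcases lt_or_ge N M with h | h
      · rw [min_eq_left (by omega)] at ih ⊢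
        rw [Finset.prod_range_succ]
        refine mul_le_mul ih ?_ (norm_nonneg _) (Finset.prod_nonneg fun i _ => b0 i)
        rw [norm_div, div_eq_mul_inv]
        have : ‖(N : ℂ) + 1 - x‖ * ‖((N + k : ℕ) : ℂ) + 1 - x‖⁻¹ ≤ ‖(N : ℂ) + 1 - x‖ * B := by
          gcongr
          exact hb' _
        simp only [hbdef]
        linarith
      · rw [min_eq_right (by omega)] at ih ⊢
        refine (mul_le_of_le_one_right (norm_nonneg _) ?_).trans ih
        rw [norm_div]
        refine div_le_one_of_le₀ ?_ (norm_nonneg _)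
        have hN : (M : ℝ) ≤ N := by exact_mod_cast h
        rw [← sq_le_sq₀ (norm_nonneg _) (norm_nonneg _), ← Complex.normSq_eq_norm_sq,
          ← Complex.normSq_eq_norm_sq, Complex.normSq_apply, Complex.normSq_apply]
        simp
        have : (0 : ℝ) ≤ k := by positivity
        nlinarith
  refine key.trans ?_
  have hmono : Monotone (fun N => ∏ i ∈ Finset.range N, b i) := by
    refine monotone_nat_of_le_succ fun N => ?_
    rw [Finset.prod_range_succ]
    exact le_mul_of_one_le_right (Finset.prod_nonneg fun i _ => b0 i) (b1 N)
  exact hmono (min_le_right _ _)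

lemma T_symm (x : ℂ) (N k : ℕ) : T x N k = T x k N := by
  simp [T, add_comm, mul_comm]

lemma T_tendsto {x : ℂ} (hx : ∀ k : ℕ, x ≠ k + 1) (k : ℕ) (hk : 0 < k) :
    Tendsto (fun N => T x N k) atTop (𝓝 0) := by
  obtain ⟨m, rfl⟩ : ∃ m, k = m + 1 := ⟨k - 1, by omega⟩
  have h := (D_tendsto hx m).const_mul (P x (m + 1))
  rw [mul_zero] at h
  refine h.congr fun N => ?_
  rw [T_symm]
  simp [T, D, mul_div_assoc]

lemma rhs_summable {x : ℂ} (hx : ∀ k : ℕ, x ≠ k + 1) (r : ℕ) :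
    Summable (fun n : ℕ => 1 / ((n + 1 : ℂ) ^ (r + 1) * ((n + 1 : ℂ) - x))) := by
  obtain ⟨B, hB, hb⟩ := exists_bound hx
  have hs : Summable (fun i : ℕ => B * (1 / ((i : ℝ) + 1) ^ 2)) := by
    refine Summable.mul_left _ ?_
    have := (summable_nat_add_iff 1).mpr (Real.summable_one_div_nat_pow.mpr (one_lt_two))
    simpa using this
  refine Summable.of_norm_bounded hs fun n => ?_
  have hn : ‖(n : ℂ) + 1‖ = (n : ℝ) + 1 := by
    have := Complex.norm_natCast (n + 1)
    push_cast at this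
    exact this
  have h0 : (0 : ℝ) ≤ n := by positivity
  rw [one_div, mul_inv, norm_mul, norm_inv, norm_inv, norm_pow, hn]
  calc _ ≤ ((n : ℝ) + 1)⁻¹ * (B / (n + 1)) := by
        refine mul_le_mul ?_ (hb n) (by positivity) (by positivity)
        exact inv_anti₀ (by positivity) (le_self_pow₀ (by linarith) (by omega))
    _ = _ := by field_simp

lemma main {x : ℂ} (hx : ∀ k : ℕ, x ≠ k + 1) (r : ℕ) :
    ∑' f : S (r + 1), (1 / (f.1 0 : ℂ)) * ∏ j, 1 / ((f.1 j : ℂ) - x) =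
      ∑' n : ℕ, 1 / ((n + 1 : ℂ) ^ (r + 1) * ((n + 1 : ℂ) - x)) := by
  have h1 : ∀ N : ℕ, ∑' f : S (r + 1),
      (1 - T x N (f.1 0)) * ((1 / (f.1 0 : ℂ)) * ∏ j, 1 / ((f.1 j : ℂ) - x)) =
      ∑ n ∈ Finset.range N, 1 / ((n + 1 : ℂ) ^ (r + 1) * ((n + 1 : ℂ) - x)) := by
    intro N
    have : ∀ f : S (r + 1),
        (1 - T x N (f.1 0)) * ((1 / (f.1 0 : ℂ)) * ∏ j, 1 / ((f.1 j : ℂ) - x)) =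
        ∑ n ∈ Finset.range N, P x n * (D x n (f.1 0) * ∏ j, 1 / ((f.1 j : ℂ) - x)) := by
      intro f
      rw [← mul_assoc, ← partial_sum hx N _ (f.2.1 0), Finset.sum_mul]
      exact Finset.sum_congr rfl fun n _ => mul_assoc _ _ _
    simp_rw [this]
    rw [Summable.tsum_finsetSum fun n _ => (summable_D hx n r).mul_left _]
    refine Finset.sum_congr rfl fun n _ => ?_
    rw [tsum_mul_left, sum_D hx]
    have h5 : (n : ℂ) + 1 ≠ 0 := by exact_mod_cast Nat.succ_ne_zero n
    have h2 := P_ne hx n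
    have h4 := fac_ne hx n
    unfold D
    rw [add_zero, P_succ]
    simp only [P, Finset.range_zero, Finset.prod_empty]
    simp only [P] at h2
    field_simp
  obtain ⟨K, hK⟩ := T_bound hx
  have h2 : Tendsto (fun N : ℕ => ∑' f : S (r + 1),
      (1 - T x N (f.1 0)) * ((1 / (f.1 0 : ℂ)) * ∏ j, 1 / ((f.1 j : ℂ) - x))) atTop
      (𝓝 (∑' f : S (r + 1), (1 / (f.1 0 : ℂ)) * ∏ j, 1 / ((f.1 j : ℂ) - x))) := by
    refine tendsto_tsum_of_dominated_convergence ((summable_main hx r).mul_left (1 + K)) ?_ ?_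
    · intro f
      have := ((T_tendsto hx _ (f.2.1 0)).const_sub 1).mul_const
        ((1 / (f.1 0 : ℂ)) * ∏ j, 1 / ((f.1 j : ℂ) - x))
      simpa using this
    · refine Eventually.of_forall fun N f => ?_
      rw [norm_mul, norm_mul, norm_prod, norm_div, norm_one, Complex.norm_natCast]
      refine mul_le_mul_of_nonneg_right ?_ (by positivity)
      refine (norm_sub_le _ _).trans ?_
      rw [norm_one]
      linarith [hK N (f.1 0)]
  simp_rw [h1] at h2
  exact tendsto_nhds_unique h2 (rhs_summable hx r).hasSum.tendsto_sum_nat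

end Aux4

/-- For every positive integer `r` and complex `x` not a positive integer,
`∑_{k₁ > ⋯ > k_r > 0} (1/k₁) ∏_{j=1}^r 1/(k_j − x) = ∑_{n=1}^∞ 1/(n^r (n−x))`. -/
theorem stmt_4 (r : ℕ) (hr : 0 < r) (x : ℂ) (hx : ∀ k : ℕ, x ≠ k + 1) :
    ∑' k : {f : Fin r → ℕ // (∀ i, 0 < f i) ∧ StrictAnti f},
        (1 / (k.1 ⟨0, hr⟩ : ℂ)) * ∏ j : Fin r, 1 / ((k.1 j : ℂ) - x) =
      ∑' n : ℕ, 1 / ((n + 1 : ℂ) ^ r * ((n + 1 : ℂ) - x)) := by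
  obtain ⟨s, rfl⟩ : ∃ s, r = s + 1 := ⟨r - 1, by omega⟩
  exact Aux4.main hx s
end

section
/- For every nonnegative integer n, ζ({2}ₙ) := ∑_{k₁ > k₂ > ⋯ > k_n > 0} ∏_{j=1}^n 1/k_j² = π^{2n}/(2n+1)!, where the sum ranges over strictly decreasing n-tuples of positive integers (and the empty sum for n = 0 is 1). -/
open scoped BigOperators Real

/-- The multiple zeta value `ζ(s 0, s 1, …, s (r-1))
  = ∑_{n₁ > n₂ > ⋯ > n_r > 0} ∏_i 1/n_i^{s i}`. -/
noncomputable def mzv {r : ℕ} (s : Fin r → ℕ) : ℝ :=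
  ∑' k : {f : Fin r → ℕ // (∀ i, 0 < f i) ∧ StrictAnti f},
    ∏ i : Fin r, (1 : ℝ) / (k.1 i : ℝ) ^ (s i)

/-- Summand for a finite set. -/
noncomputable def zetaTwo_term (s : Finset ℕ) : ℂ := ∏ i ∈ s, (1 : ℂ) / ((i : ℂ) + 1) ^ 2

theorem zetaTwo_term_mul (w : ℂ) (s : Finset ℕ) :
    ∏ i ∈ s, w / ((i : ℂ) + 1) ^ 2 = w ^ s.card * zetaTwo_term s := by
  simp only [zetaTwo_term, div_eq_mul_inv w, Finset.prod_mul_distrib, Finset.prod_const, one_div]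

theorem zetaTwo__summable (w : ℂ) : Summable fun s : Finset ℕ => ∏ i ∈ s, w / ((i : ℂ) + 1) ^ 2 := by
  apply summable_finsetProd_of_summable_norm
  have h : Summable fun n : ℕ => 1 / ((n : ℝ)) ^ 2 := Real.summable_one_div_nat_pow.2 (by norm_num)
  have h2 := ((summable_nat_add_iff 1).2 h).mul_left ‖w‖
  refine h2.congr fun i => ?_
  have : ‖(i : ℂ) + 1‖ = (i : ℝ) + 1 := by
    have := Complex.norm_natCast (i + 1)
    push_cast at this
    exact this
  rw [norm_div, norm_pow, this]
  push_cast
  ring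

theorem zetaTwo_term_summable : Summable zetaTwo_term := by
  have := zetaTwo__summable 1
  simp only [zetaTwo_term_mul, one_pow, one_mul] at this
  exact this

/-- Elementary symmetric sum. -/
noncomputable def zetaTwo_e (n : ℕ) : ℂ := ∑' s : {s : Finset ℕ // s.card = n}, zetaTwo_term s.1

/-- The product. -/
noncomputable def zetaTwo_F (w : ℂ) : ℂ := ∑' s : Finset ℕ, ∏ i ∈ s, w / ((i : ℂ) + 1) ^ 2

theorem zetaTwo_F_hasSum (w : ℂ) : HasSum (fun n => w ^ n * zetaTwo_e n) (zetaTwo_F w) := by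
  have h : HasSum (fun s : Finset ℕ => w ^ s.card * zetaTwo_term s) (zetaTwo_F w) := by
    have := (zetaTwo__summable w).hasSum
    simp only [zetaTwo_term_mul] at this
    simpa only [zetaTwo_F, zetaTwo_term_mul] using this
  have h2 := (Equiv.hasSum_iff (Equiv.sigmaFiberEquiv (Finset.card : Finset ℕ → ℕ))).2 h
  refine h2.sigma fun n => ?_
  have h3 : HasSum (fun s : {s : Finset ℕ // s.card = n} => zetaTwo_term s.1) (zetaTwo_e n) :=
    (zetaTwo_term_summable.subtype {s : Finset ℕ | s.card = n}).hasSum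
  refine (h3.mul_left (w ^ n)).congr_fun ?_ 
  rintro ⟨s, rfl⟩
  rfl

theorem zetaTwo_F_sin (z : ℂ) : π * z * zetaTwo_F (-z ^ 2) = Complex.sin (π * z) := by
  have h := (hasProd_one_add_of_hasSum_prod (zetaTwo__summable (-z ^ 2)).hasSum).tendsto_prod_nat
  have h2 := h.const_mul ((π : ℂ) * z)
  refine tendsto_nhds_unique h2 ((Complex.tendsto_euler_sin_prod z).congr fun n => ?_)
  simp only [neg_div, sub_eq_add_neg]

theorem zetaTwo_F_zero : zetaTwo_F 0 = 1 := by
  unfold zetaTwo_F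
  rw [tsum_eq_single ∅]
  · simp
  · intro s hs
    simp [hs]

theorem zetaTwo_F_hasSumSin (w : ℂ) :
    HasSum (fun n : ℕ => w ^ n * ((π : ℂ) ^ (2 * n) / (Nat.factorial (2 * n + 1)))) (zetaTwo_F w) := by
  by_cases hw : w = 0
  · subst hw
    rw [zetaTwo_F_zero]
    have h := hasSum_single (f := fun n : ℕ =>
      (0 : ℂ) ^ n * ((π : ℂ) ^ (2 * n) / (Nat.factorial (2 * n + 1)))) 0
      (fun n hn => by simp [hn])
    simpa using h
  · obtain ⟨z, hz⟩ := IsAlgClosed.exists_pow_nat_eq (-w) (n := 2) (by norm_num)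
    have hw2 : w = -z ^ 2 := by rw [hz]; ring
    have hz0 : z ≠ 0 := by
      rintro rfl
      apply hw
      simp [hw2]
    have hp : (π : ℂ) ≠ 0 := by exact_mod_cast Real.pi_ne_zero
    have h := (Complex.hasSum_sin (π * z)).mul_left (((π : ℂ) * z)⁻¹)
    rw [← zetaTwo_F_sin, ← hw2, inv_mul_cancel_left₀ (mul_ne_zero hp hz0)] at h
    convert! h using 1
    ext n
    rw [hw2, neg_pow, ← pow_mul, pow_succ ((π : ℂ) * z), mul_pow]
    field_simp

theorem zetaTwo_e_eq (n : ℕ) : zetaTwo_e n = (π : ℂ) ^ (2 * n) / (Nat.factorial (2 * n + 1)) := by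
  have h1 : HasFPowerSeriesAt zetaTwo_F (FormalMultilinearSeries.ofScalars ℂ zetaTwo_e) 0 := by
    rw [hasFPowerSeriesAt_iff]
    refine Filter.Eventually.of_forall fun w => ?_
    simpa using zetaTwo_F_hasSum w
  have h2 : HasFPowerSeriesAt zetaTwo_F (FormalMultilinearSeries.ofScalars ℂ
      fun n : ℕ => (π : ℂ) ^ (2 * n) / (Nat.factorial (2 * n + 1))) 0 := by
    rw [hasFPowerSeriesAt_iff]
    refine Filter.Eventually.of_forall fun w => ?_
    simpa using zetaTwo_F_hasSumSin w
  have h := congrArg (fun p => FormalMultilinearSeries.coeff p n)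
    (h1.eq_formalMultilinearSeries h2)
  simpa using h

/-- From finite sets to decreasing tuples. -/
noncomputable def zetaTwo_map (n : ℕ) (s : {s : Finset ℕ // s.card = n}) :
    {f : Fin n → ℕ // (∀ i, 0 < f i) ∧ StrictAnti f} :=
  ⟨fun i => s.1.orderEmbOfFin s.2 i.rev + 1, fun _ => Nat.succ_pos _, fun _ _ hij =>
    Nat.succ_lt_succ ((s.1.orderEmbOfFin s.2).strictMono (Fin.rev_lt_rev.2 hij))⟩

theorem zetaTwo_map_bij (n : ℕ) : Function.Bijective (zetaTwo_map n) := by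
  constructor
  · rintro ⟨s, hs⟩ ⟨t, ht⟩ h
    have h1 := congrArg Subtype.val h
    simp only [zetaTwo_map] at h1
    have h2 : (s.orderEmbOfFin hs : Fin n → ℕ) = t.orderEmbOfFin ht := by
      funext i
      have := congrFun h1 i.rev
      simpa using this
    apply Subtype.ext
    change s = t
    rw [← Finset.image_orderEmbOfFin_univ s hs, h2, Finset.image_orderEmbOfFin_univ]
  · rintro ⟨f, hf, ha⟩
    have hm : StrictMono fun i : Fin n => f i.rev - 1 := by
      intro i j hij
      have := ha (Fin.rev_lt_rev.2 hij)
      have := hf i.rev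
      have := hf j.rev
      simp only
      omega
    refine ⟨⟨Finset.univ.image fun i : Fin n => f i.rev - 1, ?_⟩, ?_⟩
    · rw [Finset.card_image_of_injective _ hm.injective]
      simp
    · apply Subtype.ext
      funext i
      simp only [zetaTwo_map]
      rw [← Finset.orderEmbOfFin_unique (f := fun i : Fin n => f i.rev - 1) _ _ hm]
      · have := hf i
        simp only [Fin.rev_rev]
        omega
      · intro x
        exact Finset.mem_image_of_mem _ (Finset.mem_univ x)

theorem zetaTwo_map_prod (n : ℕ) (s : {s : Finset ℕ // s.card = n}) :
    ((∏ i : Fin n, (1 : ℝ) / ((zetaTwo_map n s).1 i : ℝ) ^ 2 : ℝ) : ℂ) = zetaTwo_term s.1 := by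
  obtain ⟨s, hs⟩ := s
  simp only [zetaTwo_map, zetaTwo_term]
  push_cast
  refine (Equiv.prod_comp Fin.revPerm (fun i : Fin n =>
    (1 : ℂ) / (((s.orderEmbOfFin hs i : ℕ) : ℂ) + 1) ^ 2)).trans ?_
  conv_rhs => rw [← Finset.map_orderEmbOfFin_univ s hs]
  rw [Finset.prod_map]
  rfl

/-- For every nonnegative integer `n`, `ζ({2}ₙ) = π^{2n}/(2n+1)!`. -/
theorem stmt_8 (n : ℕ) :
    mzv (fun _ : Fin n => 2) = π ^ (2 * n) / (Nat.factorial (2 * n + 1)) := by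
  have h := zetaTwo_e_eq n
  have key : ((mzv (fun _ : Fin n => 2) : ℝ) : ℂ) = zetaTwo_e n := by
    unfold mzv zetaTwo_e
    rw [← (Equiv.ofBijective _ (zetaTwo_map_bij n)).tsum_eq, Complex.ofReal_tsum]
    exact tsum_congr fun s => zetaTwo_map_prod n s
  rw [h] at key
  exact_mod_cast key
end

section
/- For every nonnegative integer n, ζ({3}ₙ) = ζ({2,1}ₙ); that is, ∑_{k₁ > ⋯ > k_n > 0} ∏_{j=1}^n 1/k_j³ equals the depth-2n multiple zeta value ζ(2,1,2,1,…,2,1) whose exponent string consists of n consecutive copies of (2,1). -/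
open scoped BigOperators

namespace MZVaux

open scoped ENNReal

/-- weight `1/b` -/
noncomputable def v (b : ℕ) : ℝ≥0∞ := ENNReal.ofReal (1 / (b : ℝ))

noncomputable def d (a b : ℕ) : ℝ≥0∞ := if a < b then 1 else 0

/-- real connector -/
noncomputable def cr (m n : ℕ) : ℝ := (m.factorial * n.factorial : ℝ) / ((m + n).factorial : ℝ)

noncomputable def c (m n : ℕ) : ℝ≥0∞ := ENNReal.ofReal (cr m n)

lemma cr_comm (m n : ℕ) : cr m n = cr n m := by
  unfold cr; rw [Nat.add_comm, mul_comm]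

lemma c_comm (m n : ℕ) : c m n = c n m := by
  unfold c; rw [cr_comm]

lemma cr_nonneg (m n : ℕ) : 0 ≤ cr m n := by unfold cr; positivity

lemma cr_zero (n : ℕ) : cr n 0 = 1 := by
  unfold cr
  have : (n.factorial : ℝ) ≠ 0 := by positivity
  simp [this]

lemma c_zero (n : ℕ) : c n 0 = 1 := by simp [c, cr_zero]

lemma v_zero : v 0 = 0 := by simp [v]

lemma cr_step (m p : ℕ) (hm : 0 < m) :
    1 / ((p + 1 : ℕ) : ℝ) * cr m (p + 1) = 1 / (m : ℝ) * cr m p - 1 / (m : ℝ) * cr m (p + 1) := by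
  unfold cr
  rw [← Nat.add_assoc, Nat.factorial_succ, Nat.factorial_succ (m + p)]
  have h1 : ((m + p).factorial : ℝ) ≠ 0 := by positivity
  have h2 : (m : ℝ) ≠ 0 := by positivity
  have h3 : ((m : ℝ) + p + 1) ≠ 0 := by positivity
  have h4 : ((p : ℝ) + 1) ≠ 0 := by positivity
  push_cast
  field_simp
  ring

lemma cr_le (m p : ℕ) (hm : 0 < m) : cr m p ≤ 1 / ((p : ℝ) + 1) := by
  induction m, hm using Nat.le_induction with
  | base =>
    apply le_of_eq
    unfold cr
    rw [show 0 + 1 + p = p + 1 by ring, Nat.factorial_succ]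
    have h1 : (p.factorial : ℝ) ≠ 0 := by positivity
    push_cast
    field_simp
    simp [Nat.factorial_succ, mul_comm]
  | succ k hk ih =>
    refine le_trans ?_ ih
    have h := cr_step p k
    have : cr (k + 1) p = cr k p * ((k + 1) / (k + p + 1)) := by
      unfold cr
      rw [show k + 1 + p = (k + p) + 1 by ring, Nat.factorial_succ, Nat.factorial_succ (k + p)]
      have h1 : ((k + p).factorial : ℝ) ≠ 0 := by positivity
      push_cast
      field_simp
    rw [this]
    apply mul_le_of_le_one_right (cr_nonneg _ _)
    rw [div_le_one (by positivity)]
    have : (0 : ℝ) ≤ p := by positivity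
    linarith

lemma cr_tendsto (m q : ℕ) (hm : 0 < m) :
    Filter.Tendsto (fun n => cr m (q + n)) Filter.atTop (nhds 0) := by
  have h0 : Filter.Tendsto (fun n => cr m n) Filter.atTop (nhds 0) :=
    squeeze_zero (fun n => cr_nonneg m n) (fun n => cr_le m n hm)
      tendsto_one_div_add_atTop_nhds_zero_nat
  have := h0.comp (Filter.tendsto_add_atTop_nat q)
  refine this.congr fun n => ?_
  simp [Nat.add_comm]

lemma hasSum_cr (m q : ℕ) (hm : 0 < m) :
    HasSum (fun j : ℕ => 1 / ((q + j + 1 : ℕ) : ℝ) * cr m (q + j + 1)) (1 / (m : ℝ) * cr m q) := by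
  rw [hasSum_iff_tendsto_nat_of_nonneg]
  · have h : ∀ n, ∑ j ∈ Finset.range n, 1 / ((q + j + 1 : ℕ) : ℝ) * cr m (q + j + 1)
        = 1 / (m : ℝ) * cr m q - 1 / (m : ℝ) * cr m (q + n) := by
      intro n
      induction n with
      | zero => simp
      | succ n ih =>
        rw [Finset.sum_range_succ, ih, cr_step m (q + n) hm, ← Nat.add_assoc]; ring
    simp_rw [h]
    have := ((cr_tendsto m q hm).const_mul (1 / (m : ℝ))).const_sub (1 / (m : ℝ) * cr m q)
    simpa using this
  · intro j
    have := cr_nonneg m (q + j + 1)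
    positivity

lemma transport (m q : ℕ) (hm : 0 < m) : ∑' p, d q p * (v p * c m p) = v m * c m q := by
  have h1 : ∑' p, d q p * (v p * c m p) = ∑' j : ℕ, v (q + j + 1) * c m (q + j + 1) := by
    rw [← (ENNReal.summable.sum_add_tsum_nat_add' (f := fun p => d q p * (v p * c m p)) (k := q + 1))]
    rw [Finset.sum_eq_zero, zero_add]
    · refine tsum_congr fun j => ?_
      rw [show j + (q + 1) = q + j + 1 by ring]
      simp [d, show q < q + j + 1 by omega]
    · intro p hp
      have := Finset.mem_range.1 hp
      simp [d, show ¬ q < p by omega]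
  rw [h1]
  have h2 := hasSum_cr m q hm
  have hn : ∀ a b, 0 ≤ 1 / ((a : ℕ) : ℝ) * cr m b := fun a b => by
    have := cr_nonneg m b
    positivity
  have h3 := ENNReal.ofReal_tsum_of_nonneg (fun j => hn (q + j + 1) (q + j + 1)) h2.summable
  rw [h2.tsum_eq] at h3
  unfold v c
  rw [← ENNReal.ofReal_mul (by positivity), h3]
  refine tsum_congr fun j => ?_
  rw [ENNReal.ofReal_mul (by positivity)]

lemma kernel (a q : ℕ) :
    ∑' m, d a m * (v m ^ 3 * c m q) = ∑' n, ∑' p, v n ^ 2 * (d p n * (v p * (d q p * c a n))) := by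
  have e1 : ∀ m, d a m * (v m ^ 3 * c m q)
      = ∑' p, ∑' n, d a m * (v m * (d q p * (v p * (d p n * (v n * c m n))))) := by
    intro m
    rcases Nat.eq_zero_or_pos m with rfl | hm
    · simp [v_zero]
    · simp_rw [ENNReal.tsum_mul_left, transport m _ hm]
      have : ∀ p, d q p * (v p * (v m * c m p)) = v m * (d q p * (v p * c m p)) := by
        intro p; ring
      simp_rw [this, ENNReal.tsum_mul_left, transport m _ hm]
      ring
  simp_rw [e1]
  rw [ENNReal.tsum_comm]
  have e2 : ∀ p, ∑' m, ∑' n, d a m * (v m * (d q p * (v p * (d p n * (v n * c m n)))))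
      = ∑' n, v n ^ 2 * (d p n * (v p * (d q p * c a n))) := by
    intro p
    rw [ENNReal.tsum_comm]
    refine tsum_congr fun n => ?_
    rcases Nat.eq_zero_or_pos n with rfl | hn
    · simp [v_zero]
    · have : ∀ m, d a m * (v m * (d q p * (v p * (d p n * (v n * c m n)))))
          = (d q p * (v p * (d p n * v n))) * (d a m * (v m * c n m)) := by
        intro m; rw [c_comm]; ring
      simp_rw [this, ENNReal.tsum_mul_left, transport n _ hn, c_comm n a]
      ring
  simp_rw [e2]
  rw [ENNReal.tsum_comm]

noncomputable def A : ℕ → ℕ → ℝ≥0∞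
  | 0, m => if m = 0 then 1 else 0
  | i + 1, m => v m ^ 3 * ∑' a, d a m * A i a

noncomputable def B : ℕ → ℕ → ℝ≥0∞
  | 0, m => if m = 0 then 1 else 0
  | i + 1, n => v n ^ 2 * ∑' p, d p n * (v p * ∑' q, d q p * B i q)

noncomputable def Z (i j : ℕ) : ℝ≥0∞ := ∑' m, ∑' q, A i m * (c m q * B j q)

lemma Z_step (i j : ℕ) : Z (i + 1) j = Z i (j + 1) := by
  have l : Z (i + 1) j = ∑' a, ∑' q, A i a * (B j q * ∑' m, d a m * (v m ^ 3 * c m q)) := by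
    unfold Z
    simp only [A, ← ENNReal.tsum_mul_left, ← ENNReal.tsum_mul_right]
    calc _ = ∑' m, ∑' a, ∑' q, v m ^ 3 * (d a m * A i a) * (c m q * B j q) :=
          tsum_congr fun m => ENNReal.tsum_comm
      _ = ∑' a, ∑' m, ∑' q, v m ^ 3 * (d a m * A i a) * (c m q * B j q) := ENNReal.tsum_comm
      _ = ∑' a, ∑' q, ∑' m, v m ^ 3 * (d a m * A i a) * (c m q * B j q) :=
          tsum_congr fun m => ENNReal.tsum_comm
      _ = _ := by
        refine tsum_congr fun a => tsum_congr fun q => tsum_congr fun m => ?_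
        ring
  rw [l]
  simp_rw [kernel]
  unfold Z
  refine tsum_congr fun a => ?_
  simp only [B, ← ENNReal.tsum_mul_left]
  rw [ENNReal.tsum_comm]
  refine tsum_congr fun n => ?_
  rw [ENNReal.tsum_comm]
  refine tsum_congr fun p => tsum_congr fun q => ?_
  ring

lemma Z_all (n j : ℕ) : Z n j = Z 0 (n + j) := by
  induction n generalizing j with
  | zero => simp
  | succ n ih => rw [Z_step, ih]; congr 1; ring

lemma sum_A_eq_sum_B (n : ℕ) : ∑' m, A n m = ∑' m, B n m := by
  have h := Z_all n 0
  unfold Z at h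
  have h1 : ∀ m, ∑' q, A n m * (c m q * B 0 q) = A n m := by
    intro m
    rw [tsum_eq_single 0]
    · simp [B, c_zero]
    · intro q hq; simp [B, hq]
  rw [tsum_eq_single (f := fun m => ∑' q, A 0 m * (c m q * B (n + 0) q)) 0] at h
  · simp_rw [h1] at h
    rw [h]
    refine tsum_congr fun q => ?_
    rw [c_comm, c_zero]
    simp [A]
  · intro m hm; simp [A, hm]

open Classical in
noncomputable def H (r : ℕ) (s : ℕ → ℕ) (P : ℕ → Prop) : ℝ≥0∞ :=
  ∑' f : Fin r → ℕ, if ((∀ i, 0 < f i) ∧ StrictAnti f) ∧ ∀ i, P (f i) then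
    ∏ i : Fin r, v (f i) ^ s i else 0

open Classical in
lemma H_succ (r : ℕ) (s : ℕ → ℕ) (P : ℕ → Prop) (hs : 0 < s 0)
    (hP : ∀ a b, a < b → P b → P a) :
    H (r + 1) s P = ∑' b, if P b then v b ^ s 0 * H r (fun i => s (i + 1)) (fun x => x < b) else 0 := by
  unfold H
  rw [← (Fin.consEquiv (fun _ : Fin (r + 1) => ℕ)).tsum_eq, ENNReal.summable.tsum_prod' (fun _ => ENNReal.summable)]
  refine tsum_congr fun b => ?_
  rcases Nat.eq_zero_or_pos b with rfl | hb
  · have : (0 : ℕ) ≠ s 0 := by omega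
    simp [v_zero, hs.ne', Fin.forall_fin_succ]
  split_ifs with hPb
  · rw [← ENNReal.tsum_mul_left]
    refine tsum_congr fun g => ?_
    have key : (((∀ i, 0 < (Fin.cons b g : Fin (r + 1) → ℕ) i) ∧
        StrictAnti (Fin.cons b g : Fin (r + 1) → ℕ)) ∧ ∀ i, P ((Fin.cons b g : Fin (r + 1) → ℕ) i))
        ↔ (((∀ i, 0 < g i) ∧ StrictAnti g) ∧ ∀ i, g i < b) := by
      constructor
      · rintro ⟨⟨h1, h2⟩, h3⟩
        refine ⟨⟨fun i => by simpa using h1 i.succ, fun i j hij => ?_⟩, fun i => ?_⟩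
        · simpa using h2 (Fin.succ_lt_succ_iff.2 hij)
        · simpa using h2 (Fin.succ_pos i)
      · rintro ⟨⟨h1, h2⟩, h3⟩
        refine ⟨⟨?_, ?_⟩, ?_⟩
        · intro i; cases i using Fin.cases <;> simp [hb, h1]
        · intro i j hij
          cases j using Fin.cases with
          | zero => simp at hij
          | succ j =>
            cases i using Fin.cases with
            | zero => simpa using h3 j
            | succ i => simpa using h2 (Fin.succ_lt_succ_iff.1 hij)
        · intro i
          cases i using Fin.cases with
          | zero => simpa using hPb
          | succ i => simpa using hP _ _ (h3 i) hPb
    simp only [Fin.consEquiv, Equiv.coe_fn_mk, key]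
    split_ifs
    · rw [Fin.prod_univ_succ]; simp
    · simp
  · simp only [ENNReal.tsum_eq_zero]
    intro g
    rw [if_neg]
    rintro ⟨-, h⟩
    exact hPb (by simpa using h 0)

lemma H_zero (s : ℕ → ℕ) (P : ℕ → Prop) : H 0 s P = 1 := by
  unfold H
  rw [tsum_eq_single default (fun b hb => absurd (Subsingleton.elim _ _) hb)]
  simp [StrictAnti]

lemma ite_d (a b : ℕ) (x : ℝ≥0∞) : (if a < b then x else 0) = d a b * x := by
  unfold d; split_ifs <;> simp

open Classical in
lemma H_A (n : ℕ) (P : ℕ → Prop) (h0 : P 0) (hP : ∀ a b, a < b → P b → P a) :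
    H n (fun _ => 3) P = ∑' m, if P m then A n m else 0 := by
  induction n generalizing P with
  | zero =>
    rw [H_zero, tsum_eq_single 0]
    · simp [A, h0]
    · intro b hb; simp [A, hb]
  | succ n ih =>
    rw [H_succ _ _ _ (by norm_num) hP]
    refine tsum_congr fun b => ?_
    rcases Nat.eq_zero_or_pos b with rfl | hb
    · simp [v_zero, A]
    rw [ih _ hb (fun a b h h' => h.trans h')]
    simp only [A]
    congr 2
    refine tsum_congr fun a => ?_
    rw [← ite_d]
    simp only [gt_iff_lt]

open Classical in
lemma H_B (n : ℕ) (P : ℕ → Prop) (h0 : P 0) (hP : ∀ a b, a < b → P b → P a) :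
    H (2 * n) (fun i => if i % 2 = 0 then 2 else 1) P = ∑' m, if P m then B n m else 0 := by
  induction n generalizing P with
  | zero =>
    rw [H_zero, tsum_eq_single 0]
    · simp [B, h0]
    · intro b hb; simp [B, hb]
  | succ n ih =>
    rw [show 2 * (n + 1) = 2 * n + 1 + 1 by ring, H_succ _ _ _ (by norm_num) hP]
    refine tsum_congr fun b => ?_
    rcases Nat.eq_zero_or_pos b with rfl | hb
    · simp [v_zero, B]
    rw [H_succ _ _ _ (by norm_num) (fun a b h h' => h.trans h')]
    simp only [B]
    have : (fun i => if (i + 1 + 1) % 2 = 0 then 2 else 1) = (fun i => if i % 2 = 0 then 2 else 1) := by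
      funext i
      simp [Nat.add_assoc]
    rw [this]
    congr 2
    refine tsum_congr fun p => ?_
    rw [← ite_d]
    rcases Nat.eq_zero_or_pos p with rfl | hp
    · simp [v_zero]
    rw [ih _ hp (fun a b h h' => h.trans h')]
    simp only [← ite_d]
    norm_num

lemma mzv_eq (r : ℕ) (s : ℕ → ℕ) :
    mzv (fun i : Fin r => s i) = (H r s (fun _ => True)).toReal := by
  classical
  unfold mzv H
  have e : ∀ f : Fin r → ℕ, (∏ i : Fin r, (1 : ℝ) / (f i : ℝ) ^ (s i))
      = (∏ i : Fin r, v (f i) ^ s i).toReal := by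
    intro f
    rw [ENNReal.toReal_prod]
    refine Finset.prod_congr rfl fun i _ => ?_
    rw [ENNReal.toReal_pow, v, ENNReal.toReal_ofReal (by positivity), one_div_pow]
  have hfin : ∀ f : Fin r → ℕ, (∏ i : Fin r, v (f i) ^ s i) ≠ ⊤ := by
    intro f
    refine ENNReal.prod_ne_top fun i _ => ENNReal.pow_ne_top ENNReal.ofReal_ne_top
  simp_rw [e]
  rw [← ENNReal.tsum_toReal_eq (fun k => hfin _)]
  congr 1
  have := tsum_subtype {f : Fin r → ℕ | (∀ i, 0 < f i) ∧ StrictAnti f}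
    (fun f => ∏ i : Fin r, v (f i) ^ s i)
  refine this.trans (tsum_congr fun f => ?_)
  simp [Set.indicator_apply]

end MZVaux

/-- For every nonnegative integer `n`, `ζ({3}ₙ) = ζ({2,1}ₙ)`. -/
theorem stmt_9 (n : ℕ) :
    mzv (fun _ : Fin n => 3) =
      mzv (fun i : Fin (2 * n) => if (i : ℕ) % 2 = 0 then 2 else 1) := by
  rw [MZVaux.mzv_eq n (fun _ => 3), MZVaux.mzv_eq (2 * n) (fun i => if i % 2 = 0 then 2 else 1),
    MZVaux.H_A n _ trivial (fun _ _ _ _ => trivial), MZVaux.H_B n _ trivial (fun _ _ _ _ => trivial)]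
  simp [MZVaux.sum_A_eq_sum_B]
end

section
/- (Zagier's identity) For every nonnegative integer n, ζ({3,1}ₙ) = 2π^{4n}/(4n+2)!. -/
open scoped BigOperators Real

namespace Zag

/-- coefficients of the polylogarithm generating series -/
noncomputable def y : ℕ → ℕ → ℝ
  | 0, m => if m = 0 then 1 else 0
  | n + 1, m => 1 / (m : ℝ) ^ 3 * ∑ k ∈ Finset.range m, 1 / (k : ℝ) * ∑ l ∈ Finset.range k, y n l

lemma y_nonneg (n m : ℕ) : 0 ≤ y n m := by
  induction n generalizing m with
  | zero => unfold y; split_ifs <;> norm_num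
  | succ n ih =>
    unfold y
    refine mul_nonneg (by positivity) (Finset.sum_nonneg fun k _ => mul_nonneg (by positivity)
      (Finset.sum_nonneg fun l _ => ih l))

/-- partial products -/
noncomputable def p (w : ℂ) (m : ℕ) : ℂ := ∏ j ∈ Finset.range m, (1 - w / ((j : ℂ) + 1) ^ 2)

/-- hypergeometric coefficients -/
noncomputable def c (w : ℂ) : ℕ → ℂ
  | 0 => 1
  | m + 1 => -w / ((m : ℂ) + 1) ^ 2 * p w m

lemma c_rec (w : ℂ) (m : ℕ) : ((m : ℂ) + 1) ^ 2 * c w (m + 1) = ((m : ℂ) ^ 2 - w) * c w m := by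
  have h1 : ∀ k : ℕ, ((k : ℂ) + 1) ≠ 0 := fun k => Nat.cast_add_one_ne_zero k
  cases m with
  | zero => simp [c, p]
  | succ m =>
    have e1 := h1 m
    have e2 := h1 (m + 1)
    simp only [c, p, Finset.prod_range_succ]
    push_cast at *
    field_simp

lemma sum_c (w : ℂ) (m : ℕ) : ∑ k ∈ Finset.range (m + 1), c w k = p w m := by
  induction m with
  | zero => simp [c, p]
  | succ m ih =>
    rw [Finset.sum_range_succ, ih]
    simp only [c, p, Finset.prod_range_succ]
    ring

open PowerSeries in
lemma ode (w : ℂ) : (1 - X) * d⁄dX ℂ (X * d⁄dX ℂ (mk (c w))) = - (C w) * mk (c w) := by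
  ext m
  rw [sub_mul, one_mul, neg_mul, map_sub, map_neg, coeff_C_mul, coeff_mk, coeff_derivative,
    coeff_succ_X_mul, coeff_derivative, coeff_mk]
  have := c_rec w m
  cases m with
  | zero => simp at *; linear_combination this
  | succ m =>
    rw [coeff_succ_X_mul, coeff_derivative, coeff_succ_X_mul, coeff_derivative, coeff_mk]
    push_cast at *
    linear_combination this

/-- Cauchy product coefficients -/
noncomputable def P (w : ℂ) (m : ℕ) : ℂ :=
  ∑ q ∈ Finset.HasAntidiagonal.antidiagonal m, c w q.1 * c (-w) q.2

open PowerSeries in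
lemma coeff_of_ode (V G : PowerSeries ℂ) (h : (1 - X) * d⁄dX ℂ V = G) (m : ℕ) :
    (m : ℂ) * coeff m V = ∑ l ∈ Finset.range m, coeff l G := by
  induction m with
  | zero => simp
  | succ m ih =>
    rw [Finset.sum_range_succ, ← ih, ← h, sub_mul, one_mul, map_sub, coeff_derivative]
    cases m with
    | zero => simp
    | succ m =>
      rw [coeff_succ_X_mul, coeff_derivative]
      push_cast
      ring

open PowerSeries in
lemma P_rec (w : ℂ) (m : ℕ) : (m : ℂ) ^ 3 * P w m = -4 * w ^ 2 *
    ∑ k ∈ Finset.range m, 1 / (k : ℂ) * ∑ l ∈ Finset.range k, P w l := by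
  set F1 := mk (c w) with hF1
  set F2 := mk (c (-w)) with hF2
  have hP : ∀ m, P w m = coeff m (F1 * F2) := by
    intro m
    simp [P, coeff_mul, hF1, hF2]
  have o1 := ode w
  have o2 := ode (-w)
  rw [← hF1] at o1
  rw [← hF2] at o2
  have hC : (C (-w) : PowerSeries ℂ) = - C w := map_neg _ _
  rw [hC, neg_neg] at o2
  set W : PowerSeries ℂ := C w with hWd
  have hW : d⁄dX ℂ W = 0 := derivative_C
  have dm : ∀ f g : PowerSeries ℂ, d⁄dX ℂ (f * g) = f * d⁄dX ℂ g + g * d⁄dX ℂ f := fun f g => by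
    rw [Derivation.leibniz]; rfl
  set T1 := X * d⁄dX ℂ F1 with hT1
  set T2 := X * d⁄dX ℂ F2 with hT2
  clear_value T1 T2
  have hne : (1 - X : PowerSeries ℂ) ≠ 0 := by
    intro h
    have := congrArg (coeff 0) h
    simp at this
  have hU : X * d⁄dX ℂ (X * d⁄dX ℂ (F1 * F2)) = 2 * T1 * T2 := by
    have : X * d⁄dX ℂ (F1 * F2) = T1 * F2 + F1 * T2 := by
      rw [dm, hT1, hT2]; ring
    rw [this, map_add, dm T1 F2, dm F1 T2]
    apply mul_left_cancel₀ hne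
    linear_combination X * F2 * o1 + X * F1 * o2 - (1 - X) * T1 * hT2 - (1 - X) * T2 * hT1
  set V := 2 * W * (F2 * T1 - F1 * T2) with hV
  have d2 : d⁄dX ℂ (2 : PowerSeries ℂ) = 0 := by
    have := (d⁄dX ℂ).map_natCast 2
    simpa using this
  have hUV : (1 - X) * d⁄dX ℂ (2 * T1 * T2) = V := by
    rw [dm (2 * T1) T2, dm 2 T1, d2, hV]
    linear_combination 2 * T2 * o1 + 2 * T1 * o2
  have hVG : (1 - X) * d⁄dX ℂ V = C (-4 * w ^ 2) * (F1 * F2) := by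
    have e : (C (-4 * w ^ 2) : PowerSeries ℂ) = - 4 * W ^ 2 := by
      have e4 : (C (4 : ℂ) : PowerSeries ℂ) = 4 := map_ofNat _ 4
      simp [hWd, e4]
    rw [e, hV, dm (2 * W), dm 2 W, d2, hW, map_sub, dm F2 T1, dm F1 T2]
    linear_combination 2 * W * F2 * o1 - 2 * W * F1 * o2 +
      2 * W * (1 - X) * d⁄dX ℂ F2 * hT1 - 2 * W * (1 - X) * d⁄dX ℂ F1 * hT2
  have hV0 : coeff 0 V = 0 := by
    simp [hV, hT1, hT2]
  have h1 := coeff_of_ode _ _ hUV m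
  rw [← hU] at h1
  have hVk : ∀ k, coeff k V = -4 * w ^ 2 * (1 / (k : ℂ) * ∑ l ∈ Finset.range k, P w l) := by
    intro k
    have h2 := coeff_of_ode _ _ hVG k
    rcases Nat.eq_zero_or_pos k with rfl | hk
    · rw [hV0]; simp
    · have : (k : ℂ) ≠ 0 := by exact_mod_cast hk.ne'
      simp only [coeff_C_mul, ← hP, ← Finset.mul_sum] at h2
      field_simp
      linear_combination h2
  rw [Finset.mul_sum, ← Finset.sum_congr rfl (fun k _ => hVk k), ← h1]
  cases m with
  | zero => simp
  | succ m =>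
    rw [coeff_succ_X_mul, coeff_derivative, coeff_succ_X_mul, coeff_derivative, hP]
    push_cast
    ring

lemma P_zero (w : ℂ) : P w 0 = 1 := by simp [P, c]

lemma P_eq (w : ℂ) (x : ℝ) (hx : (x : ℂ) = -4 * w ^ 2) (m : ℕ) : ∀ M, m < M →
    P w m = ((∑ n ∈ Finset.range M, x ^ n * y n m : ℝ) : ℂ) := by
  induction m using Nat.strong_induction_on with
  | _ m ih =>
    intro M hM
    obtain ⟨M, rfl⟩ : ∃ M', M = M' + 1 := ⟨M - 1, by omega⟩
    rw [Finset.sum_range_succ']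
    rcases Nat.eq_zero_or_pos m with rfl | hm
    · simp [P_zero, y]
    · have hm' : (m : ℂ) ≠ 0 := by exact_mod_cast hm.ne'
      have h := P_rec w m
      have e : ∑ k ∈ Finset.range m, 1 / (k : ℂ) * ∑ l ∈ Finset.range k, P w l =
          ((∑ n ∈ Finset.range M, x ^ n *
            ∑ k ∈ Finset.range m, 1 / (k : ℝ) * ∑ l ∈ Finset.range k, y n l : ℝ) : ℂ) := by
        simp only [Finset.mul_sum]
        rw [Finset.sum_comm]
        push_cast
        refine Finset.sum_congr rfl fun k hk => ?_
        rw [Finset.sum_comm]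
        refine Finset.sum_congr rfl fun l hl => ?_
        rw [Finset.mem_range] at hk hl
        rw [ih l (by omega) M (by omega)]
        push_cast
        rw [Finset.mul_sum]
        refine Finset.sum_congr rfl fun n _ => ?_
        ring
      rw [e, ← hx] at h
      have e2 : ∑ k ∈ Finset.range M, x ^ (k + 1) * y (k + 1) m + x ^ 0 * y 0 m =
          x / (m : ℝ) ^ 3 * (∑ n ∈ Finset.range M, x ^ n *
            ∑ k ∈ Finset.range m, 1 / (k : ℝ) * ∑ l ∈ Finset.range k, y n l) := by
        have : y 0 m = 0 := by simp [y, hm.ne']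
        rw [this, mul_zero, add_zero, Finset.mul_sum]
        refine Finset.sum_congr rfl fun n _ => ?_
        rw [y]
        ring
      rw [e2, Complex.ofReal_mul]
      have hm3 : (m : ℂ) ^ 3 ≠ 0 := pow_ne_zero _ hm'
      rw [Complex.ofReal_div, Complex.ofReal_pow, Complex.ofReal_natCast, div_mul_eq_mul_div,
        eq_div_iff hm3, ← h]
      ring

lemma tendsto_p (z : ℂ) (hz : z ≠ 0) :
    Filter.Tendsto (p (z ^ 2)) Filter.atTop (nhds (Complex.sin (π * z) / (π * z))) := by
  have h := Complex.tendsto_euler_sin_prod z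
  have hpi : (π : ℂ) * z ≠ 0 := mul_ne_zero (by exact_mod_cast Real.pi_ne_zero) hz
  have := h.div_const ((π : ℂ) * z)
  refine this.congr fun n => ?_
  rw [mul_div_cancel_left₀ _ hpi]
  rfl

lemma summable_c (z : ℂ) (hz : z ≠ 0) : Summable fun n => ‖c (z ^ 2) n‖ := by
  obtain ⟨B, hB⟩ := (tendsto_p z hz).norm.bddAbove_range
  rw [← summable_nat_add_iff 1]
  have hs : Summable fun n : ℕ => ‖z ^ 2‖ * B * (1 / ((n : ℝ) + 1) ^ 2) := by
    apply Summable.mul_left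
    have := (summable_nat_add_iff 1).2 (Real.summable_one_div_nat_pow.2 one_lt_two)
    simpa using this
  refine Summable.of_nonneg_of_le (fun _ => norm_nonneg _) (fun n => ?_) hs
  have hb : ‖p (z ^ 2) n‖ ≤ B := hB ⟨n, rfl⟩
  have e : ‖((n : ℂ) + 1) ^ 2‖ = ((n : ℝ) + 1) ^ 2 := by
    rw [norm_pow]
    congr 1
    have := Complex.norm_natCast (n + 1)
    push_cast at this
    exact this
  simp only [c]
  rw [norm_mul, norm_div, norm_neg, e]
  calc ‖z ^ 2‖ / ((n : ℝ) + 1) ^ 2 * ‖p (z ^ 2) n‖ ≤ ‖z ^ 2‖ / ((n : ℝ) + 1) ^ 2 * B := by gcongr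
    _ = _ := by ring

lemma tsum_c (z : ℂ) (hz : z ≠ 0) : ∑' n, c (z ^ 2) n = Complex.sin (π * z) / (π * z) := by
  have h := (summable_c z hz).of_norm.hasSum.tendsto_sum_nat
  have h2 := (Filter.tendsto_add_atTop_iff_nat 1).2 h
  refine tendsto_nhds_unique h2 ((tendsto_p z hz).congr fun n => (sum_c _ n).symm)

lemma hasSum_P (t : ℝ) (ht : 0 < t) :
    HasSum (P (Complex.I * t ^ 2 / 2)) (((Real.cosh (π * t) - Real.cos (π * t)) / (π * t) ^ 2 : ℝ) : ℂ) := by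
  set z : ℂ := (1 + Complex.I) * t / 2 with hz
  have ht' : (t : ℂ) ≠ 0 := by exact_mod_cast ht.ne'
  have hI := Complex.I_sq
  have h1I : (1 + Complex.I) ≠ 0 := by
    intro h
    have := congrArg Complex.re h
    simp at this
  have hz0 : z ≠ 0 := by
    rw [hz]
    exact div_ne_zero (mul_ne_zero h1I ht') two_ne_zero
  have hz1 : Complex.I * z ≠ 0 := mul_ne_zero Complex.I_ne_zero hz0
  have hw : Complex.I * t ^ 2 / 2 = z ^ 2 := by
    rw [hz]; linear_combination (-(t:ℂ)^2/4) * hI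
  have hw' : - (Complex.I * t ^ 2 / 2) = (Complex.I * z) ^ 2 := by
    rw [mul_pow, hI, hw]; ring
  have s1 := summable_c z hz0
  have s2 := summable_c _ hz1
  have hs := (summable_norm_sum_mul_antidiagonal_of_summable_norm s1 s2).of_norm
  have hv := tsum_mul_tsum_eq_tsum_sum_antidiagonal_of_summable_norm s1 s2
  have hPe : P (Complex.I * t ^ 2 / 2) = fun n => ∑ kl ∈ Finset.HasAntidiagonal.antidiagonal n,
      c (z ^ 2) kl.1 * c ((Complex.I * z) ^ 2) kl.2 := by
    funext n
    rw [P, hw', hw]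
  rw [hPe]
  suffices hval : (((Real.cosh (π * t) - Real.cos (π * t)) / (π * t) ^ 2 : ℝ) : ℂ) =
      ∑' n : ℕ, ∑ kl ∈ Finset.HasAntidiagonal.antidiagonal n,
        c (z ^ 2) kl.1 * c ((Complex.I * z) ^ 2) kl.2 by
    rw [hval]
    exact hs.hasSum
  rw [← hv, tsum_c z hz0, tsum_c _ hz1]
  have hpi : (π : ℂ) ≠ 0 := by exact_mod_cast Real.pi_ne_zero
  have a1 := Complex.cos_sub (π * z) (π * (Complex.I * z))
  have a2 := Complex.cos_add (π * z) (π * (Complex.I * z))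
  have b1 : π * z - π * (Complex.I * z) = π * t := by
    rw [hz]; linear_combination (-(π:ℂ) * t/2) * hI
  have b2 : π * z + π * (Complex.I * z) = (π * t) * Complex.I := by
    rw [hz]; linear_combination ((π:ℂ) * t/2) * hI
  rw [b1] at a1
  rw [b2, Complex.cos_mul_I] at a2
  have hden : (π * z) * (π * (Complex.I * z)) = - (π * t) ^ 2 / 2 := by
    rw [hz]; linear_combination (π:ℂ) ^2 * t^2 / 4 * (2 + Complex.I) * hI
  rw [div_mul_div_comm, hden]
  push_cast
  generalize Complex.sin (π * (Complex.I * z)) = q at *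
  field_simp
  linear_combination a2 - a1

lemma hasSum_target (t : ℝ) (ht : 0 < t) :
    HasSum (fun n : ℕ => 2 * π ^ (4 * n) / (Nat.factorial (4 * n + 2)) * (t ^ 4) ^ n)
      ((Real.cosh (π * t) - Real.cos (π * t)) / (π * t) ^ 2) := by
  have h := ((Real.hasSum_cosh (π * t)).sub (Real.hasSum_cos (π * t))).div_const ((π * t) ^ 2)
  have hinj : Function.Injective (fun n : ℕ => 2 * n + 1) := fun a b h => by
    have h' : 2 * a + 1 = 2 * b + 1 := h
    omega
  rw [← hinj.hasSum_iff] at h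
  · refine h.congr_fun ?_
    intro n
    have : π * t ≠ 0 := mul_ne_zero Real.pi_ne_zero ht.ne'
    simp only [Function.comp_apply]
    have e : 2 * (2 * n + 1) = 4 * n + 2 := by ring
    have e2 : (-1 : ℝ) ^ (2 * n + 1) = -1 := by rw [pow_succ, pow_mul]; simp
    rw [e, e2, pow_add (π * t), mul_pow π t (4 * n), ← pow_mul]
    field_simp
    ring
  · intro k hk
    have : Even k := by
      by_contra hc
      rw [Nat.not_even_iff_odd] at hc
      obtain ⟨r, hr⟩ := hc
      exact hk ⟨r, hr.symm⟩
    simp [this.neg_one_pow]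

lemma hasSum_y (x : ℝ) (hx : 0 < x) : ∃ L : ℝ,
    HasSum (fun q : ℕ × ℕ => x ^ q.2 * y q.2 q.1) L ∧
    HasSum (fun n : ℕ => 2 * π ^ (4 * n) / (Nat.factorial (4 * n + 2)) * x ^ n) L := by
  obtain ⟨t, ht, rfl⟩ : ∃ t : ℝ, 0 < t ∧ t ^ 4 = x := by
    refine ⟨√√x, by positivity, ?_⟩
    rw [show (4:ℕ) = 2 * 2 from rfl, pow_mul, Real.sq_sqrt (by positivity), Real.sq_sqrt hx.le]
  refine ⟨_, ?_, hasSum_target t ht⟩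
  have hP := hasSum_P t ht
  set L := (Real.cosh (π * t) - Real.cos (π * t)) / (π * t) ^ 2
  set w : ℂ := Complex.I * t ^ 2 / 2 with hw
  have hxw : ((t ^ 4 : ℝ) : ℂ) = -4 * w ^ 2 := by
    rw [hw]; push_cast; linear_combination (t:ℂ)^4 * Complex.I_sq
  have hin : ∀ m, HasSum (fun n => (t ^ 4) ^ n * y n m) (P w m).re := by
    intro m
    rw [hasSum_iff_tendsto_nat_of_nonneg (fun n => mul_nonneg (by positivity) (y_nonneg _ _))]
    refine tendsto_const_nhds.congr' ?_
    filter_upwards [Filter.eventually_gt_atTop m] with M hM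
    rw [P_eq w _ hxw m M hM, Complex.ofReal_re]
  have hre : HasSum (fun m => (P w m).re) L := by
    have := Complex.hasSum_re hP
    simpa using this
  have hsum : Summable (fun q : ℕ × ℕ => (t ^ 4) ^ q.2 * y q.2 q.1) := by
    rw [summable_prod_of_nonneg (fun q => mul_nonneg (by positivity) (y_nonneg _ _))]
    refine ⟨fun m => (hin m).summable, ?_⟩
    simp only [fun m => (hin m).tsum_eq]
    exact hre.summable
  have := hsum.hasSum.prod_fiberwise hin
  rw [this.unique hre] at *
  have h2 := hsum.hasSum
  rwa [(h2.prod_fiberwise hin).unique hre] at h2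

lemma coeff_zero (d : ℕ → ℝ) (h : ∀ x : ℝ, 0 < x → HasSum (fun n => d n * x ^ n) 0) (n : ℕ) :
    d n = 0 := by
  induction n using Nat.strong_induction_on with
  | _ n ih =>
    have hs : Summable fun k => |d (k + (n + 1))| := by
      have := (summable_nat_add_iff (n + 1)).2 (h 1 one_pos).summable
      simpa using this.abs
    set B := ∑' k, |d (k + (n + 1))| with hB
    have key : ∀ x : ℝ, 0 < x → x ≤ 1 → |d n| ≤ x * B := by
      intro x hx hx1
      have h1 := (hasSum_nat_add_iff' (n + 1)).2 (h x hx)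
      rw [Finset.sum_range_succ, Finset.sum_eq_zero (fun i hi => by
        rw [ih i (Finset.mem_range.1 hi), zero_mul])] at h1
      have h2 := h1.div_const (x ^ n)
      have h3 : HasSum (fun k => d (k + (n + 1)) * x ^ (k + 1)) (- d n) := by
        have hxn : x ^ n ≠ 0 := by positivity
        have e1 : (fun k => d (k + (n + 1)) * x ^ (k + 1)) =
            fun k => d (k + (n + 1)) * x ^ (k + (n + 1)) / x ^ n := by
          funext k
          rw [eq_div_iff hxn]
          ring
        have e2 : - d n = (0 - (0 + d n * x ^ n)) / x ^ n := by
          rw [eq_div_iff hxn]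
          ring
        rw [e1, e2]
        exact h2
      rw [← abs_neg, ← h3.tsum_eq, hB, ← tsum_mul_left]
      have h5 : ∀ k, |d (k + (n + 1)) * x ^ (k + 1)| ≤ x * |d (k + (n + 1))| := by
        intro k
        rw [abs_mul, abs_of_pos (pow_pos hx _), mul_comm]
        gcongr
        rw [pow_succ]
        exact mul_le_of_le_one_left hx.le (pow_le_one₀ hx.le hx1)
      have h4 := tsum_of_norm_bounded (f := fun k => d (k + (n + 1)) * x ^ (k + 1)) (hs.mul_left x).hasSum h5
      exact h4
    have hlim : Filter.Tendsto (fun x : ℝ => x * B) (nhdsWithin 0 (Set.Ioi 0)) (nhds 0) := by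
      have : Filter.Tendsto (fun x : ℝ => x * B) (nhds 0) (nhds (0 * B)) :=
        (continuous_id.mul continuous_const).tendsto 0
      rw [zero_mul] at this
      exact this.mono_left nhdsWithin_le_nhds
    have : |d n| ≤ 0 := by
      refine ge_of_tendsto hlim ?_
      filter_upwards [Ioc_mem_nhdsGT (zero_lt_one' ℝ)] with x hx
      exact key x hx.1 hx.2
    exact abs_nonpos_iff.1 this

lemma hasSum_y_n (n : ℕ) : HasSum (y n) (2 * π ^ (4 * n) / (Nat.factorial (4 * n + 2))) := by
  have hs : ∀ n, Summable (y n) := by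
    intro n
    obtain ⟨L, hL, _⟩ := hasSum_y 1 one_pos
    have := hL.summable.comp_injective (i := fun m : ℕ => (m, n)) (fun a b h => by
      simpa using h)
    simpa [Function.comp_def] using this
  have := coeff_zero (fun n => (∑' m, y n m) - 2 * π ^ (4 * n) / (Nat.factorial (4 * n + 2))) (by
    intro x hx
    obtain ⟨L, hL, h2⟩ := hasSum_y x hx
    have hL' := (Equiv.prodComm ℕ ℕ).hasSum_iff.2 hL
    have h3 := hL'.prod_fiberwise (fun n => (hs n).hasSum.mul_left (x ^ n))
    have h4 := h3.sub h2
    rw [sub_self] at h4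
    refine h4.congr_fun ?_
    intro n
    ring) n
  have e : (∑' m, y n m) = 2 * π ^ (4 * n) / (Nat.factorial (4 * n + 2)) := sub_eq_zero.1 this
  rw [← e]
  exact (hs n).hasSum

/-! ### combinatorics of truncated sums -/

/-- admissible tuples below `N` -/
noncomputable def F (r N : ℕ) : Finset (Fin r → ℕ) := by
  classical
  exact (Fintype.piFinset fun _ => Finset.range N).filter fun f => (∀ i, 0 < f i) ∧ StrictAnti f

lemma mem_F {r N : ℕ} {f : Fin r → ℕ} :
    f ∈ F r N ↔ (∀ i, f i < N) ∧ (∀ i, 0 < f i) ∧ StrictAnti f := by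
  simp [F]

lemma strictAnti_cons {r k : ℕ} {g : Fin r → ℕ} :
    StrictAnti (Fin.cons k g : Fin (r + 1) → ℕ) ↔ (∀ i, g i < k) ∧ StrictAnti g := by
  constructor
  · intro h
    refine ⟨fun i => ?_, fun i j hij => ?_⟩
    · simpa using h (Fin.succ_pos i)
    · simpa using h (Fin.succ_lt_succ_iff.2 hij)
  · rintro ⟨h1, h2⟩ i j hij
    induction j using Fin.cases with
    | zero => exact absurd hij (Fin.not_lt_zero i)
    | succ j =>
      induction i using Fin.cases with
      | zero => simpa using h1 j
      | succ i => simpa using h2 (Fin.succ_lt_succ_iff.1 hij)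

lemma sum_F (r N : ℕ) (s : Fin (r + 1) → ℕ) (hs : s 0 ≠ 0) :
    ∑ f ∈ F (r + 1) N, ∏ i, (1 : ℝ) / (f i : ℝ) ^ s i =
    ∑ k ∈ Finset.range N, 1 / (k : ℝ) ^ s 0 *
      ∑ g ∈ F r k, ∏ i, (1 : ℝ) / (g i : ℝ) ^ s i.succ := by
  have : ∑ k ∈ Finset.range N, 1 / (k : ℝ) ^ s 0 *
      ∑ g ∈ F r k, ∏ i, (1 : ℝ) / (g i : ℝ) ^ s i.succ =
      ∑ k ∈ (Finset.range N).filter (0 < ·), 1 / (k : ℝ) ^ s 0 *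
      ∑ g ∈ F r k, ∏ i, (1 : ℝ) / (g i : ℝ) ^ s i.succ := by
    symm
    apply Finset.sum_filter_of_ne
    intro k _ h
    by_contra hk
    have : k = 0 := by omega
    subst this
    simp [hs] at h
  rw [this]
  simp only [Finset.mul_sum]
  rw [Finset.sum_sigma']
  refine Finset.sum_bij' (i := fun f _ => ⟨f 0, fun i => f i.succ⟩)
    (j := fun q _ => (Fin.cons q.1 q.2 : Fin (r + 1) → ℕ)) ?_ ?_ ?_ ?_ ?_
  · intro f hf
    rw [mem_F] at hf
    obtain ⟨h1, h2, h3⟩ := hf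
    simp only [Finset.mem_sigma, Finset.mem_filter, Finset.mem_range, mem_F]
    exact ⟨⟨h1 0, h2 0⟩, fun i => h3 (Fin.succ_pos i), fun i => h2 _,
      fun i j hij => h3 (Fin.succ_lt_succ_iff.2 hij)⟩
  · rintro ⟨k, g⟩ hq
    simp only [Finset.mem_sigma, Finset.mem_filter, Finset.mem_range, mem_F] at hq
    obtain ⟨⟨h1, h2⟩, h3, h4, h5⟩ := hq
    rw [mem_F]
    refine ⟨fun i => ?_, fun i => ?_, strictAnti_cons.2 ⟨h3, h5⟩⟩
    · induction i using Fin.cases with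
      | zero => simpa using h1
      | succ i => simpa using (h3 i).trans h1
    · induction i using Fin.cases with
      | zero => simpa using h2
      | succ i => simpa using h4 i
  · intro f _
    exact Fin.cons_self_tail f
  · rintro ⟨k, g⟩ _
    simp
  · intro f _
    rw [Fin.prod_univ_succ]

/-- truncated value -/
noncomputable def Z (r N : ℕ) : ℝ :=
  ∑ f ∈ F r N, ∏ i : Fin r, (1 : ℝ) / (f i : ℝ) ^ (if (i : ℕ) % 2 = 0 then 3 else 1)

lemma Z_succ (r N : ℕ) : Z (r + 2) N = ∑ m ∈ Finset.range N, 1 / (m : ℝ) ^ 3 *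
    ∑ k ∈ Finset.range m, 1 / (k : ℝ) * Z r k := by
  unfold Z
  rw [sum_F _ _ (fun i : Fin (r + 2) => if (i : ℕ) % 2 = 0 then 3 else 1) (by simp)]
  refine Finset.sum_congr rfl fun m _ => ?_
  rw [sum_F _ _ (fun i : Fin (r + 1) => if (i.succ : ℕ) % 2 = 0 then 3 else 1) (by simp)]
  have hp : ∀ a : ℕ, (a + 1 + 1) % 2 = a % 2 := fun a => by omega
  simp only [Fin.val_succ, Fin.val_zero, hp]
  norm_num

lemma Z_eq (n N : ℕ) (hN : 0 < N) : Z (2 * n) N = ∑ m ∈ Finset.range N, y n m := by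
  induction n generalizing N with
  | zero =>
    have : F 0 N = {Fin.elim0} := by
      ext f
      rw [mem_F]
      simp [Subsingleton.elim f Fin.elim0, StrictAnti]
    simp [Z, y, hN.ne', this]
  | succ n ih =>
    rw [show 2 * (n + 1) = 2 * n + 2 by ring, Z_succ]
    refine Finset.sum_congr rfl fun m _ => ?_
    rw [y]
    congr 1
    refine Finset.sum_congr rfl fun k _ => ?_
    rcases Nat.eq_zero_or_pos k with rfl | hk
    · simp
    · rw [ih k hk]

lemma mzv_eq {r : ℕ} (s : Fin r → ℕ) (L : ℝ)
    (h : Filter.Tendsto (fun N => ∑ f ∈ F r N, ∏ i, (1 : ℝ) / (f i : ℝ) ^ s i)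
      Filter.atTop (nhds L)) : mzv s = L := by
  classical
  set φ : {f : Fin r → ℕ // (∀ i, 0 < f i) ∧ StrictAnti f} → ℝ :=
    fun k => ∏ i : Fin r, (1 : ℝ) / (k.1 i : ℝ) ^ (s i) with hφ
  set S : ℕ → Finset {f : Fin r → ℕ // (∀ i, 0 < f i) ∧ StrictAnti f} :=
    fun N => (F r N).subtype _ with hS
  have hsum : ∀ N, ∑ k ∈ S N, φ k = ∑ f ∈ F r N, ∏ i, (1 : ℝ) / (f i : ℝ) ^ s i := by
    intro N
    exact Finset.sum_subtype_of_mem (fun f : Fin r → ℕ => ∏ i, (1 : ℝ) / (f i : ℝ) ^ s i)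
      (fun f hf => (mem_F.1 hf).2)
  have hmono : Monotone S := by
    intro a b hab k hk
    simp only [hS, Finset.mem_subtype, mem_F] at hk ⊢
    exact ⟨fun i => (hk.1 i).trans_le hab, hk.2⟩
  have htend : Filter.Tendsto S Filter.atTop Filter.atTop := by
    refine Filter.tendsto_atTop_finset_of_monotone hmono fun k => ?_
    refine ⟨∑ i, k.1 i + 1, ?_⟩
    simp only [hS, Finset.mem_subtype, mem_F]
    exact ⟨fun i => Nat.lt_succ_of_le
      (Finset.single_le_sum (f := k.1) (fun _ _ => Nat.zero_le _) (Finset.mem_univ i)), k.2⟩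
  have hnn : ∀ k, 0 ≤ φ k := fun k => Finset.prod_nonneg fun i _ => by positivity
  have h' : Filter.Tendsto (fun N => ∑ k ∈ S N, φ k) Filter.atTop (nhds L) := by
    simpa only [hsum] using h
  have hm' : Monotone (fun N => ∑ k ∈ S N, φ k) := fun a b hab =>
    Finset.sum_le_sum_of_subset_of_nonneg (hmono hab) (fun k _ _ => hnn k)
  have hsm : Summable φ := by
    refine summable_of_sum_le (c := L) hnn fun u => ?_
    obtain ⟨N, hN⟩ := (htend.eventually (Filter.eventually_ge_atTop u)).exists
    exact (Finset.sum_le_sum_of_subset_of_nonneg hN (fun k _ _ => hnn k)).trans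
      (hm'.ge_of_tendsto h' N)
  exact tendsto_nhds_unique (hsm.hasSum.comp htend) (id h')

end Zag

/-- Zagier's identity: for every nonnegative integer `n`,
`ζ({3,1}ₙ) = 2π^{4n}/(4n+2)!`. -/
theorem stmt_10 (n : ℕ) :
    mzv (fun i : Fin (2 * n) => if (i : ℕ) % 2 = 0 then 3 else 1) =
      2 * π ^ (4 * n) / (Nat.factorial (4 * n + 2)) := by
  apply Zag.mzv_eq
  refine (Zag.hasSum_y_n n).tendsto_sum_nat.congr' ?_
  filter_upwards [Filter.eventually_gt_atTop 0] with N hN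
  exact (Zag.Z_eq n N hN).symm
end

section
/- For every nonzero real number x, ∑_{n=0}^∞ ζ({3,1}ₙ)·x^{4n} = (cosh(πx) − cos(πx))/(π² x²). -/
open scoped BigOperators Real

section
open scoped ENNReal
open PowerSeries in
theorem ode_main (c : ℂ) (F G : PowerSeries ℂ)
    (h1 : (1 - X) * d⁄dX ℂ (X * d⁄dX ℂ F) = -(C c * F))
    (h2 : (1 - X) * d⁄dX ℂ (X * d⁄dX ℂ G) = C c * G) :
    ∃ S : PowerSeries ℂ, constantCoeff S = 0 ∧
      (1 - X) * d⁄dX ℂ (X * d⁄dX ℂ (X * d⁄dX ℂ (F * G))) = S ∧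
      (1 - X) * d⁄dX ℂ S = C (-4 * c ^ 2) * (F * G) := by
  have hne : (1 - X : PowerSeries ℂ) ≠ 0 := by
    intro h
    have := congrArg (constantCoeff (R := ℂ)) h
    simp at this
  set D := d⁄dX ℂ with hD
  have hX : D X = 1 := by simp [hD]
  have hC : D (C c) = 0 := by simp [hD]
  have h20 : D 2 = 0 := by
    have := D.map_natCast 2
    exact_mod_cast this
  have mulD : ∀ a b : PowerSeries ℂ, D (a * b) = a * D b + b * D a := by
    intro a b; simp [Derivation.leibniz]
  have e0 : D (X * D F) * G + F * D (X * D G) = 0 := by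
    apply mul_left_cancel₀ hne
    linear_combination G * h1 + F * h2
  have e1 : X * D (X * D (F * G)) = 2 * ((X * D F) * (X * D G)) := by
    rw [mulD F G, mulD X (F * D G + G * D F)]
    have : D (F * D G + G * D F) = F * D (D G) + D G * D F + (G * D (D F) + D F * D G) := by
      rw [map_add, mulD, mulD]
    rw [this]
    rw [mulD X, mulD X, hX] at e0
    rw [hX]
    linear_combination X * e0
  have e2 : D (2 * ((X * D F) * (X * D G))) = 2 * ((X * D F) * D (X * D G) + (X * D G) * D (X * D F)) := by
    rw [mulD 2, mulD (X * D F), h20]; ring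
  refine ⟨2 * C c * (G * (X * D F) - F * (X * D G)), by simp, ?_, ?_⟩
  · rw [e1, e2]
    linear_combination 2 * (X * D F) * h2 + 2 * (X * D G) * h1
  · have : D (2 * C c * (G * (X * D F) - F * (X * D G))) =
        2 * C c * (G * D (X * D F) + (X * D F) * D G - (F * D (X * D G) + (X * D G) * D F)) := by
      rw [mulD (2 * C c), mulD 2, h20, hC, map_sub, mulD G, mulD F]; ring
    rw [this]
    have : (C (-4 * c ^ 2) : PowerSeries ℂ) = -4 * C c ^ 2 := by
      have h4 : (C (4 : ℂ) : PowerSeries ℂ) = 4 := map_ofNat C 4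
      rw [map_mul, map_neg, map_pow, h4]
    rw [this]
    linear_combination 2 * C c * G * h1 - 2 * C c * F * h2

open PowerSeries in
theorem coeff_of_ode (H K : PowerSeries ℂ) (h : (1 - X) * d⁄dX ℂ H = K) (n : ℕ) :
    (n : ℂ) * coeff n H = ∑ q ∈ Finset.range n, coeff q K := by
  induction n with
  | zero => simp
  | succ n ih =>
    rw [Finset.sum_range_succ, ← ih, ← h, sub_mul, one_mul, map_sub]
    cases n with
    | zero => simp [coeff_derivative]
    | succ n =>
      rw [coeff_succ_X_mul]
      simp only [coeff_derivative]
      push_cast; ring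

noncomputable def pA (w : ℂ) (n : ℕ) : ℂ := ∏ j ∈ Finset.range n, (1 - w / ((j : ℂ) + 1) ^ 2)
noncomputable def pf (w : ℂ) : ℕ → ℂ
  | 0 => 1
  | (k+1) => -(w / ((k : ℂ) + 1) ^ 2) * pA w k

theorem pA_succ (w : ℂ) (n : ℕ) : pA w (n+1) = pA w n * (1 - w / ((n : ℂ) + 1) ^ 2) := by
  simp [pA, Finset.prod_range_succ]

theorem sum_pf (w : ℂ) (n : ℕ) : ∑ k ∈ Finset.range (n+1), pf w k = pA w n := by
  induction n with
  | zero => simp [pf, pA]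
  | succ n ih => rw [Finset.sum_range_succ, ih, pA_succ, pf]; ring

open PowerSeries in
theorem pf_ode (w : ℂ) : (1 - X) * d⁄dX ℂ (X * d⁄dX ℂ (mk (pf w))) = -(C w * mk (pf w)) := by
  ext n
  rw [sub_mul, one_mul, map_sub, map_neg, coeff_C_mul]
  cases n with
  | zero =>
    rw [coeff_zero_X_mul]
    simp only [coeff_derivative, coeff_succ_X_mul, coeff_mk, pf, pA]
    simp
  | succ n =>
    rw [coeff_succ_X_mul]
    simp only [coeff_derivative, coeff_succ_X_mul, coeff_mk, pf, pA_succ]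
    have h1 : (n : ℂ) + 1 ≠ 0 := by exact_mod_cast n.succ_ne_zero
    have h2 : (n : ℂ) + 1 + 1 ≠ 0 := by exact_mod_cast (n+1).succ_ne_zero
    push_cast
    field_simp
    ring

theorem tendsto_pA (z : ℂ) (hz : z ≠ 0) :
    Filter.Tendsto (pA (z ^ 2)) Filter.atTop (nhds (Complex.sin (π * z) / (π * z))) := by
  have h := (Complex.tendsto_euler_sin_prod z).div_const (π * z)
  have hp : (π : ℂ) ≠ 0 := by exact_mod_cast Real.pi_ne_zero
  refine h.congr fun n => ?_
  rw [pA]; field_simp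

theorem summable_pf (z : ℂ) (hz : z ≠ 0) : Summable fun k => ‖pf (z ^ 2) k‖ := by
  obtain ⟨M, hM⟩ := (tendsto_pA z hz).norm.bddAbove_range
  rw [← summable_nat_add_iff 1]
  have hs : Summable fun k : ℕ => ‖z ^ 2‖ * M * (1 / ((k + 1 : ℕ) : ℝ) ^ 2) :=
    ((summable_nat_add_iff 1).2 (Real.summable_one_div_nat_pow.2 one_lt_two)).mul_left _
  refine hs.of_nonneg_of_le (fun _ => norm_nonneg _) fun k => ?_
  have hk : ‖pA (z ^ 2) k‖ ≤ M := hM ⟨k, rfl⟩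
  have : ‖((k : ℂ) + 1)‖ = (k : ℝ) + 1 := by
    have := Complex.norm_natCast (k + 1)
    push_cast at this; exact this
  simp only [pf, norm_mul, norm_neg, norm_div, norm_pow, this]
  push_cast
  calc _ ≤ ‖z‖ ^ 2 / ((k : ℝ) + 1) ^ 2 * M := by gcongr
    _ = _ := by ring

theorem tsum_pf (z : ℂ) (hz : z ≠ 0) : ∑' k, pf (z ^ 2) k = Complex.sin (π * z) / (π * z) := by
  have h := (summable_pf z hz).of_norm.hasSum.tendsto_sum_nat
  have h' := h.comp (Filter.tendsto_add_atTop_nat 1)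
  refine tendsto_nhds_unique h' ((tendsto_pA z hz).congr fun n => ?_)
  simp [sum_pf]

/-- the coefficients of the product -/
noncomputable def cc (x : ℝ) (m : ℕ) : ℂ :=
  ∑ kl ∈ Finset.HasAntidiagonal.antidiagonal m,
    pf (((1 + Complex.I) * x / 2) ^ 2) kl.1 * pf (((1 - Complex.I) * x / 2) ^ 2) kl.2

theorem hasSum_cc (x : ℝ) (hx : x ≠ 0) : HasSum (cc x)
    (((Real.cosh (π * x) - Real.cos (π * x)) / (π ^ 2 * x ^ 2) : ℝ) : ℂ) := by
  have hxc : (x : ℂ) ≠ 0 := by exact_mod_cast hx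
  have hp : (π : ℂ) ≠ 0 := by exact_mod_cast Real.pi_ne_zero
  have i1 : (1 + Complex.I) ≠ 0 := by intro h; simpa using congrArg Complex.re h
  have i2 : (1 - Complex.I) ≠ 0 := by intro h; simpa using congrArg Complex.re h
  set z := (1 + Complex.I) * x / 2 with hz
  set z' := (1 - Complex.I) * x / 2 with hz'
  have z0 : z ≠ 0 := div_ne_zero (mul_ne_zero i1 hxc) two_ne_zero
  have z0' : z' ≠ 0 := div_ne_zero (mul_ne_zero i2 hxc) two_ne_zero
  have s := summable_pf z z0
  have s' := summable_pf z' z0'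
  have hs : Summable (cc x) := (summable_norm_sum_mul_antidiagonal_of_summable_norm s s').of_norm
  have ht := tsum_mul_tsum_eq_tsum_sum_antidiagonal_of_summable_norm s s'
  have : ∑' m, cc x m = (((Real.cosh (π * x) - Real.cos (π * x)) / (π ^ 2 * x ^ 2) : ℝ) : ℂ) := by
    have : ∑' m, cc x m = _ := ht.symm
    rw [this, tsum_pf z z0, tsum_pf z' z0']
    have ha : (π * x : ℂ) = π * z + π * z' := by rw [hz, hz']; ring
    have hb : Complex.cosh (π * x : ℂ) = Complex.cos (π * z - π * z') := by
      rw [← Complex.cos_mul_I]; congr 1; rw [hz, hz']; ring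
    have hzz : z * z' = x ^ 2 / 2 := by
      rw [hz, hz']; linear_combination (-(x:ℂ)^2/4) * Complex.I_sq
    push_cast
    rw [hb, ha, Complex.cos_add, Complex.cos_sub]
    have : (π : ℂ) ^ 2 * x ^ 2 = 2 * (π * z) * (π * z') := by
      linear_combination (-2 * (π:ℂ)^2) * hzz
    rw [this]
    field_simp
    ring
  rw [← this]; exact hs.hasSum

theorem cc_zero (x : ℝ) : cc x 0 = 1 := by simp [cc, pf]

open PowerSeries in
theorem cc_rec (x : ℝ) (m : ℕ) (hm : 0 < m) :
    cc x m = x ^ 4 * (1 / (m : ℂ) ^ 3 * ∑ p ∈ Finset.range m, 1 / (p : ℂ) *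
      ∑ q ∈ Finset.range p, cc x q) := by
  have w1 : ((1 - Complex.I) * x / 2) ^ 2 = -(((1 + Complex.I) * x / 2) ^ 2) := by
    linear_combination ((x:ℂ)^2/2) * Complex.I_sq
  have w2 : -4 * (((1 + Complex.I) * x / 2) ^ 2) ^ 2 = (x : ℂ) ^ 4 := by
    have : ((1 + Complex.I) * x / 2) ^ 2 = Complex.I * x ^ 2 / 2 := by
      linear_combination ((x:ℂ)^2/4) * Complex.I_sq
    rw [this]; linear_combination (-(x:ℂ)^4) * Complex.I_sq
  have hc : ∀ q, coeff q (mk (pf (((1 + Complex.I) * x / 2) ^ 2)) *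
      mk (pf (((1 - Complex.I) * x / 2) ^ 2))) = cc x q := by
    intro q; simp [coeff_mul, cc]
  have h1 := pf_ode (((1 + Complex.I) * x / 2) ^ 2)
  have h2 := pf_ode (((1 - Complex.I) * x / 2) ^ 2)
  have h2' : -(C (((1 - Complex.I) * x / 2) ^ 2) * mk (pf (((1 - Complex.I) * x / 2) ^ 2)) )
    = C (((1 + Complex.I) * x / 2) ^ 2) * mk (pf (((1 - Complex.I) * x / 2) ^ 2)) := by
    nth_rewrite 1 [w1]; simp
  rw [h2'] at h2
  obtain ⟨S, hS0, hS1, hS2⟩ := ode_main _ _ _ h1 h2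
  have k1 := coeff_of_ode _ _ hS1 m
  have k2 := coeff_of_ode _ _ hS2
  rw [w2] at k2
  simp only [coeff_C_mul, hc, ← Finset.mul_sum] at k2
  have hS : ∀ p, coeff p S = x ^ 4 * (1 / (p : ℂ) * ∑ q ∈ Finset.range p, cc x q) := by
    intro p
    cases p with
    | zero => simpa using hS0
    | succ p =>
      have : ((p + 1 : ℕ) : ℂ) ≠ 0 := by exact_mod_cast p.succ_ne_zero
      field_simp
      linear_combination k2 (p+1)
  have hm0 : (m : ℂ) ≠ 0 := by exact_mod_cast hm.ne'
  simp only [hS, ← Finset.mul_sum] at k1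
  obtain ⟨m, rfl⟩ := Nat.exists_eq_succ_of_ne_zero hm.ne'
  simp only [Nat.succ_eq_add_one, coeff_succ_X_mul, coeff_derivative, hc] at k1 hm0 ⊢
  rw [mul_left_comm, ← k1]
  have h1 : (m : ℂ) + 1 ≠ 0 := by exact_mod_cast m.succ_ne_zero
  push_cast
  field_simp


open Classical in
noncomputable def TT (s : ℕ → ℕ) (r : ℕ) (M : ℕ∞) : ℝ≥0∞ :=
  ∑' f : Fin r → ℕ, if ((∀ i, 0 < f i) ∧ StrictAnti f) ∧ ∀ i, (f i : ℕ∞) < M then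
    ∏ i : Fin r, ENNReal.ofReal ((1 : ℝ) / (f i : ℝ) ^ (s i)) else 0

theorem TT_zero (s : ℕ → ℕ) (M : ℕ∞) : TT s 0 M = 1 := by
  have : StrictAnti (fun _ => 0 : Fin 0 → ℕ) := fun i => i.elim0
  rw [TT, tsum_eq_single default]
  · simp [this]
  · intro b hb; exact absurd (Subsingleton.elim _ _) hb

theorem cons_cond (r : ℕ) (p : ℕ) (f : Fin r → ℕ) (M : ℕ∞) :
    (((∀ i, 0 < (Fin.cons p f : Fin (r+1) → ℕ) i) ∧ StrictAnti (Fin.cons p f : Fin (r+1) → ℕ)) ∧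
      ∀ i, ((Fin.cons p f : Fin (r+1) → ℕ) i : ℕ∞) < M) ↔
    ((0 < p ∧ (p : ℕ∞) < M) ∧ ((∀ i, 0 < f i) ∧ StrictAnti f) ∧ ∀ i, (f i : ℕ∞) < (p : ℕ∞)) := by
  constructor
  · rintro ⟨⟨h1, h2⟩, h3⟩
    refine ⟨⟨by simpa using h1 0, by simpa using h3 0⟩, ⟨fun i => by simpa using h1 i.succ, ?_⟩, ?_⟩
    · intro i j hij
      simpa using h2 (Fin.succ_lt_succ_iff.2 hij)
    · intro i
      have := h2 (Fin.succ_pos i)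
      simp at this
      exact_mod_cast this
  · rintro ⟨⟨h1, h2⟩, ⟨h3, h4⟩, h5⟩
    refine ⟨⟨?_, ?_⟩, ?_⟩
    · intro i; refine Fin.cases ?_ (fun i => ?_) i
      · simpa using h1
      · simpa using h3 i
    · intro i j
      refine Fin.cases ?_ (fun i => ?_) i <;> refine Fin.cases ?_ (fun j => ?_) j
      · simp
      · intro _; simpa using h5 j
      · intro h; simp at h
      · intro h; simpa using h4 (Fin.succ_lt_succ_iff.1 h)
    · intro i; refine Fin.cases ?_ (fun i => ?_) i
      · simpa using h2
      · simpa using (h5 i).trans h2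

open Classical in
theorem TT_succ (s : ℕ → ℕ) (r : ℕ) (M : ℕ∞) : TT s (r+1) M =
    ∑' p : ℕ, if 0 < p ∧ (p : ℕ∞) < M then
      ENNReal.ofReal ((1 : ℝ) / (p : ℝ) ^ (s 0)) * TT (fun i => s (i+1)) r p else 0 := by
  rw [TT, ← (Fin.consEquiv (fun _ : Fin (r+1) => ℕ)).tsum_eq]
  rw [ENNReal.tsum_prod']
  refine tsum_congr fun p => ?_
  simp only [Fin.consEquiv, Equiv.coe_fn_mk, cons_cond]
  by_cases hp : 0 < p ∧ (p : ℕ∞) < M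
  · simp only [hp, true_and, and_self, if_true, TT]
    rw [← ENNReal.tsum_mul_left]
    refine tsum_congr fun f => ?_
    split_ifs
    · rw [Fin.prod_univ_succ]; simp
    · simp
  · simp [hp]

/-- exponent pattern -/
def gg (i : ℕ) : ℕ := if i % 2 = 0 then 3 else 1

theorem gg2 : (fun i => gg (i + 1 + 1)) = gg := by
  funext i; simp only [gg]; congr 2; omega

theorem mzv_eq (s : ℕ → ℕ) (r : ℕ) : mzv (fun i : Fin r => s i) = (TT s r ⊤).toReal := by
  classical
  have : TT s r ⊤ = ∑' k : {f : Fin r → ℕ // (∀ i, 0 < f i) ∧ StrictAnti f},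
      ∏ i : Fin r, ENNReal.ofReal ((1 : ℝ) / (k.1 i : ℝ) ^ (s i)) := by
    rw [TT]
    refine Eq.trans ?_ (tsum_subtype {f : Fin r → ℕ | (∀ i, 0 < f i) ∧ StrictAnti f}
      (fun f => ∏ i : Fin r, ENNReal.ofReal ((1 : ℝ) / (f i : ℝ) ^ (s i)))).symm
    refine tsum_congr fun f => ?_
    simp [Set.indicator_apply]
  rw [this, ENNReal.tsum_toReal_eq, mzv]
  · refine tsum_congr fun k => ?_
    rw [ENNReal.toReal_prod]
    refine Finset.prod_congr rfl fun i _ => ?_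
    rw [ENNReal.toReal_ofReal (by positivity)]
  · intro k
    exact ENNReal.prod_ne_top fun i _ => ENNReal.ofReal_ne_top

noncomputable def VV (x : ℝ) (M : ℕ∞) : ℝ≥0∞ :=
  ∑' n : ℕ, TT gg (2 * n) M * ENNReal.ofReal (x ^ (4 * n))

theorem tsum_fin (p : ℕ) (h : ℕ → ℝ≥0∞) :
    (∑' q : ℕ, if 0 < q ∧ (q : ℕ∞) < (p : ℕ∞) then h q else 0) =
      ∑ q ∈ Finset.range p, if 0 < q then h q else 0 := by
  rw [tsum_eq_sum (s := Finset.range p)]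
  · refine Finset.sum_congr rfl fun q hq => ?_
    have : q < p := Finset.mem_range.1 hq
    simp [this]
  · intro q hq
    have : ¬ q < p := fun h => hq (Finset.mem_range.2 h)
    simp [this]

noncomputable def ee (x : ℝ) (m : ℕ) : ℝ≥0∞ :=
  ENNReal.ofReal (x ^ 4) * (ENNReal.ofReal (1 / (m : ℝ) ^ 3) *
    ∑ p ∈ Finset.range m, if 0 < p then ENNReal.ofReal (1 / (p : ℝ)) * VV x p else 0)

open Classical in
theorem VV_rec (x : ℝ) (M : ℕ∞) :
    VV x M = 1 + ∑' m : ℕ, if 0 < m ∧ (m : ℕ∞) < M then ee x m else 0 := by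
  have key : ∀ n, TT gg (2 * (n + 1)) M = ∑' m : ℕ, if 0 < m ∧ (m : ℕ∞) < M then
      ENNReal.ofReal (1 / (m : ℝ) ^ 3) * ∑ p ∈ Finset.range m,
        (if 0 < p then ENNReal.ofReal (1 / (p : ℝ)) * TT gg (2 * n) p else 0) else 0 := by
    intro n
    rw [show 2 * (n + 1) = (2 * n + 1) + 1 by ring, TT_succ]
    refine tsum_congr fun m => ?_
    rw [TT_succ, gg2, ← tsum_fin]
    simp [gg]
  rw [VV, tsum_eq_zero_add' ENNReal.summable]
  congr 1
  · simp [TT_zero]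
  · simp only [key, ← ENNReal.tsum_mul_right]
    rw [ENNReal.tsum_comm]
    refine tsum_congr fun m => ?_
    by_cases hm : 0 < m ∧ (m : ℕ∞) < M
    · simp only [hm, and_self, if_true, ee]
      have : ∀ n : ℕ, ENNReal.ofReal (x ^ (4 * (n+1))) =
          ENNReal.ofReal (x ^ 4) * ENNReal.ofReal (x ^ (4 * n)) := by
        intro n
        rw [← ENNReal.ofReal_mul (by positivity)]; congr 1; ring
      simp only [this]
      have e : ∀ p : ℕ, (if 0 < p then ENNReal.ofReal (1 / (p : ℝ)) * VV x p else 0) =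
        ∑' n : ℕ, (if 0 < p then ENNReal.ofReal (1 / (p : ℝ)) * TT gg (2 * n) p else 0)
          * ENNReal.ofReal (x ^ (4 * n)) := by
        intro p
        split_ifs
        · simp only [mul_assoc]; rw [ENNReal.tsum_mul_left, VV]
        · simp
      simp only [e]
      rw [← Summable.tsum_finsetSum (fun _ _ => ENNReal.summable), ← ENNReal.tsum_mul_left,
        ← ENNReal.tsum_mul_left]
      refine tsum_congr fun n => ?_
      rw [← Finset.sum_mul]; ring
    · simp [hm]

theorem VV_nat (x : ℝ) (p : ℕ) (hp : 0 < p) :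
    VV x p = 1 + ∑ q ∈ Finset.range p, if 0 < q then ee x q else 0 := by
  classical
  rw [VV_rec, ← tsum_fin]

theorem ee_eq (x : ℝ) (m : ℕ) : 0 < m → ee x m ≠ ⊤ ∧ cc x m = ((ee x m).toReal : ℂ) := by
  induction m using Nat.strong_induction_on with
  | _ m ih =>
  intro hm
  have hV : ∀ p, 0 < p → p < m → VV x p ≠ ⊤ ∧
      ((VV x p).toReal : ℂ) = ∑ q ∈ Finset.range p, cc x q := by
    intro p hp hpm
    have hfin : ∀ q ∈ Finset.range p, (if 0 < q then ee x q else 0) ≠ ⊤ := by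
      intro q hq
      have := Finset.mem_range.1 hq
      split_ifs with h
      · exact (ih q (by omega) h).1
      · simp
    rw [VV_nat x p hp]
    have hs := ENNReal.sum_ne_top.2 hfin
    refine ⟨ENNReal.add_ne_top.2 ⟨ENNReal.one_ne_top, hs⟩, ?_⟩
    rw [ENNReal.toReal_add ENNReal.one_ne_top hs, ENNReal.toReal_sum hfin]
    obtain ⟨p, rfl⟩ := Nat.exists_eq_succ_of_ne_zero hp.ne'
    rw [Finset.sum_range_succ', Finset.sum_range_succ', cc_zero]
    simp only [Nat.succ_eq_add_one] at hpm
    have : ∀ q ∈ Finset.range p, cc x (q+1) = ((ee x (q+1)).toReal : ℂ) := by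
      intro q hq
      have := Finset.mem_range.1 hq
      exact (ih (q+1) (by omega) (by omega)).2
    rw [Finset.sum_congr rfl this]
    simp [add_comm]
  have hfin : ∀ p ∈ Finset.range m,
      (if 0 < p then ENNReal.ofReal (1 / (p : ℝ)) * VV x p else 0) ≠ ⊤ := by
    intro p hp
    split_ifs with h
    · exact ENNReal.mul_ne_top ENNReal.ofReal_ne_top (hV p h (Finset.mem_range.1 hp)).1
    · simp
  refine ⟨ENNReal.mul_ne_top ENNReal.ofReal_ne_top
    (ENNReal.mul_ne_top ENNReal.ofReal_ne_top (ENNReal.sum_ne_top.2 hfin)), ?_⟩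
  rw [cc_rec x m hm, ee, ENNReal.toReal_mul, ENNReal.toReal_mul, ENNReal.toReal_sum hfin,
    ENNReal.toReal_ofReal (by positivity), ENNReal.toReal_ofReal (by positivity)]
  push_cast
  congr 2
  refine Finset.sum_congr rfl fun p hp => ?_
  split_ifs with h
  · rw [ENNReal.toReal_mul, ENNReal.toReal_ofReal (by positivity), Complex.ofReal_mul,
      (hV p h (Finset.mem_range.1 hp)).2]
    simp
  · have : p = 0 := by omega
    simp [this]

theorem VV_top (x R : ℝ) (h : HasSum (cc x) (R : ℂ)) : VV x ⊤ ≠ ⊤ ∧ (VV x ⊤).toReal = R := by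
  classical
  let y : ℕ → ℝ≥0∞ := fun m => if m = 0 then 1 else ee x m
  have hy : ∀ m, y m ≠ ⊤ := by
    intro m
    by_cases hm : m = 0
    · simp [y, hm]
    · simpa [y, hm] using (ee_eq x m (by omega)).1
  have hc : ∀ m, cc x m = ((y m).toReal : ℂ) := by
    intro m
    by_cases hm : m = 0
    · simp [y, hm, cc_zero]
    · simpa [y, hm] using (ee_eq x m (by omega)).2
  have hV : VV x ⊤ = ∑' m, y m := by
    rw [VV_rec, tsum_eq_zero_add' (f := y) ENNReal.summable,
      tsum_eq_zero_add' (f := fun m : ℕ => if 0 < m ∧ (m : ℕ∞) < ⊤ then ee x m else 0)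
        ENNReal.summable]
    simp [y]
  have hR : HasSum (fun m => (y m).toReal) R := by
    have : cc x = fun m => (((y m).toReal : ℝ) : ℂ) := funext hc
    rw [this] at h
    exact_mod_cast h
  rw [hV]
  refine ⟨?_, ?_⟩
  · have : ∑' m, y m = ∑' m, ENNReal.ofReal (y m).toReal :=
      tsum_congr fun m => (ENNReal.ofReal_toReal (hy m)).symm
    rw [this, ← ENNReal.ofReal_tsum_of_nonneg (fun _ => ENNReal.toReal_nonneg) hR.summable]
    exact ENNReal.ofReal_ne_top
  · rw [ENNReal.tsum_toReal_eq hy, hR.tsum_eq]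

end

/-- For every nonzero real `x`,
`∑_{n=0}^∞ ζ({3,1}ₙ) x^{4n} = (cosh(πx) − cos(πx))/(π² x²)`. -/
theorem stmt_11 (x : ℝ) (hx : x ≠ 0) :
    ∑' n : ℕ,
        mzv (fun i : Fin (2 * n) => if (i : ℕ) % 2 = 0 then 3 else 1) * x ^ (4 * n) =
      (Real.cosh (π * x) - Real.cos (π * x)) / (π ^ 2 * x ^ 2) := by
  obtain ⟨h1, h2⟩ := VV_top x _ (hasSum_cc x hx)
  rw [← h2, VV, ENNReal.tsum_toReal_eq]
  · refine tsum_congr fun n => ?_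
    rw [ENNReal.toReal_mul, ENNReal.toReal_ofReal, ← mzv_eq]
    · rfl
    · rw [show 4 * n = 2 * (2 * n) by ring, pow_mul]; positivity
  · intro n
    exact ne_top_of_le_ne_top h1 (ENNReal.le_tsum n)
end

section
/- The quadruple sum ∑_{k>m>p>q>0} 1/(k² m p² q) equals 64 · ∑_{k>m>p>q>0} (−1)^{k} (−1)^{p}/(k² m p² q), and both equal ζ(3,3) = ∑_{n>m>0} 1/(n³ m³). -/
open scoped BigOperators

namespace Z13
section
open Finset Filter Topology

/-- Letters: `x = dt/t`, `y = dt/(1-t)`, `z = dt/(1+t)`. -/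
inductive Lt where
  | x : Lt
  | y : Lt
  | z : Lt

abbrev Word := List Lt
/-- Formal integer combinations of words. -/
abbrev Comb := List (ℤ × Word)

def ev (f : Word → ℝ) : Comb → ℝ
  | [] => 0
  | p :: l => (p.1 : ℝ) * f p.2 + ev f l

def pre (a : Lt) : Comb → Comb
  | [] => []
  | p :: l => (p.1, a :: p.2) :: pre a l

def scl (k : ℤ) : Comb → Comb
  | [] => []
  | p :: l => (k * p.1, p.2) :: scl k l

theorem ev_append (f : Word → ℝ) (c d : Comb) : ev f (c ++ d) = ev f c + ev f d := by
  induction c with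
  | nil => simp [ev]
  | cons p l ih => simp only [List.cons_append, ev, ih]; ring

theorem ev_pre (f : Word → ℝ) (a : Lt) (c : Comb) : ev f (pre a c) = ev (fun w => f (a :: w)) c := by
  induction c with
  | nil => rfl
  | cons p l ih => simp only [pre, ev, ih]

theorem ev_scl (f : Word → ℝ) (k : ℤ) (c : Comb) : ev f (scl k c) = k * ev f c := by
  induction c with
  | nil => simp [scl, ev]
  | cons p l ih => simp only [scl, ev, ih]; push_cast; ring

theorem ev_mul (f : Word → ℝ) (r : ℝ) (c : Comb) : ev (fun w => r * f w) c = r * ev f c := by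
  induction c with
  | nil => simp [ev]
  | cons p l ih => simp only [ev, ih]; ring

theorem ev_congr (f g : Word → ℝ) (c : Comb) (h : ∀ p ∈ c, f p.2 = g p.2) : ev f c = ev g c := by
  induction c with
  | nil => rfl
  | cons p l ih =>
    simp only [ev]
    rw [h p (by simp), ih (fun q hq => h q (by simp [hq]))]

/-- All words of a combination satisfy `P`. -/
def All (P : Word → Prop) (c : Comb) : Prop := ∀ p ∈ c, P p.2

theorem All.nil (P : Word → Prop) : All P [] := by intro p hp; simp at hp

theorem All.append {P : Word → Prop} {c d : Comb} (hc : All P c) (hd : All P d) : All P (c ++ d) := by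
  intro p hp
  rcases List.mem_append.1 hp with h | h
  · exact hc p h
  · exact hd p h

theorem All.pre {P Q : Word → Prop} {a : Lt} {c : Comb} (hc : All P c)
    (h : ∀ w, P w → Q (a :: w)) : All Q (pre a c) := by
  induction c with
  | nil => exact All.nil _
  | cons p l ih =>
    intro q hq
    simp only [Z13.pre, List.mem_cons] at hq
    rcases hq with rfl | hq
    · exact h _ (hc p (by simp))
    · exact ih (fun r hr => hc r (by simp [hr])) q hq

theorem All.scl {P : Word → Prop} {k : ℤ} {c : Comb} (hc : All P c) : All P (scl k c) := by
  induction c with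
  | nil => exact All.nil _
  | cons p l ih =>
    intro q hq
    simp only [Z13.scl, List.mem_cons] at hq
    rcases hq with rfl | hq
    · exact hc p (by simp)
    · exact ih (fun r hr => hc r (by simp [hr])) q hq

/-- Words not ending in `x`. -/
def ok : Word → Bool
  | [] => true
  | Lt.x :: [] => false
  | _ :: w => ok w

theorem ok_tail {a : Lt} {w : Word} (h : ok (a :: w) = true) : ok w = true := by
  cases w with
  | nil => rfl
  | cons b w => cases a <;> simpa [ok] using h

theorem ok_cons {a b : Lt} {w : Word} (h : ok (b :: w) = true) : ok (a :: b :: w) = true := by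
  cases a <;> simpa [ok] using h

/-- shuffle product -/
def shAux (a : Lt) (u : Word) (f : Word → Comb) : Word → Comb
  | [] => [(1, a :: u)]
  | b :: v => pre a (f (b :: v)) ++ pre b (shAux a u f v)

def sh : Word → Word → Comb
  | [] => fun v => [(1, v)]
  | a :: u => shAux a u (sh u)

theorem sh_cons_cons (a b : Lt) (u v : Word) :
    sh (a :: u) (b :: v) = pre a (sh u (b :: v)) ++ pre b (sh (a :: u) v) := rfl

theorem sh_nil_right (u : Word) : sh u [] = [(1, u)] := by
  cases u <;> rfl

theorem sh_ne (u v : Word) (h : u ≠ [] ∨ v ≠ []) : All (fun w => w ≠ []) (sh u v) := by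
  cases u with
  | nil =>
    intro p hp
    simp only [sh, List.mem_singleton] at hp
    subst hp
    simpa using h
  | cons a u =>
    cases v with
    | nil => intro p hp; simp only [sh_nil_right, List.mem_singleton] at hp; subst hp; simp
    | cons b v =>
      rw [sh_cons_cons]
      apply All.append
      · exact All.pre (P := fun _ => True) (fun _ _ => trivial) (by simp)
      · exact All.pre (P := fun _ => True) (fun _ _ => trivial) (by simp)

theorem sh_ok : ∀ (u v : Word), ok u = true → ok v = true → All (fun w => ok w = true) (sh u v)
  | [], v, _, hv => by
    intro p hp
    simp only [sh, List.mem_singleton] at hp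
    subst hp; exact hv
  | a :: u, [], hu, _ => by
    intro p hp; simp only [sh_nil_right, List.mem_singleton] at hp; subst hp; exact hu
  | a :: u, b :: v, hu, hv => by
    rw [sh_cons_cons]
    have h1 := sh_ok u (b :: v) (ok_tail hu) hv
    have h2 := sh_ok (a :: u) v hu (ok_tail hv)
    have n1 := sh_ne u (b :: v) (by simp)
    have n2 := sh_ne (a :: u) v (by simp)
    have key : ∀ (e : Lt) (w : Word), (ok w = true ∧ w ≠ []) → ok (e :: w) = true := by
      rintro e w ⟨h, hn⟩
      cases w with
      | nil => exact absurd rfl hn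
      | cons d w => exact ok_cons h
    apply All.append
    · exact All.pre (P := fun w => ok w = true ∧ w ≠ []) (fun p hp => ⟨h1 p hp, n1 p hp⟩) (key a)
    · exact All.pre (P := fun w => ok w = true ∧ w ≠ []) (fun p hp => ⟨h2 p hp, n2 p hp⟩) (key b)

/-- letter substitutions -/
abbrev LC := List (ℤ × Lt)

def presub : LC → Comb → Comb
  | [], _ => []
  | p :: m, c => scl p.1 (pre p.2 c) ++ presub m c

theorem presub_all {P Q : Word → Prop} (m : LC) (c : Comb) (hc : All P c)
    (h : ∀ a ∈ m, ∀ w, P w → Q (a.2 :: w)) : All Q (presub m c) := by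
  induction m with
  | nil => exact All.nil _
  | cons p m ih =>
    exact All.append (All.scl (All.pre hc (h p (by simp)))) (ih (fun a ha => h a (by simp [ha])))

def distL : Lt → LC
  | Lt.x => [(2, Lt.x)]
  | Lt.y => [(1, Lt.y), (-1, Lt.z)]
  | Lt.z => []

def dist : Word → Comb
  | [] => [(1, [])]
  | a :: w => presub (distL a) (dist w)

def dualL : Lt → LC
  | Lt.x => [(1, Lt.y), (1, Lt.z)]
  | Lt.y => [(1, Lt.x), (-1, Lt.z)]
  | Lt.z => [(1, Lt.z)]

def dualA : Comb → Word → Comb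
  | c, [] => c
  | c, a :: w => dualA (presub (dualL a) c) w

def dual (w : Word) : Comb := dualA [(1, [])] w

/-- Coefficients of multiple polylogarithms. -/
noncomputable def coef : Word → ℕ → ℝ
  | [] => fun n => if n = 0 then 1 else 0
  | Lt.x :: w => fun n => coef w n / n
  | Lt.y :: w => fun n => (∑ m ∈ range n, coef w m) / n
  | Lt.z :: w => fun n => (∑ m ∈ range n, (-1 : ℝ) ^ (n + m + 1) * coef w m) / n

theorem coef_zero {w : Word} (h : w ≠ []) : coef w 0 = 0 := by
  cases w with
  | nil => exact absurd rfl h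
  | cons a w => cases a <;> simp [coef]

abbrev Idx := List (ℕ × Bool)
abbrev IComb := List (ℤ × Idx)

def sgz : Bool → ℤ
  | false => 1
  | true => -1

def ltr : Bool → Lt
  | false => Lt.y
  | true => Lt.z

def xs : ℕ → Word → Word
  | 0, w => w
  | s + 1, w => Lt.x :: xs s w

def toWord : Bool → Idx → Word
  | _, [] => []
  | c, p :: r => xs p.1 (ltr (xor c p.2) :: toWord (xor c p.2) r)

def kap : Bool → Idx → ℤ
  | _, [] => 1
  | c, p :: r => sgz (xor c p.2) * kap (xor c p.2) r

def wd (i : Idx) : Word := toWord false i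

def ipre (a : ℕ × Bool) : IComb → IComb
  | [] => []
  | p :: l => (p.1, a :: p.2) :: ipre a l

def stAux (a : ℕ × Bool) (u : Idx) (f : Idx → IComb) : Idx → IComb
  | [] => [(1, a :: u)]
  | b :: v => ipre a (f (b :: v)) ++ (ipre b (stAux a u f v) ++
      ipre (a.1 + b.1 + 1, xor a.2 b.2) (f v))

def st : Idx → Idx → IComb
  | [] => fun v => [(1, v)]
  | a :: u => stAux a u (st u)

theorem st_cons_cons (a b : ℕ × Bool) (u v : Idx) :
    st (a :: u) (b :: v) = ipre a (st u (b :: v)) ++ (ipre b (st (a :: u) v) ++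
      ipre (a.1 + b.1 + 1, xor a.2 b.2) (st u v)) := rfl

theorem st_nil_right (u : Idx) : st u [] = [(1, u)] := by
  cases u <;> rfl

def evI (f : Idx → ℝ) : IComb → ℝ
  | [] => 0
  | p :: l => (p.1 : ℝ) * f p.2 + evI f l

theorem evI_append (f : Idx → ℝ) (c d : IComb) : evI f (c ++ d) = evI f c + evI f d := by
  induction c with
  | nil => simp [evI]
  | cons p l ih => simp only [List.cons_append, evI, ih]; ring

theorem evI_ipre (f : Idx → ℝ) (a : ℕ × Bool) (c : IComb) :
    evI f (ipre a c) = evI (fun w => f (a :: w)) c := by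
  induction c with
  | nil => rfl
  | cons p l ih => simp only [ipre, evI, ih]

theorem evI_mul (f : Idx → ℝ) (r : ℝ) (c : IComb) : evI (fun w => r * f w) c = r * evI f c := by
  induction c with
  | nil => simp [evI]
  | cons p l ih => simp only [evI, ih]; ring

theorem evI_add (f g : Idx → ℝ) (c : IComb) :
    evI (fun w => f w + g w) c = evI f c + evI g c := by
  induction c with
  | nil => simp [evI]
  | cons p l ih => simp only [evI, ih]; ring

noncomputable def tm (p : ℕ × Bool) (n : ℕ) : ℝ := (sgz p.2 : ℝ) ^ n / (n : ℝ) ^ (p.1 + 1)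

/-- Truncated sums. -/
noncomputable def Zt : Idx → ℕ → ℝ
  | [] => fun _ => 1
  | p :: r => fun n => ∑ m ∈ range n, tm p m * Zt r m

theorem sgz_xor (a b : Bool) : sgz (xor a b) = sgz a * sgz b := by
  cases a <;> cases b <;> rfl

theorem tm_mul (p q : ℕ × Bool) (n : ℕ) :
    tm p n * tm q n = tm (p.1 + q.1 + 1, xor p.2 q.2) n := by
  simp only [tm, sgz_xor]
  push_cast
  rw [div_mul_div_comm, ← mul_pow, ← pow_add]
  congr 2
  ring

theorem Zt_succ (p : ℕ × Bool) (r : Idx) (n : ℕ) :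
    Zt (p :: r) (n + 1) = Zt (p :: r) n + tm p n * Zt r n := by
  simp only [Zt, sum_range_succ]

theorem evI_Zt_ipre_succ (p : ℕ × Bool) (c : IComb) (n : ℕ) :
    evI (fun i => Zt i (n + 1)) (ipre p c) =
      evI (fun i => Zt i n) (ipre p c) + tm p n * evI (fun i => Zt i n) c := by
  rw [evI_ipre, evI_ipre, ← evI_mul, ← evI_add]
  simp only [Zt_succ]

theorem evI_Zt_ipre_zero (p : ℕ × Bool) (c : IComb) :
    evI (fun i => Zt i 0) (ipre p c) = 0 := by
  induction c with
  | nil => rfl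
  | cons q l ih => simp [ipre, evI, ih, Zt]

/-- stuffle identity for truncated sums -/
theorem Zt_mul (n : ℕ) : ∀ (u v : Idx), Zt u n * Zt v n = evI (fun i => Zt i n) (st u v) := by
  induction n with
  | zero =>
    intro u v
    cases u with
    | nil => simp [st, evI, Zt]
    | cons a u =>
      cases v with
      | nil => simp [st_nil_right, evI, Zt]
      | cons b v =>
        rw [st_cons_cons, evI_append, evI_append, evI_Zt_ipre_zero, evI_Zt_ipre_zero,
          evI_Zt_ipre_zero]
        simp [Zt]
  | succ n ih =>
    intro u v
    cases u with
    | nil => simp [st, evI, Zt]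
    | cons a u =>
      cases v with
      | nil => simp [st_nil_right, evI, Zt]
      | cons b v =>
        rw [st_cons_cons, evI_append, evI_append, evI_Zt_ipre_succ, evI_Zt_ipre_succ,
          evI_Zt_ipre_succ, ← ih, ← ih, ← ih, Zt_succ, Zt_succ, ← tm_mul]
        have h := ih (a :: u) (b :: v)
        rw [st_cons_cons, evI_append, evI_append] at h
        linear_combination h

theorem coef_xs (s : ℕ) (w : Word) (n : ℕ) : coef (xs s w) n = coef w n / (n : ℝ) ^ s := by
  induction s with
  | zero => simp [xs]
  | succ s ih => simp only [xs, coef, ih]; rw [div_div, pow_succ]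

theorem coef_ltr (d : Bool) (w : Word) (n : ℕ) :
    coef (ltr d :: w) n = (∑ m ∈ range n, (sgz d : ℝ) ^ (n + m + 1) * coef w m) / n := by
  cases d <;> simp [ltr, coef, sgz]

theorem sgz_sq (d : Bool) : (sgz d : ℝ) * sgz d = 1 := by cases d <;> simp [sgz]

theorem coef_toWord (i : Idx) : ∀ (c : Bool) (p : ℕ × Bool) (n : ℕ),
    coef (toWord c (p :: i)) n = kap c (p :: i) * (sgz c : ℝ) ^ n * (tm p n * Zt i n) := by
  induction i with
  | nil =>
    intro c p n
    simp only [toWord, coef_xs, coef_ltr, kap, Zt, tm, coef]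
    rcases Nat.eq_zero_or_pos n with rfl | hn
    · simp
    · rw [sum_eq_single 0]
      · simp only [sgz_xor]; push_cast
        simp only [add_zero]
        rw [pow_succ, mul_pow]
        field_simp
        ring
      · intro b _ hb; simp [hb]
      · intro h; simp at h; omega
  | cons q r ih =>
    intro c p n
    rw [toWord, coef_xs, coef_ltr, kap]
    have : ∀ m ∈ range n, (sgz (xor c p.2) : ℝ) ^ (n + m + 1) * coef (toWord (xor c p.2) (q :: r)) m
        = (sgz (xor c p.2) : ℝ) ^ (n + 1) * kap (xor c p.2) (q :: r) * (tm q m * Zt r m) := by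
      intro m _
      rw [ih]
      have h2 : (sgz (xor c p.2) : ℝ) ^ m * (sgz (xor c p.2) : ℝ) ^ m = 1 := by
        rw [← mul_pow, sgz_sq, one_pow]
      have h3 : (sgz (xor c p.2) : ℝ) ^ (n + m + 1) =
        (sgz (xor c p.2) : ℝ) ^ (n + 1) * (sgz (xor c p.2) : ℝ) ^ m := by ring
      rw [h3]
      linear_combination (sgz (xor c p.2) : ℝ) ^ (n + 1) * kap (xor c p.2) (q :: r) * (tm q m * Zt r m) * h2
    rw [sum_congr rfl this, ← mul_sum]
    have hZ : Zt (q :: r) n = ∑ m ∈ range n, tm q m * Zt r m := rfl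
    rw [← hZ, tm]
    rw [pow_succ (sgz (xor c p.2) : ℝ) n]
    have h4 : (sgz (xor c p.2) : ℝ) ^ n = (sgz c : ℝ) ^ n * (sgz p.2 : ℝ) ^ n := by
      rw [sgz_xor]; push_cast; rw [mul_pow]
    rw [h4]
    rcases Nat.eq_zero_or_pos n with rfl | hn
    · simp
    · push_cast; field_simp; ring

theorem kap_sq (i : Idx) : ∀ c, (kap c i : ℝ) * kap c i = 1 := by
  induction i with
  | nil => intro c; simp [kap]
  | cons p r ih =>
    intro c
    simp only [kap]; push_cast
    linear_combination (sgz (xor c p.2) : ℝ) * sgz (xor c p.2) * ih (xor c p.2) + sgz_sq (xor c p.2)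

theorem sum_coef_wd (p : ℕ × Bool) (r : Idx) (N : ℕ) :
    ∑ n ∈ range N, coef (wd (p :: r)) n = kap false (p :: r) * Zt (p :: r) N := by
  simp only [wd, coef_toWord, Zt, mul_sum]
  simp [sgz]

theorem ok_ltr (d : Bool) (w : Word) (h : ok w = true) : ok (ltr d :: w) = true := by
  cases w with
  | nil => cases d <;> rfl
  | cons a w => exact ok_cons h

theorem ok_xs (s : ℕ) (w : Word) (hw : w ≠ []) (h : ok w = true) :
    xs s w ≠ [] ∧ ok (xs s w) = true := by
  induction s with
  | zero => exact ⟨hw, h⟩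
  | succ s ih =>
    refine ⟨by simp [xs], ?_⟩
    obtain ⟨h1, h2⟩ := ih
    simp only [xs]
    cases hx : xs s w with
    | nil => exact absurd hx h1
    | cons a v => rw [hx] at h2; exact ok_cons h2

theorem ok_toWord (i : Idx) : ∀ c, ok (toWord c i) = true := by
  induction i with
  | nil => intro c; rfl
  | cons p r ih => intro c; exact (ok_xs _ _ (by simp) (ok_ltr _ _ (ih _))).2

end
end Z13

namespace Z13
section
open Finset Filter Topology

/-- `1 +` harmonic number -/
noncomputable def gh (n : ℕ) : ℝ := 1 + ∑ m ∈ range n, 1 / ((m : ℝ) + 1)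

theorem gh_mono {m n : ℕ} (h : m ≤ n) : gh m ≤ gh n := by
  unfold gh
  have : range m ⊆ range n := range_mono h
  have := sum_le_sum_of_subset_of_nonneg (f := fun m : ℕ => 1 / ((m : ℝ) + 1)) this
    (fun i _ _ => by positivity)
  linarith

theorem one_le_gh (n : ℕ) : 1 ≤ gh n := by
  unfold gh
  have : 0 ≤ ∑ m ∈ range n, 1 / ((m : ℝ) + 1) := sum_nonneg (fun i _ => by positivity)
  linarith

theorem gh_le_log (n : ℕ) : gh n ≤ 2 + Real.log n := by
  have h := harmonic_le_one_add_log n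
  have : ((harmonic n : ℚ) : ℝ) = ∑ m ∈ range n, 1 / ((m : ℝ) + 1) := by
    simp [harmonic]
  rw [this] at h
  unfold gh; linarith

theorem sum_coef_bound_aux (k n : ℕ) (c : ℕ → ℝ) (h0 : |c 0| ≤ 1)
    (h : ∀ m, |c (m + 1)| ≤ gh (m + 1) ^ k / ((m : ℝ) + 1)) :
    ∑ m ∈ range n, |c m| ≤ gh n ^ (k + 1) := by
  cases n with
  | zero => simp only [range_zero, sum_empty]; have := one_le_gh 0; positivity
  | succ n =>
    rw [sum_range_succ']
    have hg := one_le_gh (n + 1)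
    have hk : 1 ≤ gh (n + 1) ^ k := one_le_pow₀ hg
    have : ∑ m ∈ range n, |c (m + 1)| ≤ ∑ m ∈ range n, gh (n + 1) ^ k * (1 / ((m : ℝ) + 1)) := by
      apply sum_le_sum
      intro m hm
      refine (h m).trans ?_
      rw [div_eq_mul_one_div]
      have h1 := one_le_gh (m + 1)
      have : gh (m + 1) ≤ gh (n + 1) := gh_mono (by have := mem_range.1 hm; omega)
      gcongr
    rw [← mul_sum] at this
    have h2 : ∑ m ∈ range n, 1 / ((m : ℝ) + 1) ≤ gh (n + 1) - 1 := by
      have := gh_mono (Nat.le_succ n)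
      unfold gh at this ⊢
      linarith
    calc _ ≤ gh (n + 1) ^ k * (gh (n + 1) - 1) + gh (n + 1) ^ k := by
            refine add_le_add (this.trans ?_) (h0.trans hk)
            gcongr
      _ = _ := by ring

theorem abs_coef_ltr (d : Bool) (w : Word) (n : ℕ) :
    |coef (ltr d :: w) n| ≤ (∑ m ∈ range n, |coef w m|) / n := by
  rw [coef_ltr, abs_div, Nat.abs_cast]
  gcongr
  refine (abs_sum_le_sum_abs _ _).trans (sum_le_sum fun m _ => ?_)
  rw [abs_mul, abs_pow]
  cases d <;> simp [sgz]

theorem coef_bound (w : Word) : |coef w 0| ≤ 1 ∧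
    ∀ m, |coef w (m + 1)| ≤ gh (m + 1) ^ w.length / ((m : ℝ) + 1) := by
  induction w with
  | nil =>
    refine ⟨by simp [coef], fun m => ?_⟩
    simp only [coef, List.length_nil]
    simp; positivity
  | cons a w ih =>
    refine ⟨by simp [coef_zero (w := a :: w) (by simp)], fun m => ?_⟩
    have hl : ∀ d, |coef (ltr d :: w) (m + 1)| ≤ gh (m + 1) ^ (w.length + 1) / ((m : ℝ) + 1) := by
      intro d
      refine (abs_coef_ltr d w (m + 1)).trans ?_
      push_cast
      gcongr
      exact sum_coef_bound_aux _ _ _ ih.1 ih.2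
    rw [List.length_cons]
    cases a with
    | y => exact hl false
    | z => exact hl true
    | x =>
      simp only [coef]
      rw [abs_div, Nat.abs_cast]
      have h1 : |coef w (m + 1)| / ((m + 1 : ℕ) : ℝ) ≤ |coef w (m + 1)| := by
        apply div_le_self (abs_nonneg _)
        push_cast; linarith [(Nat.cast_nonneg m : (0:ℝ) ≤ m)]
      refine h1.trans ((ih.2 m).trans ?_)
      have := one_le_gh (m + 1)
      gcongr
      omega

theorem gh_pow_bound (k : ℕ) : ∃ C : ℝ, 0 < C ∧ ∀ m : ℕ, gh (m + 1) ^ k ≤ C * ((m : ℝ) + 1) ^ (1 / 2 : ℝ) := by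
  set e : ℝ := 1 / (2 * ((k : ℝ) + 1)) with he
  have he0 : 0 < e := by positivity
  refine ⟨(2 + 1 / e) ^ k, by positivity, fun m => ?_⟩
  have hx : (1 : ℝ) ≤ (m : ℝ) + 1 := by linarith [(Nat.cast_nonneg m : (0:ℝ) ≤ m)]
  have h1 : gh (m + 1) ≤ (2 + 1 / e) * ((m : ℝ) + 1) ^ e := by
    have h := gh_le_log (m + 1)
    have h2 := Real.log_le_rpow_div (x := (m : ℝ) + 1) (by linarith) he0
    push_cast at h
    have h3 : 1 ≤ ((m : ℝ) + 1) ^ e := Real.one_le_rpow hx he0.le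
    calc _ ≤ 2 + ((m : ℝ) + 1) ^ e / e := by linarith
      _ ≤ 2 * ((m : ℝ) + 1) ^ e + ((m : ℝ) + 1) ^ e / e := by linarith
      _ = _ := by ring
  have h0 := one_le_gh (m + 1)
  calc gh (m + 1) ^ k ≤ ((2 + 1 / e) * ((m : ℝ) + 1) ^ e) ^ k := by gcongr
    _ = (2 + 1 / e) ^ k * ((m : ℝ) + 1) ^ (e * k) := by
      rw [mul_pow, ← Real.rpow_natCast (((m : ℝ) + 1) ^ e), ← Real.rpow_mul (by linarith)]
    _ ≤ _ := by
      gcongr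
      rw [he, div_mul_eq_mul_div, div_le_div_iff₀ (by positivity) (by norm_num)]
      linarith

theorem gh_tendsto (k : ℕ) : Tendsto (fun m : ℕ => gh (m + 1) ^ k / ((m : ℝ) + 1)) atTop (𝓝 0) := by
  obtain ⟨C, hC, h⟩ := gh_pow_bound k
  have h1 : Tendsto (fun m : ℕ => C * ((m : ℝ) + 1) ^ (-(1 / 2) : ℝ)) atTop (𝓝 (C * 0)) := by
    apply Tendsto.const_mul
    exact (tendsto_rpow_neg_atTop (by norm_num)).comp
      (tendsto_atTop_add_const_right _ _ tendsto_natCast_atTop_atTop)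
  rw [mul_zero] at h1
  refine squeeze_zero (fun m => ?_) (fun m => ?_) h1
  · have := one_le_gh (m + 1); positivity
  · have hp : (0 : ℝ) < (m : ℝ) + 1 := by positivity
    rw [div_le_iff₀ hp]
    refine (h m).trans (le_of_eq ?_)
    nth_rewrite 3 [← Real.rpow_one ((m : ℝ) + 1)]
    rw [mul_assoc, ← Real.rpow_add hp]; norm_num

theorem gh_summable (k : ℕ) : Summable (fun m : ℕ => gh (m + 1) ^ k / ((m : ℝ) + 1) ^ 2) := by
  obtain ⟨C, hC, h⟩ := gh_pow_bound k
  have h1 : Summable (fun m : ℕ => C * ((m : ℝ) + 1) ^ (-(3 / 2) : ℝ)) := by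
    apply Summable.mul_left
    have := (summable_nat_add_iff 1).2 (Real.summable_nat_rpow (p := -(3/2)).2 (by norm_num))
    simpa using this
  refine Summable.of_nonneg_of_le (fun m => ?_) (fun m => ?_) h1
  · have := one_le_gh (m + 1); positivity
  · have hp : (0 : ℝ) < (m : ℝ) + 1 := by positivity
    rw [div_le_iff₀ (by positivity)]
    refine (h m).trans (le_of_eq ?_)
    rw [← Real.rpow_natCast ((m : ℝ) + 1) 2, mul_assoc, ← Real.rpow_add hp]; norm_num

theorem coef_tendsto (w : Word) : Tendsto (coef w) atTop (𝓝 0) := by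
  rw [← tendsto_add_atTop_iff_nat 1]
  apply squeeze_zero_norm _ (gh_tendsto w.length)
  intro m
  exact (coef_bound w).2 m

theorem coef_x_bound (w : Word) (m : ℕ) :
    |coef (Lt.x :: w) (m + 1)| ≤ gh (m + 1) ^ w.length / ((m : ℝ) + 1) ^ 2 := by
  simp only [coef]
  rw [abs_div, Nat.abs_cast, pow_two, ← div_div]
  push_cast
  gcongr
  exact (coef_bound w).2 m

theorem coef_x_summable (w : Word) : Summable (fun n => |coef (Lt.x :: w) n|) := by
  rw [← summable_nat_add_iff 1]
  exact Summable.of_nonneg_of_le (fun _ => abs_nonneg _) (coef_x_bound w) (gh_summable _)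

theorem coef_x_gh_summable (w : Word) : Summable (fun n => |coef (Lt.x :: w) n| * gh n) := by
  rw [← summable_nat_add_iff 1]
  refine Summable.of_nonneg_of_le (fun m => ?_) (fun m => ?_) (gh_summable (w.length + 1))
  · have := one_le_gh (m + 1); positivity
  · have := one_le_gh (m + 1)
    calc _ ≤ gh (m + 1) ^ w.length / ((m : ℝ) + 1) ^ 2 * gh (m + 1) := by
            gcongr; exact coef_x_bound w m
      _ = _ := by ring

theorem coef_le_one (w : Word) : ∀ n, |coef w n| ≤ 1 := by
  induction w with
  | nil => intro n; simp only [coef]; split_ifs <;> simp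
  | cons a w ih =>
    intro n
    have hl : ∀ d, |coef (ltr d :: w) n| ≤ 1 := by
      intro d
      refine (abs_coef_ltr d w n).trans ?_
      apply div_le_one_of_le₀ _ (Nat.cast_nonneg n)
      calc _ ≤ ∑ m ∈ range n, (1 : ℝ) := sum_le_sum fun m _ => ih m
        _ = _ := by simp
    cases a with
    | y => exact hl false
    | z => exact hl true
    | x =>
      simp only [coef]
      rw [abs_div, Nat.abs_cast]
      rcases Nat.eq_zero_or_pos n with rfl | hn
      · simp
      · exact (div_le_self (abs_nonneg _) (by exact_mod_cast hn)).trans (ih n)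

/-- multiple polylogarithm -/
noncomputable def L (w : Word) (t : ℝ) : ℝ := ∑' n, coef w n * t ^ n

theorem L_nil (t : ℝ) : L [] t = 1 := by
  unfold L
  rw [tsum_eq_single 0]
  · simp [coef]
  · intro n hn; simp [coef, hn]

theorem L_summable (w : Word) {t : ℝ} (ht : |t| < 1) : Summable (fun n => ‖coef w n * t ^ n‖) := by
  refine Summable.of_nonneg_of_le (fun _ => norm_nonneg _) (fun n => ?_)
    (summable_geometric_of_lt_one (abs_nonneg t) ht)
  rw [norm_mul, norm_pow, Real.norm_eq_abs, Real.norm_eq_abs]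
  calc _ ≤ 1 * |t| ^ n := by gcongr; exact coef_le_one w n
    _ = _ := one_mul _

theorem L_zero {w : Word} (h : w ≠ []) : L w 0 = 0 := by
  unfold L
  rw [tsum_eq_single 0]
  · simp [coef_zero h]
  · intro n hn; simp [hn]

theorem hasDerivAt_L_aux (w : Word) {t : ℝ} (ht : |t| < 1) :
    HasDerivAt (L w) (∑' n : ℕ, coef w n * (n * t ^ (n - 1))) t := by
  obtain ⟨r, hr1, hr2⟩ := exists_between ht
  have hr0 : 0 ≤ r := (abs_nonneg t).trans hr1.le
  have hs : Summable (fun n : ℕ => (n : ℝ) * r ^ (n - 1)) := by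
    rw [← summable_nat_add_iff 1]
    have h1 := summable_pow_mul_geometric_of_norm_lt_one 1 (r := r) (by rwa [Real.norm_of_nonneg hr0])
    have h2 := summable_geometric_of_lt_one hr0 hr2
    refine (h1.add h2).congr (fun n => ?_)
    simp; ring
  refine hasDerivAt_tsum_of_isPreconnected (t := Metric.ball 0 r) (y₀ := 0) hs Metric.isOpen_ball
    (convex_ball 0 r).isPreconnected (g := fun n y => coef w n * y ^ n)
    (g' := fun n y => coef w n * (n * y ^ (n - 1))) ?_ ?_ ?_ ?_ ?_
  · intro n y _
    exact (hasDerivAt_pow n y).const_mul _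
  · intro n y hy
    rw [mem_ball_zero_iff, Real.norm_eq_abs] at hy
    rw [norm_mul, norm_mul, norm_pow, Real.norm_eq_abs, Real.norm_eq_abs, Real.norm_eq_abs, Nat.abs_cast]
    calc _ ≤ 1 * ((n : ℝ) * r ^ (n - 1)) := by
            gcongr; exact coef_le_one w n
      _ = _ := one_mul _
  · rw [mem_ball_zero_iff, norm_zero]; exact (abs_nonneg t).trans_lt hr1
  · exact (L_summable w (t := 0) (by simp)).of_norm
  · rw [mem_ball_zero_iff]; exact hr1

noncomputable def om : Lt → ℝ → ℝ
  | Lt.x => fun t => 1 / t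
  | Lt.y => fun t => 1 / (1 - t)
  | Lt.z => fun t => 1 / (1 + t)

theorem hasDerivAt_L_ltr (d : Bool) (w : Word) {t : ℝ} (ht : |t| < 1) :
    HasDerivAt (L (ltr d :: w)) (om (ltr d) t * L w t) t := by
  convert hasDerivAt_L_aux (ltr d :: w) ht using 1
  have hd : |(sgz d : ℝ) * t| < 1 := by
    rw [abs_mul]; cases d <;> simpa [sgz] using ht
  have hom : om (ltr d) t = (1 - (sgz d : ℝ) * t)⁻¹ := by
    cases d <;> simp [om, ltr, sgz]
  rw [hom, ← tsum_geometric_of_norm_lt_one (K := ℝ) hd, mul_comm]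
  unfold L
  rw [tsum_mul_tsum_eq_tsum_sum_range_of_summable_norm (L_summable w ht)
    (by simpa using summable_geometric_of_lt_one (abs_nonneg _) hd)]
  have hs : Summable (fun n : ℕ => coef (ltr d :: w) n * (n * t ^ (n - 1))) := by
    rw [← summable_nat_add_iff 1]
    have h1 := summable_pow_mul_geometric_of_norm_lt_one 1 (r := |t|) (by simpa using ht)
    have h2 := summable_geometric_of_lt_one (abs_nonneg t) ht
    refine Summable.of_norm_bounded (h1.add h2) (fun n => ?_)
    rw [norm_mul, norm_mul, norm_pow, Real.norm_eq_abs, Real.norm_eq_abs, Real.norm_eq_abs, Nat.abs_cast]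
    calc _ ≤ 1 * (((n + 1 : ℕ) : ℝ) * |t| ^ (n + 1 - 1)) := by
            gcongr; exact coef_le_one _ _
      _ = _ := by simp; ring
  rw [hs.tsum_eq_zero_add]
  simp only [Nat.cast_zero, zero_mul, mul_zero, zero_add]
  apply tsum_congr
  intro n
  rw [coef_ltr, Nat.add_sub_cancel]
  have hn : ((n + 1 : ℕ) : ℝ) ≠ 0 := by positivity
  field_simp
  rw [sum_mul]
  apply sum_congr rfl
  intro m hm
  have hm' : m ≤ n := by have := mem_range.1 hm; omega
  obtain ⟨j, rfl⟩ := Nat.exists_eq_add_of_le hm'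
  have h2 : ((sgz d : ℝ) ^ (m + 1)) * (sgz d : ℝ) ^ (m + 1) = 1 := by
    rw [← mul_pow, sgz_sq, one_pow]
  rw [show m + j + 1 + m + 1 = j + ((m + 1) + (m + 1)) by ring, pow_add, pow_add _ (m + 1), h2,
    Nat.add_sub_cancel_left]
  ring

theorem hasDerivAt_L {a : Lt} {w : Word} (h : ok (a :: w) = true) {t : ℝ} (h0 : 0 < t) (h1 : t < 1) :
    HasDerivAt (L (a :: w)) (om a t * L w t) t := by
  have ht : |t| < 1 := by rw [abs_of_pos h0]; exact h1
  cases a with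
  | y => exact hasDerivAt_L_ltr false w ht
  | z => exact hasDerivAt_L_ltr true w ht
  | x =>
    have hw : w ≠ [] := by rintro rfl; simp [ok] at h
    convert hasDerivAt_L_aux (Lt.x :: w) ht using 1
    unfold L om
    rw [← tsum_mul_left]
    apply tsum_congr
    intro n
    cases n with
    | zero => simp [coef_zero hw]
    | succ n =>
      simp only [coef, Nat.add_sub_cancel]
      have hn : ((n + 1 : ℕ) : ℝ) ≠ 0 := by positivity
      field_simp
      ring

theorem L_cont (w : Word) {t : ℝ} (ht : |t| < 1) : ContinuousAt (L w) t :=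
  (hasDerivAt_L_aux w ht).continuousAt

theorem L_tendsto_zero {w : Word} (h : w ≠ []) : Tendsto (L w) (𝓝[>] 0) (𝓝 0) := by
  have := (L_cont w (t := 0) (by simp)).tendsto
  rw [L_zero h] at this
  exact this.mono_left nhdsWithin_le_nhds

/-- A function on `(0,1)` with vanishing derivative and limit `l` at `0` equals `l`. -/
theorem const_of_deriv {f : ℝ → ℝ} {l : ℝ} (hd : ∀ t, 0 < t → t < 1 → HasDerivAt f 0 t)
    (hl : Tendsto f (𝓝[>] 0) (𝓝 l)) {t : ℝ} (h0 : 0 < t) (h1 : t < 1) : f t = l := by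
  have hc : ∀ s, 0 < s → s < 1 → f s = f t := by
    intro s hs0 hs1
    refine isOpen_Ioo.is_const_of_deriv_eq_zero (s := Set.Ioo (0:ℝ) 1) isPreconnected_Ioo ?_ ?_ ⟨hs0, hs1⟩ ⟨h0, h1⟩
    · intro r hr
      exact (hd r hr.1 hr.2).differentiableAt.differentiableWithinAt
    · intro r hr
      exact (hd r hr.1 hr.2).deriv
  have : Tendsto f (𝓝[>] 0) (𝓝 (f t)) := by
    refine tendsto_const_nhds.congr' ?_
    filter_upwards [Ioo_mem_nhdsGT (zero_lt_one : (0:ℝ) < 1)] with s hs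
    exact (hc s hs.1 hs.2).symm
  exact tendsto_nhds_unique this hl

end
end Z13

namespace Z13
section
open Finset Filter Topology

theorem ev_tendsto {F : Filter ℝ} (f : Word → ℝ → ℝ) (g : Word → ℝ) (c : Comb)
    (h : All (fun w => Tendsto (f w) F (𝓝 (g w))) c) :
    Tendsto (fun t => ev (fun w => f w t) c) F (𝓝 (ev g c)) := by
  induction c with
  | nil => exact tendsto_const_nhds
  | cons p l ih =>
    simp only [ev]
    exact ((h p (by simp)).const_mul _).add (ih (fun q hq => h q (by simp [hq])))

theorem ev_zero (c : Comb) : ev (fun _ => 0) c = 0 := by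
  induction c with
  | nil => rfl
  | cons p l ih => simp [ev, ih]

theorem ev_hasDerivAt (f : Word → ℝ → ℝ) (g : Word → ℝ) (t : ℝ) (c : Comb)
    (h : All (fun w => HasDerivAt (f w) (g w) t) c) :
    HasDerivAt (fun s => ev (fun w => f w s) c) (ev g c) t := by
  induction c with
  | nil => exact hasDerivAt_const _ _
  | cons p l ih =>
    simp only [ev]
    exact ((h p (by simp)).const_mul _).add (ih (fun q hq => h q (by simp [hq])))

theorem ev_pre_hasDerivAt {a : Lt} {c : Comb} (h : All (fun w => ok (a :: w) = true) c) {t : ℝ}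
    (h0 : 0 < t) (h1 : t < 1) :
    HasDerivAt (fun s => ev (fun w => L w s) (pre a c)) (om a t * ev (fun w => L w t) c) t := by
  simp only [ev_pre]
  rw [← ev_mul]
  exact ev_hasDerivAt (fun w => L (a :: w)) _ t c (fun p hp => hasDerivAt_L (h p hp) h0 h1)

theorem ok_cons_of {a : Lt} {w : Word} (h : ok w = true) (hn : w ≠ []) : ok (a :: w) = true := by
  cases w with
  | nil => exact absurd rfl hn
  | cons d w => exact ok_cons h

theorem shuffle : ∀ (u v : Word), ok u = true → ok v = true → ∀ t : ℝ, 0 < t → t < 1 →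
    L u t * L v t = ev (fun w => L w t) (sh u v)
  | [], v, _, _, t, _, _ => by simp [sh, ev, L_nil]
  | a :: u, [], _, _, t, _, _ => by simp [sh_nil_right, ev, L_nil]
  | a :: u, b :: v, hu, hv, t, h0, h1 => by
    have i1 := shuffle u (b :: v) (ok_tail hu) hv
    have i2 := shuffle (a :: u) v hu (ok_tail hv)
    have o1 := sh_ok u (b :: v) (ok_tail hu) hv
    have o2 := sh_ok (a :: u) v hu (ok_tail hv)
    have n1 := sh_ne u (b :: v) (by simp)
    have n2 := sh_ne (a :: u) v (by simp)
    have key : ∀ t, 0 < t → t < 1 → HasDerivAt (fun t => L (a :: u) t * L (b :: v) t -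
        ev (fun w => L w t) (sh (a :: u) (b :: v))) 0 t := by
      intro t h0 h1
      have d1 := (hasDerivAt_L hu h0 h1).mul (hasDerivAt_L hv h0 h1)
      have d2 := (ev_pre_hasDerivAt (a := a) (fun p hp => ok_cons_of (o1 p hp) (n1 p hp)) h0 h1).add
        (ev_pre_hasDerivAt (a := b) (fun p hp => ok_cons_of (o2 p hp) (n2 p hp)) h0 h1)
      have d3 := d1.sub d2
      rw [← i1 t h0 h1, ← i2 t h0 h1] at d3
      simp only [sh_cons_cons, ev_append]
      refine d3.congr_deriv ?_
      ring
    have lim : Tendsto (fun t => L (a :: u) t * L (b :: v) t -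
        ev (fun w => L w t) (sh (a :: u) (b :: v))) (𝓝[>] 0) (𝓝 0) := by
      have l1 := (L_tendsto_zero (w := a :: u) (by simp)).mul (L_tendsto_zero (w := b :: v) (by simp))
      have l2 := ev_tendsto (F := 𝓝[>] (0:ℝ)) L (fun _ => 0) (sh (a :: u) (b :: v))
        (fun p hp => L_tendsto_zero (sh_ne (a :: u) (b :: v) (by simp) p hp))
      rw [ev_zero] at l2
      simpa using l1.sub l2
    have := const_of_deriv key lim h0 h1
    linarith

/-- generic substitution derivative -/
theorem presub_hasDerivAt (φ : ℝ → ℝ) (t φ' : ℝ) (hφ : HasDerivAt φ φ' t) (h0 : 0 < φ t) (h1 : φ t < 1)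
    (m : LC) (c : Comb) (h : ∀ a ∈ m, All (fun w => ok (a.2 :: w) = true) c) :
    HasDerivAt (fun s => ev (fun w => L w (φ s)) (presub m c))
      ((m.map fun p => (p.1 : ℝ) * om p.2 (φ t)).sum * φ' * ev (fun w => L w (φ t)) c) t := by
  induction m with
  | nil => simpa [presub, ev] using hasDerivAt_const t (0:ℝ)
  | cons p m ih =>
    have i := ih (fun a ha => h a (by simp [ha]))
    have d := (HasDerivAt.comp t (ev_pre_hasDerivAt (a := p.2) (h p (by simp)) h0 h1) hφ).const_mul (p.1 : ℝ)
    simp only [presub, ev_append, ev_scl]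
    refine (d.add i).congr_deriv ?_
    simp only [List.map_cons, List.sum_cons]
    ring

def noz : Word → Bool
  | [] => true
  | Lt.z :: _ => false
  | _ :: w => noz w

theorem presub_ne (m : LC) (c : Comb) : All (fun w => w ≠ []) (presub m c) :=
  presub_all (P := fun _ => True) m c (fun _ _ => trivial) (by simp)

theorem dist_ok : ∀ (w : Word), ok w = true → noz w = true →
    All (fun v => ok v = true) (dist w) ∧ (w ≠ [] → All (fun v => v ≠ []) (dist w))
  | [], _, _ => ⟨by intro p hp; simp only [dist, List.mem_singleton] at hp; subst hp; rfl, by simp⟩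
  | a :: w, h, hz => by
    refine ⟨?_, fun _ => presub_ne _ _⟩
    have hz' : noz w = true := by cases a <;> simp [noz] at hz <;> exact hz
    have ih := dist_ok w (ok_tail h) hz'
    by_cases hw : w = []
    · subst hw
      cases a with
      | x => simp [ok] at h
      | z => simp [noz] at hz
      | y =>
        intro p hp
        simp [dist, distL, presub, scl, pre] at hp
        rcases hp with rfl | rfl <;> rfl
    · exact presub_all (P := fun v => ok v = true ∧ v ≠ []) _ _ (fun p hp => ⟨ih.1 p hp, ih.2 hw p hp⟩)
        (fun e _ v hv => ok_cons_of hv.1 hv.2)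

theorem dist_pre_ok {a : Lt} {w : Word} (h : ok (a :: w) = true) (hz : noz (a :: w) = true) :
    ∀ e ∈ distL a, All (fun v => ok (e.2 :: v) = true) (dist w) := by
  have hz' : noz w = true := by cases a <;> simp [noz] at hz <;> exact hz
  have ih := dist_ok w (ok_tail h) hz'
  by_cases hw : w = []
  · subst hw
    intro e he p hp
    simp only [dist, List.mem_singleton] at hp
    subst hp
    cases a with
    | x => simp [ok] at h
    | z => simp [noz] at hz
    | y =>
      simp [distL] at he
      rcases he with rfl | rfl <;> rfl
  · intro e he p hp
    exact ok_cons_of (ih.1 p hp) (ih.2 hw p hp)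

theorem distribution : ∀ (w : Word), ok w = true → noz w = true → ∀ t : ℝ, 0 < t → t < 1 →
    L w (t ^ 2) = ev (fun w => L w t) (dist w)
  | [], _, _, t, _, _ => by simp [dist, ev, L_nil]
  | a :: w, h, hz, t, h0, h1 => by
    have hz' : noz w = true := by cases a <;> simp [noz] at hz <;> exact hz
    have ih := distribution w (ok_tail h) hz'
    have key : ∀ t, 0 < t → t < 1 → HasDerivAt (fun t => L (a :: w) (t ^ 2) -
        ev (fun w => L w t) (dist (a :: w))) 0 t := by
      intro t h0 h1
      have hs0 : 0 < t ^ 2 := by positivity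
      have hs1 : t ^ 2 < 1 := by nlinarith
      have d1 : HasDerivAt (fun t => L (a :: w) (t ^ 2)) _ t :=
        HasDerivAt.comp (h₂ := L (a :: w)) (h := fun t => t ^ 2) t (hasDerivAt_L h hs0 hs1) (hasDerivAt_pow 2 t)
      have d2 := presub_hasDerivAt (fun s => s) t 1 (hasDerivAt_id t) h0 h1 (distL a) (dist w)
        (dist_pre_ok h hz)
      refine (d1.sub d2).congr_deriv ?_
      rw [ih t h0 h1]
      have : om a (t ^ 2) * (2 * t) = ((distL a).map fun p => (p.1 : ℝ) * om p.2 t).sum := by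
        cases a with
        | x => simp [om, distL]; field_simp
        | y =>
          simp [om, distL]
          have e1 : 1 - t ≠ 0 := by linarith
          have e2 : 1 + t ≠ 0 := by linarith
          have e3 : 1 - t ^ 2 ≠ 0 := by linarith
          field_simp
          ring
        | z => simp [noz] at hz
      rw [← this]
      simp; ring
    have lim : Tendsto (fun t => L (a :: w) (t ^ 2) -
        ev (fun w => L w t) (dist (a :: w))) (𝓝[>] 0) (𝓝 0) := by
      have l1 : Tendsto (fun t => L (a :: w) (t ^ 2)) (𝓝[>] 0) (𝓝 0) := by
        refine (L_tendsto_zero (w := a :: w) (by simp)).comp ?_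
        refine tendsto_nhdsWithin_of_tendsto_nhds_of_eventually_within _ ?_ ?_
        · have : Tendsto (fun t : ℝ => t ^ 2) (𝓝 0) (𝓝 (0 ^ 2)) := (continuous_pow 2).tendsto 0
          rw [zero_pow two_ne_zero] at this
          exact this.mono_left nhdsWithin_le_nhds
        · filter_upwards [self_mem_nhdsWithin] with s hs
          have : (0:ℝ) < s := hs
          show (0:ℝ) < s ^ 2
          positivity
      have l2 := ev_tendsto (F := 𝓝[>] (0:ℝ)) L (fun _ => 0) (dist (a :: w))
        (fun p hp => L_tendsto_zero (presub_ne _ _ p hp))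
      rw [ev_zero] at l2
      simpa using l1.sub l2
    have := const_of_deriv key lim h0 h1
    linarith

/-- the involution -/
noncomputable def sig (t : ℝ) : ℝ := (1 - t) / (1 + t)

theorem sig_pos {t : ℝ} (h0 : 0 < t) (h1 : t < 1) : 0 < sig t := by
  unfold sig; apply div_pos <;> linarith

theorem sig_lt {t : ℝ} (h0 : 0 < t) : sig t < 1 := by
  unfold sig; rw [div_lt_one (by linarith)]; linarith

theorem sig_sig {t : ℝ} (h0 : 0 < t) : sig (sig t) = t := by
  unfold sig
  have : 1 + t ≠ 0 := by linarith
  field_simp; ring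

theorem sig_deriv {t : ℝ} (h0 : 0 < t) : HasDerivAt sig (-2 / (1 + t) ^ 2) t := by
  have : 1 + t ≠ 0 := by linarith
  have h := ((hasDerivAt_id t).const_sub 1).div ((hasDerivAt_id t).const_add 1) this
  refine h.congr_deriv ?_
  simp; ring

theorem dual_hasDerivAt {a : Lt} {c : Comb} (h : ∀ e ∈ dualL a, All (fun w => ok (e.2 :: w) = true) c)
    {t : ℝ} (h0 : 0 < t) (h1 : t < 1) :
    HasDerivAt (fun s => ev (fun w => L w (sig s)) (presub (dualL a) c))
      (-(om a t) * ev (fun w => L w (sig t)) c) t := by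
  refine (presub_hasDerivAt sig t _ (sig_deriv h0) (sig_pos h0 h1) (sig_lt h0) (dualL a) c h).congr_deriv ?_
  congr 1
  have e1 : 1 + t ≠ 0 := by linarith
  have e2 : 1 - t ≠ 0 := by linarith
  have e3 : 1 - sig t = 2 * t / (1 + t) := by unfold sig; field_simp; ring
  have e4 : 1 + sig t = 2 / (1 + t) := by unfold sig; field_simp; ring
  cases a
  · simp [dualL, om, e3, e4]; field_simp
  · simp [dualL, om, e4]; unfold sig; field_simp; ring
  · simp [dualL, om, e4]; field_simp

noncomputable def Phi : Comb → Word → ℝ → ℝ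
  | c, [] => fun t => ev (fun w => L w (sig t)) c
  | c, a :: v => fun t => ev (fun w => L w (sig t)) c * L (a :: v) t + Phi (presub (dualL a) c) v t

/-- nonempty ok words -/
def good (c : Comb) : Prop := All (fun w => ok w = true ∧ w ≠ []) c

theorem good_presub {c : Comb} (m : LC) (h : good c) : good (presub m c) :=
  presub_all (P := fun w => ok w = true ∧ w ≠ []) m c h
    (fun a _ w hw => ⟨ok_cons_of hw.1 hw.2, by simp⟩)

theorem Phi_hasDerivAt : ∀ (v : Word) (a : Lt) (c : Comb), ok v = true →
    (∀ e ∈ dualL a, All (fun w => ok (e.2 :: w) = true) c) → ∀ t : ℝ, 0 < t → t < 1 →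
    HasDerivAt (Phi (presub (dualL a) c) v) (-(om a t) * ev (fun w => L w (sig t)) c * L v t) t
  | [], a, c, _, hc, t, h0, h1 => by
    simp only [Phi, L_nil, mul_one]
    exact dual_hasDerivAt hc h0 h1
  | b :: v, a, c, hv, hc, t, h0, h1 => by
    have hg : good (presub (dualL a) c) := fun p hp =>
      ⟨presub_all (P := fun w => ∀ e ∈ dualL a, ok (e.2 :: w) = true) (Q := fun w => ok w = true) _ _
        (fun p hp e he => hc e he p hp) (fun e he w hw => hw e he) p hp, presub_ne _ _ p hp⟩
    have ih := Phi_hasDerivAt v b (presub (dualL a) c) (ok_tail hv)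
      (fun e _ p hp => ok_cons_of (hg p hp).1 (hg p hp).2) t h0 h1
    have d := ((dual_hasDerivAt hc h0 h1).mul (hasDerivAt_L hv h0 h1)).add ih
    simp only [Phi]
    refine d.congr_deriv ?_
    ring

end
end Z13

namespace Z13
section
open Finset Filter Topology

/-- words not starting with `y` -/
def nys : Word → Bool
  | [] => true
  | Lt.y :: _ => false
  | _ => true

/-- regularised value at 1 -/
noncomputable def Iv (w : Word) : ℝ := limUnder (𝓝[<] (1:ℝ)) (L w)

theorem conv_of_partial {w : Word} {l : ℝ} (h : Tendsto (fun N => ∑ n ∈ range N, coef w n) atTop (𝓝 l)) :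
    Tendsto (L w) (𝓝[<] 1) (𝓝 l) := Real.tendsto_tsum_powerSeries_nhdsWithin_lt h

theorem partial_x (w : Word) :
    Tendsto (fun N => ∑ n ∈ range N, coef (Lt.x :: w) n) atTop (𝓝 (∑' n, coef (Lt.x :: w) n)) :=
  (coef_x_summable w).of_abs.hasSum.tendsto_sum_nat

theorem coef_z_rec (w : Word) (n : ℕ) :
    coef (Lt.z :: w) (n + 1) + coef (Lt.z :: w) n = (coef w n + coef (Lt.z :: w) n) / ((n : ℝ) + 1) := by
  have h1 : ((n : ℝ) + 1) ≠ 0 := by positivity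
  have h2 : (n : ℝ) * coef (Lt.z :: w) n = ∑ m ∈ range n, (-1 : ℝ) ^ (n + m + 1) * coef w m := by
    rcases Nat.eq_zero_or_pos n with rfl | hn
    · simp
    · have : (n : ℝ) ≠ 0 := by positivity
      simp only [coef]; field_simp
  have h3 : ((n : ℝ) + 1) * coef (Lt.z :: w) (n + 1) =
      coef w n - ∑ m ∈ range n, (-1 : ℝ) ^ (n + m + 1) * coef w m := by
    simp only [coef]
    push_cast
    rw [mul_div_cancel₀ _ h1, sum_range_succ]
    have : ∀ m, (-1 : ℝ) ^ (n + 1 + m + 1) * coef w m = - ((-1 : ℝ) ^ (n + m + 1) * coef w m) := by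
      intro m; rw [show n + 1 + m + 1 = n + m + 1 + 1 by ring, pow_succ]; ring
    simp only [this, sum_neg_distrib]
    rw [show n + n + 1 = 2 * n + 1 by ring, pow_succ, pow_mul]
    simp; ring
  rw [eq_div_iff h1]
  linear_combination h3 + h2

theorem partial_z (w : Word) : ∃ l, Tendsto (fun N => ∑ n ∈ range N, coef (Lt.z :: w) n) atTop (𝓝 l) := by
  set c := coef (Lt.z :: w) with hc
  have hs : Summable (fun n => c (n + 1) + c n) := by
    rw [← summable_nat_add_iff 1]
    refine Summable.of_norm_bounded ((gh_summable (w.length + 1)).mul_left 2) (fun m => ?_)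
    rw [hc, coef_z_rec, Real.norm_eq_abs, abs_div]
    push_cast
    have g1 := one_le_gh (m + 1)
    have b1 := (coef_bound w).2 m
    have b2 := (coef_bound (Lt.z :: w)).2 m
    rw [List.length_cons] at b2
    have b3 : gh (m + 1) ^ w.length ≤ gh (m + 1) ^ (w.length + 1) := pow_le_pow_right₀ g1 (by omega)
    have b4 : |coef w (m + 1) + coef (Lt.z :: w) (m + 1)| ≤ 2 * gh (m + 1) ^ (w.length + 1) / ((m : ℝ) + 1) := by
      refine (abs_add_le _ _).trans ?_
      calc _ ≤ gh (m + 1) ^ (w.length + 1) / ((m : ℝ) + 1) + gh (m + 1) ^ (w.length + 1) / ((m : ℝ) + 1) := by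
            refine add_le_add (b1.trans ?_) b2
            gcongr
        _ = _ := by ring
    have b5 : |(m : ℝ) + 1 + 1| = (m : ℝ) + 2 := by rw [abs_of_nonneg (by positivity)]; ring
    rw [b5]
    calc _ ≤ 2 * gh (m + 1) ^ (w.length + 1) / ((m : ℝ) + 1) / ((m : ℝ) + 1) := by
            gcongr; linarith
      _ = _ := by rw [div_div, mul_div_assoc, pow_two]
  have h1 := hs.hasSum.tendsto_sum_nat
  have h2 := ((h1.sub (coef_tendsto (Lt.z :: w))).const_mul (1 / 2))
  refine ⟨_, h2.congr (fun N => ?_)⟩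
  rw [sum_add_distrib]
  have e := sum_range_succ c N
  rw [sum_range_succ'] at e
  have : c 0 = 0 := coef_zero (by simp)
  rw [this] at e
  rw [← hc]
  linarith

theorem partial_Iv {w : Word} (h : nys w = true) (hn : w ≠ []) :
    Tendsto (fun N => ∑ n ∈ range N, coef w n) atTop (𝓝 (Iv w)) := by
  have : ∃ l, Tendsto (fun N => ∑ n ∈ range N, coef w n) atTop (𝓝 l) := by
    cases w with
    | nil => exact absurd rfl hn
    | cons a w =>
      cases a with
      | x => exact ⟨_, partial_x w⟩
      | y => simp [nys] at h
      | z => exact partial_z w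
  obtain ⟨l, hl⟩ := this
  have := (conv_of_partial hl).limUnder_eq
  rw [← this] at hl
  exact hl

theorem Iv_tendsto {w : Word} (h : nys w = true) (hn : w ≠ []) :
    Tendsto (L w) (𝓝[<] 1) (𝓝 (Iv w)) := conv_of_partial (partial_Iv h hn)

theorem Iv_x (w : Word) : Iv (Lt.x :: w) = ∑' n, coef (Lt.x :: w) n :=
  tendsto_nhds_unique (partial_Iv rfl (by simp)) (partial_x w)

theorem one_sub_mul_L (w : Word) : Tendsto (fun t => (1 - t) * L w t) (𝓝[<] 1) (𝓝 0) := by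
  have h1 : Tendsto (fun N => ∑ n ∈ range N, (coef w (n + 1) - coef w n)) atTop (𝓝 (0 - coef w 0)) := by
    simp only [sum_range_sub]
    exact (coef_tendsto w).sub_const _
  have h2 := Real.tendsto_tsum_powerSeries_nhdsWithin_lt h1
  have hid : Tendsto (fun t : ℝ => t) (𝓝[<] 1) (𝓝 1) := nhdsWithin_le_nhds
  have h3 := (hid.mul h2).const_add (coef w 0)
  rw [show coef w 0 + 1 * (0 - coef w 0) = 0 by ring] at h3
  refine h3.congr' ?_
  filter_upwards [Ioo_mem_nhdsLT (show (-1:ℝ) < 1 by norm_num)] with t ht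
  have hs := (L_summable w (abs_lt.2 ⟨ht.1, ht.2⟩)).of_norm
  have hs1 := (summable_nat_add_iff 1).2 hs
  have e1 : L w t = coef w 0 + ∑' n, coef w (n + 1) * t ^ (n + 1) := by
    unfold L; rw [hs.tsum_eq_zero_add]; simp
  have e2 : t * ∑' n, (coef w (n + 1) - coef w n) * t ^ n =
      (∑' n, coef w (n + 1) * t ^ (n + 1)) - t * L w t := by
    unfold L
    rw [← tsum_mul_left, ← tsum_mul_left, ← hs1.tsum_sub (hs.mul_left t)]
    congr 1; ext n; ring
  rw [e2]
  linarith

theorem sig_tendsto_one : Tendsto sig (𝓝[>] 0) (𝓝[<] 1) := by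
  refine tendsto_nhdsWithin_of_tendsto_nhds_of_eventually_within _ ?_ ?_
  · have : ContinuousAt sig 0 := by
      unfold sig; refine ContinuousAt.div (by fun_prop) (by fun_prop) (by norm_num)
    have h := this.tendsto
    rw [show sig 0 = 1 by simp [sig]] at h
    exact h.mono_left nhdsWithin_le_nhds
  · filter_upwards [self_mem_nhdsWithin] with s hs
    exact sig_lt hs

theorem sig_tendsto_zero : Tendsto sig (𝓝[<] 1) (𝓝[>] 0) := by
  refine tendsto_nhdsWithin_of_tendsto_nhds_of_eventually_within _ ?_ ?_
  · have : ContinuousAt sig 1 := by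
      unfold sig; refine ContinuousAt.div (by fun_prop) (by fun_prop) (by norm_num)
    have h := this.tendsto
    rw [show sig 1 = 0 by simp [sig]] at h
    exact h.mono_left nhdsWithin_le_nhds
  · filter_upwards [Ioo_mem_nhdsLT (show (0:ℝ) < 1 by norm_num)] with s hs
    exact sig_pos hs.1 hs.2

theorem prod_zero (u v : Word) (hv : v ≠ []) :
    Tendsto (fun s => L u (sig s) * L v s) (𝓝[>] 0) (𝓝 0) := by
  have h1 := (one_sub_mul_L u).comp sig_tendsto_one
  have h2 := hasDerivAt_iff_tendsto_slope.1 (hasDerivAt_L_aux v (t := 0) (by simp))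
  have h2' := h2.mono_left (nhdsWithin_mono 0 (fun s (hs : s ∈ Set.Ioi (0:ℝ)) => (ne_of_gt hs : s ∈ ({0}ᶜ : Set ℝ))))
  have h3 : Tendsto (fun s : ℝ => (1 + s) / 2) (𝓝[>] 0) (𝓝 ((1 + 0) / 2)) :=
    ((continuous_const.add continuous_id).div_const 2).continuousAt.tendsto.mono_left nhdsWithin_le_nhds
  have h := (h1.mul h2').mul h3
  rw [zero_mul, zero_mul] at h
  refine h.congr' ?_
  filter_upwards [self_mem_nhdsWithin] with s hs
  have hs : (0:ℝ) < s := hs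
  have e3 : 1 - sig s = 2 * s / (1 + s) := by unfold sig; field_simp; ring
  simp only [Function.comp, slope_def_field, L_zero hv, e3, sub_zero]
  field_simp

theorem prod_one (u v : Word) (hu : u ≠ []) :
    Tendsto (fun s => L u (sig s) * L v s) (𝓝[<] 1) (𝓝 0) := by
  refine ((prod_zero v u hu).comp sig_tendsto_zero).congr' ?_
  filter_upwards [Ioo_mem_nhdsLT (show (0:ℝ) < 1 by norm_num)] with s hs
  simp only [Function.comp]
  rw [sig_sig hs.1, mul_comm]

theorem ev_prod_tendsto {F : Filter ℝ} (c : Comb) (g : ℝ → ℝ)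
    (h : All (fun u => Tendsto (fun s => L u (sig s) * g s) F (𝓝 0)) c) :
    Tendsto (fun s => ev (fun w => L w (sig s)) c * g s) F (𝓝 0) := by
  have := ev_tendsto (F := F) (fun u s => g s * L u (sig s)) (fun _ => 0) c
    (fun p hp => by simpa [mul_comm] using h p hp)
  rw [ev_zero] at this
  refine this.congr (fun s => ?_)
  rw [ev_mul, mul_comm]

theorem Phi_one : ∀ (v : Word) (c : Comb), All (fun w => w ≠ []) c →
    Tendsto (Phi c v) (𝓝[<] 1) (𝓝 0)
  | [], c, hc => by
    have := ev_prod_tendsto (F := 𝓝[<] 1) c (fun s => L [] s) (fun p hp => prod_one p.2 [] (hc p hp))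
    simpa [Phi, L_nil] using this
  | a :: v, c, hc => by
    have h1 := ev_prod_tendsto (F := 𝓝[<] 1) c (fun s => L (a :: v) s) (fun p hp => prod_one p.2 _ (hc p hp))
    have h2 := Phi_one v (presub (dualL a) c) (presub_ne _ _)
    simpa [Phi] using h1.add h2

theorem Phi_zero : ∀ (v : Word) (c : Comb), ok v = true → v ≠ [] →
    Tendsto (Phi c v) (𝓝[>] 0) (𝓝 (ev Iv (dualA c v)))
  | [], c, _, h => absurd rfl h
  | [a], c, ho, _ => by
    have h1 := ev_prod_tendsto (F := 𝓝[>] 0) c (fun s => L [a] s) (fun p hp => prod_zero p.2 _ (by simp))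
    have h2 := ev_tendsto (F := 𝓝[<] 1) L Iv (presub (dualL a) c)
      (presub_all (P := fun _ => True) _ _ (fun _ _ => trivial) (by
        intro e he w _
        apply Iv_tendsto _ (by simp)
        cases a with
        | x => simp [ok] at ho
        | y =>
          simp [dualL] at he
          rcases he with rfl | rfl <;> rfl
        | z =>
          simp [dualL] at he
          subst he; rfl))
    have h3 := h1.add (h2.comp sig_tendsto_one)
    rw [zero_add] at h3
    exact h3
  | a :: b :: v, c, ho, _ => by
    have h1 := ev_prod_tendsto (F := 𝓝[>] 0) c (fun s => L (a :: b :: v) s)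
      (fun p hp => prod_zero p.2 _ (by simp))
    have h2 := Phi_zero (b :: v) (presub (dualL a) c) (ok_tail ho) (by simp)
    have h3 := h1.add h2
    rw [zero_add] at h3
    exact h3

theorem duality (w : Word) (ho : ok w = true) (hn : w ≠ []) (hy : nys w = true) :
    Iv w = ev Iv (dual w) := by
  cases w with
  | nil => exact absurd rfl hn
  | cons a v =>
    have hP : ∀ t, Phi [(1, [])] (a :: v) t = L (a :: v) t + Phi (presub (dualL a) [(1, [])]) v t := by
      intro t; simp [Phi, ev, L_nil]
    have key : ∀ t, 0 < t → t < 1 → HasDerivAt (Phi [(1, [])] (a :: v)) 0 t := by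
      intro t h0 h1
      have d1 := hasDerivAt_L ho h0 h1
      have d2 := Phi_hasDerivAt v a [(1, [])] (ok_tail ho) (by
        intro e he p hp
        simp only [List.mem_singleton] at hp
        subst hp
        cases a with
        | y => simp [nys] at hy
        | x => simp [dualL] at he; rcases he with rfl | rfl <;> rfl
        | z => simp [dualL] at he; subst he; rfl) t h0 h1
      rw [funext hP]
      refine (d1.add d2).congr_deriv ?_
      simp [ev, L_nil]
    have h2 : Tendsto (Phi [(1, [])] (a :: v)) (𝓝[<] 1) (𝓝 (Iv (a :: v))) := by
      rw [funext hP]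
      simpa using (Iv_tendsto hy hn).add (Phi_one v (presub (dualL a) [(1, [])]) (presub_ne _ _))
    have h3 : Tendsto (Phi [(1, [])] (a :: v)) (𝓝[<] 1) (𝓝 (ev Iv (dual (a :: v)))) := by
      refine tendsto_const_nhds.congr' ?_
      filter_upwards [Ioo_mem_nhdsLT (show (0:ℝ) < 1 by norm_num)] with t ht
      exact (const_of_deriv key (Phi_zero _ _ ho hn) ht.1 ht.2).symm
    exact tendsto_nhds_unique h2 h3

theorem distribution_Iv (w : Word) (ho : ok (Lt.x :: w) = true) (hz : noz (Lt.x :: w) = true) :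
    Iv (Lt.x :: w) = ev Iv (dist (Lt.x :: w)) := by
  have h1 : Tendsto (fun t : ℝ => L (Lt.x :: w) (t ^ 2)) (𝓝[<] 1) (𝓝 (Iv (Lt.x :: w))) := by
    refine (Iv_tendsto (w := Lt.x :: w) rfl (by simp)).comp ?_
    refine tendsto_nhdsWithin_of_tendsto_nhds_of_eventually_within _ ?_ ?_
    · have : Tendsto (fun t : ℝ => t ^ 2) (𝓝 1) (𝓝 (1 ^ 2)) := (continuous_pow 2).tendsto 1
      rw [one_pow] at this
      exact this.mono_left nhdsWithin_le_nhds
    · filter_upwards [Ioo_mem_nhdsLT (show (0:ℝ) < 1 by norm_num)] with t ht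
      show t ^ 2 < 1
      nlinarith [ht.1, ht.2]
  have h2 := ev_tendsto (F := 𝓝[<] 1) L Iv (dist (Lt.x :: w))
      (presub_all (P := fun _ => True) _ _ (fun _ _ => trivial) (by
        intro e he w _
        apply Iv_tendsto _ (by simp)
        simp [distL] at he
        subst he; rfl))
  refine tendsto_nhds_unique h1 (h2.congr' ?_)
  filter_upwards [Ioo_mem_nhdsLT (show (0:ℝ) < 1 by norm_num)] with t ht
  exact (distribution _ ho hz t ht.1 ht.2).symm

end
end Z13

namespace Z13
section
open Finset Filter Topology

/-- index with leading exponent at least two -/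
def xst : Idx → Bool
  | [] => false
  | p :: _ => decide (0 < p.1)

def IAll (P : Idx → Prop) (c : IComb) : Prop := ∀ p ∈ c, P p.2

theorem IAll.append {P : Idx → Prop} {c d : IComb} (hc : IAll P c) (hd : IAll P d) : IAll P (c ++ d) := by
  intro p hp
  rcases List.mem_append.1 hp with h | h
  · exact hc p h
  · exact hd p h

theorem IAll_ipre {P : Idx → Prop} {a : ℕ × Bool} {c : IComb} (h : ∀ w, P (a :: w)) : IAll P (ipre a c) := by
  induction c with
  | nil => intro p hp; simp [ipre] at hp
  | cons q l ih =>
    intro p hp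
    rcases List.mem_cons.1 hp with rfl | hp
    · exact h _
    · exact ih p hp

theorem evI_tendsto {α : Type} {F : Filter α} (f : Idx → α → ℝ) (g : Idx → ℝ) (c : IComb)
    (h : IAll (fun w => Tendsto (f w) F (𝓝 (g w))) c) :
    Tendsto (fun t => evI (fun w => f w t) c) F (𝓝 (evI g c)) := by
  induction c with
  | nil => exact tendsto_const_nhds
  | cons p l ih =>
    simp only [evI]
    exact ((h p (by simp)).const_mul _).add (ih (fun q hq => h q (by simp [hq])))

theorem wd_xst {i : Idx} (h : xst i = true) : ∃ w, wd i = Lt.x :: w := by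
  cases i with
  | nil => simp [xst] at h
  | cons p r =>
    obtain ⟨s, e⟩ := p
    cases s with
    | zero => simp [xst] at h
    | succ s => exact ⟨_, rfl⟩

theorem xst_cons {i : Idx} (h : xst i = true) : ∃ p r, i = p :: r ∧ 0 < p.1 := by
  cases i with
  | nil => simp [xst] at h
  | cons p r => exact ⟨p, r, rfl, by simpa [xst] using h⟩

/-- values of alternating sums -/
noncomputable def Zv (i : Idx) : ℝ := kap false i * Iv (wd i)

theorem Zt_eq (p : ℕ × Bool) (r : Idx) (N : ℕ) :
    Zt (p :: r) N = kap false (p :: r) * ∑ n ∈ range N, coef (wd (p :: r)) n := by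
  rw [sum_coef_wd, ← mul_assoc, kap_sq, one_mul]

theorem Zt_tendsto {i : Idx} (h : xst i = true) : Tendsto (Zt i) atTop (𝓝 (Zv i)) := by
  obtain ⟨w, hw⟩ := wd_xst h
  obtain ⟨p, r, rfl, _⟩ := xst_cons h
  rw [funext (Zt_eq p r)]
  exact (partial_Iv (by rw [hw]; rfl) (by rw [hw]; simp)).const_mul _

theorem All_pre_x (c : Comb) : All (fun w => Tendsto (L w) (𝓝[<] 1) (𝓝 (Iv w))) (pre Lt.x c) :=
  All.pre (P := fun _ => True) (fun _ _ => trivial) (fun _ _ => Iv_tendsto rfl (by simp))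

theorem double_shuffle (a b : Idx) (ha : xst a = true) (hb : xst b = true) :
    (kap false a * kap false b : ℝ) * ev Iv (sh (wd a) (wd b)) = evI Zv (st a b) := by
  have h1 : Tendsto (fun N => Zt a N * Zt b N) atTop (𝓝 (Zv a * Zv b)) := (Zt_tendsto ha).mul (Zt_tendsto hb)
  have h2 : Tendsto (fun N => Zt a N * Zt b N) atTop (𝓝 (evI Zv (st a b))) := by
    refine (evI_tendsto (F := atTop) Zt Zv (st a b) ?_).congr (fun N => (Zt_mul N a b).symm)
    obtain ⟨p, r, rfl, hp⟩ := xst_cons ha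
    obtain ⟨q, s, rfl, hq⟩ := xst_cons hb
    rw [st_cons_cons]
    exact IAll.append (IAll_ipre fun w => Zt_tendsto (by simp [xst, hp]))
      (IAll.append (IAll_ipre fun w => Zt_tendsto (by simp [xst, hq]))
        (IAll_ipre fun w => Zt_tendsto (by simp [xst])))
  rw [← tendsto_nhds_unique h1 h2]
  obtain ⟨u, hu⟩ := wd_xst ha
  obtain ⟨v, hv⟩ := wd_xst hb
  have oa : ok (wd a) = true := ok_toWord a false
  have ob : ok (wd b) = true := ok_toWord b false
  have : ev Iv (sh (wd a) (wd b)) = Iv (wd a) * Iv (wd b) := by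
    have k1 : Tendsto (fun t => ev (fun w => L w t) (sh (wd a) (wd b))) (𝓝[<] 1) (𝓝 (ev Iv (sh (wd a) (wd b)))) := by
      apply ev_tendsto
      rw [hu, hv, sh_cons_cons]
      exact All.append (All_pre_x _) (All_pre_x _)
    have k2 : Tendsto (fun t => L (wd a) t * L (wd b) t) (𝓝[<] 1) (𝓝 (Iv (wd a) * Iv (wd b))) := by
      rw [hu, hv]
      exact (Iv_tendsto rfl (by simp)).mul (Iv_tendsto rfl (by simp))
    refine tendsto_nhds_unique k1 (k2.congr' ?_)
    filter_upwards [Ioo_mem_nhdsLT (show (0:ℝ) < 1 by norm_num)] with t ht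
    exact shuffle _ _ oa ob t ht.1 ht.2
  rw [this]
  simp only [Zv]
  ring

theorem coef_y (n : ℕ) : coef [Lt.y] n = 1 / (n : ℝ) := by
  rcases Nat.eq_zero_or_pos n with rfl | hn
  · simp [coef]
  · simp only [coef]
    rw [sum_ite_eq']
    simp [hn]

/-- partial sums of a Cauchy product -/
theorem cauchy_partial (f g : ℕ → ℝ) (N : ℕ) :
    ∑ n ∈ range N, ∑ kl ∈ antidiagonal n, f kl.1 * g kl.2 = ∑ m ∈ range N, g m * ∑ j ∈ range (N - m), f j := by
  induction N with
  | zero => simp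
  | succ N ih =>
    rw [sum_range_succ, ih, sum_range_succ]
    have : ∀ m ∈ range N, g m * ∑ j ∈ range (N + 1 - m), f j = g m * ∑ j ∈ range (N - m), f j + g m * f (N - m) := by
      intro m hm
      have : m < N := mem_range.1 hm
      rw [show N + 1 - m = N - m + 1 by omega, sum_range_succ]; ring
    rw [sum_congr rfl this, sum_add_distrib, add_assoc]
    congr 1
    rw [Finset.Nat.sum_antidiagonal_eq_sum_range_succ_mk, ← Finset.sum_flip, sum_range_succ]
    congr 1
    · refine sum_congr rfl fun m hm => ?_
      have : m < N := mem_range.1 hm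
      simp only []
      rw [show N - (N - m) = m by omega]; ring
    · simp; ring

theorem harm_diff (m N : ℕ) (h : m < N) :
    |∑ j ∈ range N, coef [Lt.y] j - ∑ j ∈ range (N - m), coef [Lt.y] j| ≤ gh m := by
  obtain ⟨k, rfl⟩ : ∃ k, N = k + 1 + m := ⟨N - m - 1, by omega⟩
  rw [show k + 1 + m - m = k + 1 by omega, sum_range_add, add_sub_cancel_left,
    abs_of_nonneg (sum_nonneg fun i _ => by rw [coef_y]; positivity)]
  unfold gh
  have : ∑ x ∈ range m, coef [Lt.y] (k + 1 + x) ≤ ∑ m ∈ range m, 1 / ((m : ℝ) + 1) := by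
    refine sum_le_sum fun i _ => ?_
    rw [coef_y]
    push_cast
    apply one_div_le_one_div_of_le <;> [positivity; (have := Nat.cast_nonneg (α := ℝ) k; linarith)]
  linarith

theorem harm_lim (m : ℕ) :
    Tendsto (fun N => ∑ j ∈ range N, coef [Lt.y] j - ∑ j ∈ range (N - m), coef [Lt.y] j) atTop (𝓝 0) := by
  rw [← tendsto_add_atTop_iff_nat m]
  have h : Tendsto (fun N => ∑ x ∈ range m, coef [Lt.y] (N + x)) atTop (𝓝 (∑ x ∈ range m, (0:ℝ))) :=
    tendsto_finsetSum _ fun i _ => (coef_tendsto [Lt.y]).comp (tendsto_add_atTop_nat i)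
  rw [sum_const_zero] at h
  refine h.congr fun N => ?_
  rw [show N + m - m = N by omega, sum_range_add, add_sub_cancel_left]

theorem cauchy_diff (w : Word) : Tendsto (fun N =>
    (∑ n ∈ range N, coef [Lt.y] n) * (∑ n ∈ range N, coef (Lt.x :: w) n) -
    ∑ n ∈ range N, ∑ kl ∈ antidiagonal n, coef [Lt.y] kl.1 * coef (Lt.x :: w) kl.2) atTop (𝓝 0) := by
  set c := coef (Lt.x :: w) with hc
  have := tendsto_tsum_of_dominated_convergence (𝓕 := atTop) (β := ℕ) (G := ℝ)
    (f := fun N m => if m < N then c m * (∑ j ∈ range N, coef [Lt.y] j - ∑ j ∈ range (N - m), coef [Lt.y] j) else 0)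
    (g := fun _ => 0) (bound := fun m => |c m| * gh m) (coef_x_gh_summable w) ?_ ?_
  · rw [tsum_zero] at this
    refine this.congr fun N => ?_
    rw [cauchy_partial, mul_sum, ← sum_sub_distrib, tsum_eq_sum (s := range N)]
    · refine sum_congr rfl fun m hm => ?_
      rw [if_pos (mem_range.1 hm)]; ring
    · intro m hm
      rw [if_neg (by simpa using hm)]
  · intro m
    have h := (harm_lim m).const_mul (c m)
    rw [mul_zero] at h
    refine h.congr' ?_
    filter_upwards [eventually_gt_atTop m] with N hN
    rw [if_pos hN]
  · refine Eventually.of_forall fun N m => ?_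
    have := one_le_gh m
    split_ifs with h
    · rw [norm_mul, Real.norm_eq_abs, Real.norm_eq_abs]
      gcongr
      exact harm_diff m N h
    · rw [norm_zero]; positivity

theorem reg_limit (w : Word) (R : ℝ) (h : Tendsto (fun N =>
    (∑ n ∈ range N, coef [Lt.y] n) * (∑ n ∈ range N, coef (Lt.x :: w) n) -
    ∑ n ∈ range N, coef (Lt.y :: Lt.x :: w) n) atTop (𝓝 R)) :
    Tendsto (fun t => L [Lt.y] t * L (Lt.x :: w) t - L (Lt.y :: Lt.x :: w) t) (𝓝[<] 1) (𝓝 R) := by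
  have h1 := h.sub (cauchy_diff w)
  rw [sub_zero] at h1
  have h2 : Tendsto (fun N => ∑ n ∈ range N, ((∑ kl ∈ antidiagonal n, coef [Lt.y] kl.1 * coef (Lt.x :: w) kl.2) -
      coef (Lt.y :: Lt.x :: w) n)) atTop (𝓝 R) := by
    refine h1.congr fun N => ?_
    rw [sum_sub_distrib]; ring
  refine (Real.tendsto_tsum_powerSeries_nhdsWithin_lt h2).congr' ?_
  filter_upwards [Ioo_mem_nhdsLT (show (0:ℝ) < 1 by norm_num)] with t ht
  have ht' : |t| < 1 := abs_lt.2 ⟨by linarith [ht.1], ht.2⟩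
  have s1 := L_summable [Lt.y] ht'
  have s2 := L_summable (Lt.x :: w) ht'
  have s3 := (L_summable (Lt.y :: Lt.x :: w) ht').of_norm
  have s4 := (summable_norm_sum_mul_antidiagonal_of_summable_norm s1 s2).of_norm
  simp only [L]
  rw [tsum_mul_tsum_eq_tsum_sum_antidiagonal_of_summable_norm s1 s2, ← s4.tsum_sub s3]
  congr 1; ext n
  rw [sub_mul, sum_mul]
  congr 1
  refine sum_congr rfl fun kl hkl => ?_
  rw [← mem_antidiagonal.1 hkl, pow_add]; ring

theorem regularised (b : Idx) (hb : xst b = true) :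
    (kap false b : ℝ) * ev Iv (sh [Lt.y] (wd b)) = evI Zv (st [(0, false)] b) := by
  obtain ⟨v, hv⟩ := wd_xst hb
  obtain ⟨q, s, rfl, hq⟩ := xst_cons hb
  have hst : st [(0, false)] (q :: s) = (1, (0, false) :: q :: s) :: (ipre q (st [(0, false)] s) ++
      ipre (0 + q.1 + 1, xor false q.2) (st [] s)) := rfl
  have hZv : Zv ((0, false) :: q :: s) = kap false (q :: s) * Iv (Lt.y :: wd (q :: s)) := by
    simp [Zv, wd, toWord, kap, sgz, xs, ltr]
  have hwd : wd ((0, false) :: q :: s) = Lt.y :: wd (q :: s) := by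
    simp [wd, toWord, xs, ltr]
  have hkap : kap false ((0, false) :: q :: s) = kap false (q :: s) := by
    simp [kap, sgz]
  have hk1 : kap false [(0, false)] = 1 := rfl
  have hwd1 : wd [(0, false)] = [Lt.y] := rfl
  set c := ipre q (st [(0, false)] s) ++ ipre (0 + q.1 + 1, xor false q.2) (st [] s) with hc
  -- stuffle side
  have h1 : Tendsto (fun N => Zt [(0, false)] N * Zt (q :: s) N - Zt ((0, false) :: q :: s) N) atTop
      (𝓝 (evI Zv c)) := by
    have := evI_tendsto (F := atTop) Zt Zv c (IAll.append (IAll_ipre fun w => Zt_tendsto (by simp [xst, hq]))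
        (IAll_ipre fun w => Zt_tendsto (by simp [xst])))
    refine this.congr fun N => ?_
    rw [Zt_mul, hst]
    simp [evI]
  have h2 := h1.const_mul (kap false (q :: s) : ℝ)
  have h3 : Tendsto (fun N => (∑ n ∈ range N, coef [Lt.y] n) * (∑ n ∈ range N, coef (Lt.x :: v) n) -
    ∑ n ∈ range N, coef (Lt.y :: Lt.x :: v) n) atTop (𝓝 (kap false (q :: s) * evI Zv c)) := by
    refine h2.congr fun N => ?_
    rw [Zt_eq, Zt_eq, Zt_eq, hwd, hkap, hk1, hwd1, hv]
    have := kap_sq (q :: s) false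
    push_cast
    linear_combination ((∑ n ∈ range N, coef [Lt.y] n) * (∑ n ∈ range N, coef (Lt.x :: v) n) -
      ∑ n ∈ range N, coef (Lt.y :: Lt.x :: v) n) * this
  have h4 := reg_limit v _ h3
  have hsh : sh [Lt.y] (Lt.x :: v) = (1, Lt.y :: Lt.x :: v) :: pre Lt.x (sh [Lt.y] v) := rfl
  have ow : ok (Lt.x :: v) = true := by rw [← hv]; exact ok_toWord _ _
  have h5 : Tendsto (fun t => L [Lt.y] t * L (Lt.x :: v) t - L (Lt.y :: Lt.x :: v) t) (𝓝[<] 1)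
      (𝓝 (ev Iv (pre Lt.x (sh [Lt.y] v)))) := by
    refine (ev_tendsto (F := 𝓝[<] 1) L Iv _ (All_pre_x (sh [Lt.y] v))).congr' ?_
    filter_upwards [Ioo_mem_nhdsLT (show (0:ℝ) < 1 by norm_num)] with t ht
    rw [shuffle [Lt.y] (Lt.x :: v) rfl ow t ht.1 ht.2, hsh]
    simp [ev]
  have h6 := tendsto_nhds_unique h5 h4
  rw [hst, hv, hsh]
  simp only [ev, evI]
  rw [hZv, h6, hv]
  have := kap_sq (q :: s) false
  push_cast
  linear_combination (evI Zv c) * this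

end
end Z13

namespace Z13
section
open Finset Filter Topology

/-- ternary tries storing integer coefficients of words -/
inductive Tr where
  | nil : Tr
  | node : ℤ → Tr → Tr → Tr → Tr

noncomputable def evT (f : Word → ℝ) : Tr → ℝ
  | Tr.nil => 0
  | Tr.node k a b c => k * f [] + evT (fun w => f (Lt.x :: w)) a + evT (fun w => f (Lt.y :: w)) b +
      evT (fun w => f (Lt.z :: w)) c

def ins (k : ℤ) : Word → Tr → Tr
  | [], Tr.nil => Tr.node k Tr.nil Tr.nil Tr.nil
  | [], Tr.node j a b c => Tr.node (k + j) a b c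
  | Lt.x :: w, Tr.nil => Tr.node 0 (ins k w Tr.nil) Tr.nil Tr.nil
  | Lt.y :: w, Tr.nil => Tr.node 0 Tr.nil (ins k w Tr.nil) Tr.nil
  | Lt.z :: w, Tr.nil => Tr.node 0 Tr.nil Tr.nil (ins k w Tr.nil)
  | Lt.x :: w, Tr.node j a b c => Tr.node j (ins k w a) b c
  | Lt.y :: w, Tr.node j a b c => Tr.node j a (ins k w b) c
  | Lt.z :: w, Tr.node j a b c => Tr.node j a b (ins k w c)

theorem evT_ins (k : ℤ) (w : Word) : ∀ (f : Word → ℝ) (T : Tr), evT f (ins k w T) = k * f w + evT f T := by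
  induction w with
  | nil =>
    intro f T
    cases T with
    | nil => simp [ins, evT]
    | node j a b c => simp only [ins, evT]; push_cast; ring
  | cons d w ih =>
    intro f T
    cases T with
    | nil => cases d <;> simp [ins, evT, ih]
    | node j a b c => cases d <;> simp only [ins, evT, ih] <;> ring

def insAll : Comb → Tr → Tr
  | [], T => T
  | p :: l, T => insAll l (ins p.1 p.2 T)

theorem evT_insAll (f : Word → ℝ) (c : Comb) : ∀ T, evT f (insAll c T) = ev f c + evT f T := by
  induction c with
  | nil => intro T; simp [insAll, ev]
  | cons p l ih => intro T; simp only [insAll, ih, evT_ins, ev]; ring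

def isZ : Tr → Bool
  | Tr.nil => true
  | Tr.node k a b c => (k == 0) && isZ a && isZ b && isZ c

theorem evT_isZ (T : Tr) : ∀ (f : Word → ℝ), isZ T = true → evT f T = 0 := by
  induction T with
  | nil => intro f _; rfl
  | node k a b c ha hb hc =>
    intro f h
    simp only [isZ, Bool.and_eq_true, beq_iff_eq] at h
    obtain ⟨⟨⟨h1, h2⟩, h3⟩, h4⟩ := h
    simp [evT, h1, ha _ h2, hb _ h3, hc _ h4]

/-- the relations used -/
inductive Rel where
  | ds : Idx → Idx → Rel
  | rg : Idx → Rel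
  | du : Word → Rel
  | di : Word → Rel

def toC : IComb → Comb
  | [] => []
  | p :: l => (-(p.1 * kap false p.2), wd p.2) :: toC l

theorem ev_toC (c : IComb) : ev Iv (toC c) = - evI Zv c := by
  induction c with
  | nil => simp [toC, ev, evI]
  | cons p l ih => simp only [toC, ev, evI, ih, Zv]; push_cast; ring

def Rel.comb : Rel → Comb
  | Rel.ds a b => scl (kap false a * kap false b) (sh (wd a) (wd b)) ++ toC (st a b)
  | Rel.rg b => scl (kap false b) (sh [Lt.y] (wd b)) ++ toC (st [(0, false)] b)
  | Rel.du w => (-1, w) :: dual w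
  | Rel.di w => (-1, Lt.x :: w) :: dist (Lt.x :: w)

def nonE : Word → Bool
  | [] => false
  | _ :: _ => true

def Rel.valid : Rel → Bool
  | Rel.ds a b => xst a && xst b
  | Rel.rg b => xst b
  | Rel.du w => ok w && nonE w && nys w
  | Rel.di w => ok (Lt.x :: w) && noz (Lt.x :: w)

theorem Rel.sound (r : Rel) (h : r.valid = true) : ev Iv r.comb = 0 := by
  cases r with
  | ds a b =>
    simp only [Rel.valid, Bool.and_eq_true] at h
    simp only [Rel.comb, ev_append, ev_scl, ev_toC]
    rw [← double_shuffle a b h.1 h.2]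
    push_cast; ring
  | rg b =>
    simp only [Rel.valid] at h
    simp only [Rel.comb, ev_append, ev_scl, ev_toC]
    rw [← regularised b h]
    ring
  | du w =>
    simp only [Rel.valid, Bool.and_eq_true] at h
    simp only [Rel.comb, ev]
    rw [← duality w h.1.1 (by rintro rfl; simp [nonE] at h) h.2]
    simp
  | di w =>
    simp only [Rel.valid, Bool.and_eq_true] at h
    simp only [Rel.comb, ev]
    rw [← distribution_Iv w h.1 h.2]
    simp

def chk : List (ℤ × Rel) → Tr → Bool
  | [], T => isZ T
  | p :: l, T => p.2.valid && chk l (insAll (scl p.1 p.2.comb) T)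

theorem chk_sound (l : List (ℤ × Rel)) : ∀ T, chk l T = true → evT Iv T = 0 := by
  induction l with
  | nil => intro T h; exact evT_isZ T _ h
  | cons p l ih =>
    intro T h
    simp only [chk, Bool.and_eq_true] at h
    have := ih _ h.2
    rw [evT_insAll, ev_scl, Rel.sound _ h.1] at this
    simpa using this

theorem cert_sound (l : List (ℤ × Rel)) (c : Comb) (h : chk l (insAll c Tr.nil) = true) : ev Iv c = 0 := by
  have := chk_sound l _ h
  rw [evT_insAll] at this
  simpa [evT] using this

end
end Z13

namespace Z13
section
open Finset Filter Topology

section certificates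
open Lt Z13.Rel

def certT1 : List (ℤ × Rel) := [
  (54, rg [(1, false), (1, false), (0, false)]),
  (9, rg [(1, false), (2, false)]),
  (9, ds [(1, false)] [(1, false), (0, false), (0, false)]),
  (6, rg [(2, false), (1, false)]),
  (-39, ds [(1, false)] [(1, false), (1, false)]),
  (171, rg [(3, false), (0, false)]),
  (52, ds [(2, false)] [(2, false)]),
  (9, rg [(4, false)]),
  (-61, ds [(1, false)] [(3, false)]),
  (-65, ds [(1, false)] [(2, false), (0, false)]),
  (-72, rg [(2, false), (0, false), (0, false)]),
  (39, ds [(2, false)] [(1, false), (0, false)])]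

def targetT1 : Comb := [(-63, [x, y, y, x, y, y]), (63, [x, x, y, x, x, y])]

theorem certT1_ok : chk certT1 (insAll targetT1 Tr.nil) = true := by decide +kernel

def certT0 : List (ℤ × Rel) := [
  (-18765408, rg [(1, true), (1, true), (0, false)]),
  (26824216, ds [(1, false)] [(1, true), (0, true), (0, false)]),
  (-19004544, ds [(1, true), (0, true)] [(1, true), (0, false)]),
  (-8285160, ds [(1, true)] [(1, true), (0, false), (0, false)]),
  (2726658, di [y, y, x, x, y]),
  (16577280, rg [(1, false), (2, false)]),
  (-55848696, rg [(3, false), (0, false)]),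
  (26929120, ds [(1, true)] [(2, false), (0, true)]),
  (4871456, ds [(1, true)] [(1, true), (1, true)]),
  (21887712, ds [(1, true)] [(1, false), (1, true)]),
  (-7837344, ds [(1, true)] [(3, true)]),
  (5932434, di [y, x, x, x, y]),
  (-8632118, rg [(1, false), (1, false), (0, false)]),
  (14320246, ds [(1, false)] [(1, false), (0, false), (0, false)]),
  (-9445151, ds [(1, false), (0, false)] [(1, false), (0, false)]),
  (-1220156, rg [(2, false), (0, false), (0, false)]),
  (4495080, di [x, y, x, x, y]),
  (20592768, ds [(1, false)] [(3, true)]),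
  (-2549750, di [x, x, y, x, y]),
  (52824178, ds [(1, false)] [(2, false), (0, false)]),
  (-190303, di [x, x, x, x, y]),
  (19924992, ds [(1, false)] [(1, false), (1, true)]),
  (-13129920, rg [(3, true), (0, true)]),
  (-13129920, rg [(3, false), (0, true)]),
  (-6162640, ds [(2, true)] [(2, true)]),
  (24379840, ds [(2, true)] [(1, true), (0, true)]),
  (-12468160, ds [(1, false)] [(1, true), (1, true)]),
  (-11562800, ds [(2, false)] [(2, false)]),
  (-13961256, ds [(1, false)] [(1, true), (0, false), (0, false)]),
  (12373408, rg [(1, true), (2, false)]),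
  (23334560, rg [(1, true), (2, true)]),
  (8669468, rg [(4, false)]),
  (10993923, ds [(1, false)] [(3, false)]),
  (36902144, ds [(1, false)] [(2, true), (0, true)]),
  (22269290, ds [(1, false)] [(1, false), (1, false)]),
  (-117312, ds [(1, true)] [(1, true), (1, false)]),
  (-11535492, di [y, x, y, x, y]),
  (23512032, rg [(2, false), (1, true)]),
  (-29043744, di [x, y, x, y, y]),
  (39470976, ds [(1, true)] [(2, true), (0, true)]),
  (1752936, rg [(2, false), (1, false)]),
  (-62025242, di [x, x, y, y, y]),
  (-266208, ds [(1, true), (0, false)] [(1, true), (0, false)]),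
  (25365336, ds [(1, true)] [(1, false), (0, true), (0, true)]),
  (23804184, ds [(1, false)] [(1, false), (0, true), (0, true)]),
  (34843168, ds [(2, false)] [(1, false), (0, true)]),
  (-17685536, rg [(2, true), (1, false)]),
  (-14083456, rg [(2, true), (0, false), (0, true)]),
  (49444000, ds [(1, false)] [(2, false), (0, true)]),
  (6574360, ds [(1, false)] [(1, true), (0, false), (0, true)]),
  (13468320, rg [(1, false), (2, true)]),
  (-26682464, rg [(4, true)]),
  (-13150036, di [x, y, y, x, y]),
  (33378272, rg [(2, true), (1, true)]),
  (4957466, di [x, x, x, y, y]),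
  (-15014432, rg [(1, false), (1, true), (0, false)]),
  (-22328384, rg [(2, true), (0, true), (0, true)]),
  (-5879136, rg [(1, false), (1, true), (0, true)]),
  (21343640, ds [(1, true)] [(1, false), (0, false), (0, true)]),
  (-1988288, rg [(2, true), (0, true), (0, false)]),
  (-20857472, rg [(2, true), (0, false), (0, false)]),
  (-14083456, rg [(2, false), (0, true), (0, false)]),
  (-10233216, rg [(2, false), (0, true), (0, true)]),
  (-81856704, rg [(3, true), (0, false)]),
  (-6868768, ds [(1, true), (0, true)] [(1, true), (0, true)]),
  (-8345978, di [y, x, x, y, y]),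
  (19614040, ds [(1, true)] [(1, false), (0, false), (0, false)]),
  (-1988288, rg [(2, false), (0, false), (0, true)]),
  (-11555232, rg [(1, false), (1, false), (0, true)]),
  (-18401440, rg [(1, true), (1, false), (0, false)]),
  (23999704, ds [(1, false)] [(1, true), (0, true), (0, true)]),
  (18323608, ds [(1, true)] [(1, true), (0, true), (0, true)]),
  (-21874176, ds [(1, false), (0, false)] [(1, false), (0, true)]),
  (9762464, ds [(1, false)] [(2, true), (0, false)]),
  (23590616, ds [(1, true)] [(1, true), (0, false), (0, true)]),
  (4011168, ds [(1, false)] [(1, true), (1, false)]),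
  (-7804256, rg [(1, true), (1, false), (0, true)]),
  (2689152, du [x, z, z, y, x, z]),
  (2689152, du [x, z, z, y, x, y]),
  (-5378304, du [x, y, z, z, z, z]),
  (-11816928, du [x, y, z, z, z, y]),
  (2986944, rg [(1, true), (0, false), (1, false)]),
  (-2986944, rg [(1, true), (0, false), (1, true)]),
  (34028, di [y, x, y, y, y]),
  (14803872, du [z, z, z, z, x, z]),
  (16575960, ds [(1, false)] [(1, false), (0, true), (0, false)]),
  (2689152, du [x, z, y, z, x, y]),
  (2689152, du [x, z, y, z, z, z]),
  (-9127776, du [z, z, z, z, z, y]),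
  (-2689152, du [x, z, z, z, x, z]),
  (-2689152, du [z, y, z, x, z, y]),
  (2689152, du [z, z, y, z, x, z]),
  (-2689152, du [z, z, y, x, z, z]),
  (-2128160, rg [(1, true), (1, true), (0, true)]),
  (10186968, ds [(1, true)] [(1, true), (0, true), (0, false)]),
  (15667544, ds [(1, false)] [(1, false), (0, false), (0, true)]),
  (47385024, ds [(2, false)] [(1, true), (0, true)]),
  (13589016, ds [(1, true)] [(1, false), (0, true), (0, false)]),
  (-5676096, rg [(1, false), (0, true), (1, false)]),
  (5676096, rg [(1, false), (0, true), (1, true)]),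
  (5676096, du [x, y, z, z, x, z]),
  (5676096, du [z, y, x, z, x, z]),
  (-5676096, du [z, y, z, y, x, y]),
  (5676096, du [x, y, x, z, x, y]),
  (5676096, du [z, z, z, y, z, y]),
  (-5676096, du [z, z, z, y, x, y]),
  (5676096, du [z, y, z, y, z, y]),
  (762528, du [x, z, x, y, x, z]),
  (762528, du [x, z, x, y, x, y]),
  (-9368416, ds [(1, true)] [(2, true), (0, false)]),
  (6903360, du [x, z, z, x, y, y]),
  (6903360, du [x, z, z, x, y, z]),
  (6903360, du [x, z, z, x, z, y]),
  (6903360, du [x, z, z, x, z, z]),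
  (-9002944, ds [(1, false), (0, true)] [(1, true), (0, false)]),
  (-2014702, di [y, y, x, y, y]),
  (44622176, ds [(2, true)] [(1, true), (0, false)]),
  (-17447904, ds [(1, false), (0, true)] [(1, false), (0, true)]),
  (-6438624, du [x, y, z, y, z, y]),
  (6438624, du [z, z, x, z, x, y]),
  (-6438624, du [z, z, z, y, z, z]),
  (-6438624, du [z, y, z, y, z, z]),
  (-6438624, du [x, z, z, y, z, y]),
  (-34182912, ds [(1, false), (0, true)] [(1, true), (0, true)]),
  (41445728, ds [(2, false)] [(1, true), (0, false)]),
  (36921696, ds [(2, true)] [(1, false), (0, true)]),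
  (-33030848, ds [(1, false), (0, false)] [(1, true), (0, true)])]

def targetT0 : Comb := [(-22782592, [x, z, z, x, y, y]), (355978, [x, y, y, x, y, y])]

theorem certT0_ok : chk certT0 (insAll targetT0 Tr.nil) = true := by decide +kernel

theorem Iv_eq1 : Iv [x, y, y, x, y, y] = Iv [x, x, y, x, x, y] := by
  have h := cert_sound _ _ certT1_ok
  simp only [targetT1, ev] at h
  push_cast at h
  linarith

theorem Iv_eq0 : Iv [x, y, y, x, y, y] = 64 * Iv [x, z, z, x, y, y] := by
  have h := cert_sound _ _ certT0_ok
  simp only [targetT0, ev] at h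
  push_cast at h
  linarith

end certificates

end
end Z13

namespace Z13
section
open Finset Filter Topology

theorem ite_sum {m k : ℕ} (h : m ≤ k) (g : ℕ → ℝ) :
    ∑ p ∈ range k, (if p < m then g p else 0) = ∑ p ∈ range m, g p := by
  rw [← sum_filter]
  congr 1
  ext p; simp only [mem_filter, mem_range]; omega

theorem tsum_fin {β : Type} [DecidableEq β] (F : ℕ × β → ℝ) (B : ℕ → Finset β) (hB : ∀ k b, b ∉ B k → F (k, b) = 0)
    (hs : Summable fun k => ∑ b ∈ B k, |F (k, b)|) : ∑' v, F v = ∑' k, ∑ b ∈ B k, F (k, b) := by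
  have hsum : Summable F := by
    refine Summable.of_abs ?_
    refine (summable_prod_of_nonneg (fun v => abs_nonneg (F v))).2 ⟨fun k => ?_, ?_⟩
    · exact summable_of_ne_finset_zero (s := B k) (fun b hb => by rw [hB k b hb, abs_zero])
    · refine hs.congr fun k => ?_
      rw [tsum_eq_sum (s := B k) (fun b hb => by rw [hB k b hb, abs_zero])]
  rw [hsum.tsum_prod]
  congr 1; ext k
  rw [tsum_eq_sum (s := B k) (fun b hb => hB k b hb)]

theorem pair_sum (T : ℕ → ℕ → ℝ) (h0 : ∀ k, T k 0 = 0)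
    (hs : Summable fun k => ∑ m ∈ range k, |T k m|) :
    ∑' t : {v : ℕ × ℕ // 0 < v.2 ∧ v.2 < v.1}, T t.1.1 t.1.2 = ∑' k, ∑ m ∈ range k, T k m := by
  have e1 : ∑' t : {v : ℕ × ℕ // 0 < v.2 ∧ v.2 < v.1}, T t.1.1 t.1.2 =
      ∑' v : ℕ × ℕ, (if v.2 < v.1 then T v.1 v.2 else 0) := by
    refine (tsum_subtype {v : ℕ × ℕ | 0 < v.2 ∧ v.2 < v.1} (fun v => T v.1 v.2)).trans ?_
    congr 1; ext v
    obtain ⟨k, m⟩ := v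
    simp only [Set.indicator, Set.mem_ofPred_eq]
    rcases Nat.eq_zero_or_pos m with rfl | hm
    · simp [h0]
    · simp [hm]
  rw [e1, tsum_fin _ (fun k => range k)]
  · congr 1; ext k; exact ite_sum le_rfl _
  · intro k b hb
    simp only [mem_range] at hb
    simp [hb]
  · refine hs.congr fun k => ?_
    rw [← ite_sum le_rfl]
    refine sum_congr rfl fun m _ => ?_
    split_ifs <;> simp

theorem quad_ite (k : ℕ) (T : ℕ → ℕ → ℕ → ℝ) :
    ∑ b ∈ range k ×ˢ range k ×ˢ range k, (if b.1 < k then (if b.2.1 < b.1 then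
      (if b.2.2 < b.2.1 then T b.1 b.2.1 b.2.2 else 0) else 0) else 0) =
    ∑ m ∈ range k, ∑ p ∈ range m, ∑ q ∈ range p, T m p q := by
  rw [sum_product]
  refine sum_congr rfl fun m hm => ?_
  have hm := mem_range.1 hm
  rw [sum_product, ← ite_sum hm.le]
  refine sum_congr rfl fun p hp => ?_
  have hp := mem_range.1 hp
  simp only [hm, if_true]
  by_cases h : p < m
  · simp only [h, if_true]
    exact ite_sum hp.le _
  · simp [h]

theorem quad_sum (T : ℕ → ℕ → ℕ → ℕ → ℝ) (h0 : ∀ k m p, T k m p 0 = 0)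
    (hs : Summable fun k => ∑ m ∈ range k, ∑ p ∈ range m, ∑ q ∈ range p, |T k m p q|) :
    ∑' t : {v : ℕ × ℕ × ℕ × ℕ //
          0 < v.2.2.2 ∧ v.2.2.2 < v.2.2.1 ∧ v.2.2.1 < v.2.1 ∧ v.2.1 < v.1},
      T t.1.1 t.1.2.1 t.1.2.2.1 t.1.2.2.2 =
    ∑' k, ∑ m ∈ range k, ∑ p ∈ range m, ∑ q ∈ range p, T k m p q := by
  have e1 : ∑' t : {v : ℕ × ℕ × ℕ × ℕ //
          0 < v.2.2.2 ∧ v.2.2.2 < v.2.2.1 ∧ v.2.2.1 < v.2.1 ∧ v.2.1 < v.1},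
      T t.1.1 t.1.2.1 t.1.2.2.1 t.1.2.2.2 =
      ∑' v : ℕ × ℕ × ℕ × ℕ, (if v.2.1 < v.1 then (if v.2.2.1 < v.2.1 then
      (if v.2.2.2 < v.2.2.1 then T v.1 v.2.1 v.2.2.1 v.2.2.2 else 0) else 0) else 0) := by
    refine (tsum_subtype {v : ℕ × ℕ × ℕ × ℕ |
          0 < v.2.2.2 ∧ v.2.2.2 < v.2.2.1 ∧ v.2.2.1 < v.2.1 ∧ v.2.1 < v.1}
          (fun v => T v.1 v.2.1 v.2.2.1 v.2.2.2)).trans ?_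
    congr 1; ext v
    obtain ⟨k, m, p, q⟩ := v
    simp only [Set.indicator, Set.mem_ofPred_eq]
    rcases Nat.eq_zero_or_pos q with rfl | hq
    · simp [h0]
    · by_cases h1 : m < k <;> by_cases h2 : p < m <;> by_cases h3 : q < p <;> simp [h1, h2, h3, hq]
  rw [e1, tsum_fin _ (fun k => range k ×ˢ range k ×ˢ range k)]
  · congr 1; ext k; exact quad_ite k (T k)
  · rintro k ⟨m, p, q⟩ hb
    simp only [mem_product, mem_range] at hb
    dsimp only
    split_ifs with h1 h2 h3
    · exact absurd ⟨h1, by omega, by omega⟩ hb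
    all_goals rfl
  · refine hs.congr fun k => ?_
    rw [← quad_ite k (fun m p q => |T k m p q|)]
    refine sum_congr rfl fun m _ => ?_
    split_ifs <;> simp

theorem coef_quad (k : ℕ) : coef [Lt.x, Lt.y, Lt.y, Lt.x, Lt.y, Lt.y] k =
    ∑ m ∈ range k, ∑ p ∈ range m, ∑ q ∈ range p,
      (1 : ℝ) / ((k : ℝ) ^ 2 * (m : ℝ) * (p : ℝ) ^ 2 * (q : ℝ)) := by
  have h : ∀ q, coef [Lt.y] q = 1 / (q : ℝ) := coef_y
  rw [coef, coef, coef, coef, coef]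
  simp only [h, sum_div]
  refine sum_congr rfl fun m _ => sum_congr rfl fun p _ => sum_congr rfl fun q _ => ?_
  simp only [div_div]
  congr 1; ring

theorem coef_quad_alt (k : ℕ) : coef [Lt.x, Lt.z, Lt.z, Lt.x, Lt.y, Lt.y] k =
    ∑ m ∈ range k, ∑ p ∈ range m, ∑ q ∈ range p,
      ((-1 : ℝ) ^ k * (-1 : ℝ) ^ p) / ((k : ℝ) ^ 2 * (m : ℝ) * (p : ℝ) ^ 2 * (q : ℝ)) := by
  have h : ∀ q, coef [Lt.y] q = 1 / (q : ℝ) := coef_y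
  rw [coef, coef, coef, coef, coef]
  simp only [h, sum_div, mul_sum]
  refine sum_congr rfl fun m _ => sum_congr rfl fun p _ => sum_congr rfl fun q _ => ?_
  have hs : (-1 : ℝ) ^ (k + m + 1) * (-1 : ℝ) ^ (m + p + 1) = (-1 : ℝ) ^ k * (-1 : ℝ) ^ p := by
    have : (-1 : ℝ) ^ m * (-1 : ℝ) ^ m = 1 := by rw [← mul_pow]; simp
    simp only [pow_add, pow_one]
    linear_combination ((-1 : ℝ) ^ k * (-1 : ℝ) ^ p) * this
  rw [← hs]
  simp only [div_eq_mul_inv, mul_inv, one_mul]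
  ring

theorem coef_pair (k : ℕ) : coef [Lt.x, Lt.x, Lt.y, Lt.x, Lt.x, Lt.y] k =
    ∑ m ∈ range k, (1 : ℝ) / ((k : ℝ) ^ 3 * (m : ℝ) ^ 3) := by
  have h : ∀ q, coef [Lt.y] q = 1 / (q : ℝ) := coef_y
  have h2 : ∀ q, coef [Lt.x, Lt.x, Lt.y] q = 1 / (q : ℝ) / q / q := by
    intro q; rw [← h]; rfl
  rw [coef, coef, coef]
  simp only [h2, sum_div]
  refine sum_congr rfl fun m _ => ?_
  simp only [div_div]
  congr 1; ring

theorem sum_quad : ∑' t : {v : ℕ × ℕ × ℕ × ℕ //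
          0 < v.2.2.2 ∧ v.2.2.2 < v.2.2.1 ∧ v.2.2.1 < v.2.1 ∧ v.2.1 < v.1},
        (1 : ℝ) / ((t.1.1 : ℝ) ^ 2 * (t.1.2.1 : ℝ) * (t.1.2.2.1 : ℝ) ^ 2 * (t.1.2.2.2 : ℝ)) =
    Iv [Lt.x, Lt.y, Lt.y, Lt.x, Lt.y, Lt.y] := by
  rw [Iv_x, funext coef_quad]
  refine quad_sum (fun k m p q => (1 : ℝ) / ((k : ℝ) ^ 2 * (m : ℝ) * (p : ℝ) ^ 2 * (q : ℝ))) ?_ ?_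
  · intros; simp
  · refine (coef_x_summable [Lt.y, Lt.y, Lt.x, Lt.y, Lt.y]).of_abs.congr fun k => ?_
    rw [coef_quad]
    refine sum_congr rfl fun m _ => sum_congr rfl fun p _ => sum_congr rfl fun q _ => ?_
    rw [abs_of_nonneg (by positivity)]

theorem sum_quad_alt : ∑' t : {v : ℕ × ℕ × ℕ × ℕ //
          0 < v.2.2.2 ∧ v.2.2.2 < v.2.2.1 ∧ v.2.2.1 < v.2.1 ∧ v.2.1 < v.1},
        ((-1 : ℝ) ^ t.1.1 * (-1 : ℝ) ^ t.1.2.2.1) /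
          ((t.1.1 : ℝ) ^ 2 * (t.1.2.1 : ℝ) * (t.1.2.2.1 : ℝ) ^ 2 * (t.1.2.2.2 : ℝ)) =
    Iv [Lt.x, Lt.z, Lt.z, Lt.x, Lt.y, Lt.y] := by
  rw [Iv_x, funext coef_quad_alt]
  refine quad_sum (fun k m p q => ((-1 : ℝ) ^ k * (-1 : ℝ) ^ p) /
    ((k : ℝ) ^ 2 * (m : ℝ) * (p : ℝ) ^ 2 * (q : ℝ))) ?_ ?_
  · intros; simp
  · refine (coef_x_summable [Lt.y, Lt.y, Lt.x, Lt.y, Lt.y]).of_abs.congr fun k => ?_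
    rw [coef_quad]
    refine sum_congr rfl fun m _ => sum_congr rfl fun p _ => sum_congr rfl fun q _ => ?_
    rw [abs_div, abs_mul, abs_pow, abs_pow, abs_neg, abs_one, one_pow, one_pow, one_mul,
      abs_of_nonneg (by positivity)]

theorem sum_pair : ∑' p : {v : ℕ × ℕ // 0 < v.2 ∧ v.2 < v.1},
        (1 : ℝ) / ((p.1.1 : ℝ) ^ 3 * (p.1.2 : ℝ) ^ 3) =
    Iv [Lt.x, Lt.x, Lt.y, Lt.x, Lt.x, Lt.y] := by
  rw [Iv_x, funext coef_pair]
  refine pair_sum (fun k m => (1 : ℝ) / ((k : ℝ) ^ 3 * (m : ℝ) ^ 3)) ?_ ?_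
  · intros; simp
  · refine (coef_x_summable [Lt.x, Lt.y, Lt.x, Lt.x, Lt.y]).of_abs.congr fun k => ?_
    rw [coef_pair]
    refine sum_congr rfl fun m _ => ?_
    rw [abs_of_nonneg (by positivity)]

end
end Z13

/-- `∑_{k>m>p>q>0} 1/(k² m p² q) = 64 ∑_{k>m>p>q>0} (−1)^k (−1)^p/(k² m p² q)`,
and both equal `ζ(3,3) = ∑_{n>m>0} 1/(n³ m³)`. -/
theorem stmt_13 :
    (∑' t : {v : ℕ × ℕ × ℕ × ℕ //
          0 < v.2.2.2 ∧ v.2.2.2 < v.2.2.1 ∧ v.2.2.1 < v.2.1 ∧ v.2.1 < v.1},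
        (1 : ℝ) / ((t.1.1 : ℝ) ^ 2 * (t.1.2.1 : ℝ) * (t.1.2.2.1 : ℝ) ^ 2 * (t.1.2.2.2 : ℝ)) =
      64 * ∑' t : {v : ℕ × ℕ × ℕ × ℕ //
          0 < v.2.2.2 ∧ v.2.2.2 < v.2.2.1 ∧ v.2.2.1 < v.2.1 ∧ v.2.1 < v.1},
        ((-1 : ℝ) ^ t.1.1 * (-1 : ℝ) ^ t.1.2.2.1) /
          ((t.1.1 : ℝ) ^ 2 * (t.1.2.1 : ℝ) * (t.1.2.2.1 : ℝ) ^ 2 * (t.1.2.2.2 : ℝ))) ∧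
    (∑' t : {v : ℕ × ℕ × ℕ × ℕ //
          0 < v.2.2.2 ∧ v.2.2.2 < v.2.2.1 ∧ v.2.2.1 < v.2.1 ∧ v.2.1 < v.1},
        (1 : ℝ) / ((t.1.1 : ℝ) ^ 2 * (t.1.2.1 : ℝ) * (t.1.2.2.1 : ℝ) ^ 2 * (t.1.2.2.2 : ℝ)) =
      ∑' p : {v : ℕ × ℕ // 0 < v.2 ∧ v.2 < v.1},
        (1 : ℝ) / ((p.1.1 : ℝ) ^ 3 * (p.1.2 : ℝ) ^ 3)) := by
  rw [Z13.sum_quad, Z13.sum_quad_alt, Z13.sum_pair]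
  exact ⟨Z13.Iv_eq0, Z13.Iv_eq1⟩
end
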